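/- arXiv:0907.0289 — 3 statements merged into one kernel-verified Lean document; each statement's English description precedes it below -/
import Mathlib

section
/- The reduced braid group B₃/(σ₁σ₂)³, i.e. the quotient of the presented group B₃ = ⟨σ₁, σ₂ | σ₁σ₂σ₁ = σ₂σ₁σ₂⟩ by the normal closure of (σ₁σ₂)³, is isomorphic to the free product (ℤ/2) * (ℤ/3) of a cyclic group of order 2 and a cyclic group of order 3. -/
/-!
Put `x = σ₁σ₂σ₁` and `y = σ₁σ₂`. The braid relation gives `x² = y³ = (σ₁σ₂)³`, so in the reduced
group `x² = y³ = 1`, which yields a homomorphism from `ℤ/2 * ℤ/3` (`fromCoprod`). Conversely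
`σ₁ = y⁻¹x` and `σ₂ = x⁻¹y²`; if `a` and `b` generate `ℤ/2` and `ℤ/3`, then `b⁻¹a` and `a⁻¹b²`
satisfy the braid relation and their product `b` has order dividing three, which yields a
homomorphism in the other direction (`toCoprod`). The two are mutually inverse on generators.
-/

noncomputable section

/-- The braid relation `σ₁σ₂σ₁ = σ₂σ₁σ₂` on two generators. -/
def braidRels : Set (FreeGroup (Fin 2)) :=
  {FreeGroup.of 0 * FreeGroup.of 1 * FreeGroup.of 0 *
    (FreeGroup.of 1 * FreeGroup.of 0 * FreeGroup.of 1)⁻¹}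

/-- The braid group `B₃ = ⟨σ₁, σ₂ | σ₁σ₂σ₁ = σ₂σ₁σ₂⟩`. -/
abbrev B3 : Type := PresentedGroup braidRels

/-- The element `(σ₁σ₂)³` of `B₃`. -/
def braidDelta : B3 := (PresentedGroup.of 0 * PresentedGroup.of 1) ^ 3

/-- The reduced braid group `B₃/(σ₁σ₂)³`. -/
abbrev ReducedB3 : Type := B3 ⧸ Subgroup.normalClosure {braidDelta}

/-- The homomorphism from the cyclic group of order `n` sending its standard generator to `g`,
for `g` with `g ^ n = 1`. -/
def cyclicHom (n : ℕ) {G : Type*} [Group G] (g : G) (h : g ^ n = 1) :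
    Multiplicative (ZMod n) →* G :=
  AddMonoidHom.toMultiplicativeLeft (ZMod.lift n ⟨zmultiplesHom (Additive G) (Additive.ofMul g), by
    rw [zmultiplesHom_apply, natCast_zsmul, ← ofMul_pow, h, ofMul_one]⟩)

lemma cyclicHom_gen (n : ℕ) {G : Type*} [Group G] (g : G) (h : g ^ n = 1) :
    cyclicHom n g h (Multiplicative.ofAdd 1) = g := by
  have := ZMod.lift_coe n (⟨zmultiplesHom (Additive G) (Additive.ofMul g), by
    rw [zmultiplesHom_apply, natCast_zsmul, ← ofMul_pow, h, ofMul_one]⟩ :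
      {f : ℤ →+ Additive G // f n = 0}) 1
  rw [Int.cast_one] at this
  simp [cyclicHom, this]

lemma cyclic_hom_ext (n : ℕ) [NeZero n] {G : Type*} [Group G] {f g : Multiplicative (ZMod n) →* G}
    (h : f (Multiplicative.ofAdd 1) = g (Multiplicative.ofAdd 1)) : f = g := by
  refine MonoidHom.ext fun x => ?_
  have hx : x = Multiplicative.ofAdd (1 : ZMod n) ^ (Multiplicative.toAdd x).val := by
    rw [← ofAdd_nsmul, nsmul_one, ZMod.natCast_zmod_val, ofAdd_toAdd]
  rw [hx, map_pow, map_pow, h]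

/-- The free product `ℤ/2 * ℤ/3`. -/
abbrev C23 : Type := Monoid.Coprod (Multiplicative (ZMod 2)) (Multiplicative (ZMod 3))

/-- The generator of the factor `ℤ/2`. -/
def genA : C23 := Monoid.Coprod.inl (Multiplicative.ofAdd 1)

/-- The generator of the factor `ℤ/3`. -/
def genB : C23 := Monoid.Coprod.inr (Multiplicative.ofAdd 1)

lemma genA_sq : genA ^ 2 = 1 := by
  rw [genA, ← map_pow, show (Multiplicative.ofAdd (1 : ZMod 2)) ^ 2 = 1 from by decide, map_one]

lemma genB_cube : genB ^ 3 = 1 := by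
  rw [genB, ← map_pow, show (Multiplicative.ofAdd (1 : ZMod 3)) ^ 3 = 1 from by decide, map_one]

/-- The homomorphism `B₃ → ℤ/2 * ℤ/3` with `σ₁ ↦ b⁻¹a` and `σ₂ ↦ a⁻¹b²`. -/
def braidToCoprod : B3 →* C23 :=
  PresentedGroup.toGroup (f := ![genB⁻¹ * genA, genA⁻¹ * genB ^ 2]) (by
    rintro r rfl
    -- `σ₁σ₂σ₁ ↦ a`, while `σ₂σ₁σ₂ ↦ a⁻¹b³ = a⁻¹ = a`.
    have ha : genA⁻¹ = genA := inv_eq_of_mul_eq_one_left (by rw [← sq, genA_sq])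
    have h1 : genB⁻¹ * genA * (genA⁻¹ * genB ^ 2) * (genB⁻¹ * genA) = genA := by group
    have h2 : genA⁻¹ * genB ^ 2 * (genB⁻¹ * genA) * (genA⁻¹ * genB ^ 2) = genA := by
      calc _ = genA⁻¹ * genB ^ 3 := by group
        _ = genA := by rw [genB_cube, mul_one, ha]
    simp only [map_mul, map_inv, FreeGroup.lift_apply_of, Matrix.cons_val_zero,
      Matrix.cons_val_one]
    rw [h1, h2, mul_inv_cancel])

lemma braidToCoprod_zero : braidToCoprod (PresentedGroup.of 0) = genB⁻¹ * genA :=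
  PresentedGroup.toGroup.of _

lemma braidToCoprod_one : braidToCoprod (PresentedGroup.of 1) = genA⁻¹ * genB ^ 2 :=
  PresentedGroup.toGroup.of _

/-- The homomorphism induced by `braidToCoprod` on the reduced braid group. -/
def toCoprod : ReducedB3 →* C23 :=
  QuotientGroup.lift _ braidToCoprod (by
    have h : Subgroup.normalClosure {braidDelta} ≤ braidToCoprod.ker := by
      refine Subgroup.normalClosure_le_normal (Set.singleton_subset_iff.2 ?_)
      have hb : genB⁻¹ * genA * (genA⁻¹ * genB ^ 2) = genB := by group
      change braidToCoprod braidDelta = 1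
      rw [braidDelta, map_pow, map_mul, braidToCoprod_zero, braidToCoprod_one, hb, genB_cube]
    exact fun x hx => h hx)

/-- The image of `σ₁` in the reduced braid group. -/
def s1 : ReducedB3 := QuotientGroup.mk (PresentedGroup.of 0)

/-- The image of `σ₂` in the reduced braid group. -/
def s2 : ReducedB3 := QuotientGroup.mk (PresentedGroup.of 1)

lemma toCoprod_s1 : toCoprod s1 = genB⁻¹ * genA := braidToCoprod_zero

lemma toCoprod_s2 : toCoprod s2 = genA⁻¹ * genB ^ 2 := braidToCoprod_one

lemma braid_rel : s1 * s2 * s1 = s2 * s1 * s2 := by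
  have h : (PresentedGroup.of 0 * PresentedGroup.of 1 * PresentedGroup.of 0 : B3) =
      PresentedGroup.of 1 * PresentedGroup.of 0 * PresentedGroup.of 1 :=
    PresentedGroup.mk_eq_mk_of_mul_inv_mem (rels := braidRels) (Set.mem_singleton _)
  exact congrArg (QuotientGroup.mk (s := Subgroup.normalClosure {braidDelta})) h

lemma s1s2_cube : (s1 * s2) ^ 3 = 1 :=
  (QuotientGroup.eq_one_iff braidDelta).2 (Subgroup.subset_normalClosure rfl)

lemma s1s2s1_sq : (s1 * s2 * s1) ^ 2 = 1 := by
  rw [← s1s2_cube, sq]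
  nth_rw 2 [braid_rel]
  simp only [pow_succ, pow_zero, one_mul, mul_assoc]

/-- The homomorphism `ℤ/2 * ℤ/3 → B₃/(σ₁σ₂)³` with `a ↦ σ₁σ₂σ₁` and `b ↦ σ₁σ₂`. -/
def fromCoprod : C23 →* ReducedB3 :=
  Monoid.Coprod.lift (cyclicHom 2 (s1 * s2 * s1) s1s2s1_sq) (cyclicHom 3 (s1 * s2) s1s2_cube)

lemma fromCoprod_genA : fromCoprod genA = s1 * s2 * s1 := by
  rw [fromCoprod, genA, Monoid.Coprod.lift_apply_inl, cyclicHom_gen]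

lemma fromCoprod_genB : fromCoprod genB = s1 * s2 := by
  rw [fromCoprod, genB, Monoid.Coprod.lift_apply_inr, cyclicHom_gen]

lemma from_comp_to : fromCoprod.comp toCoprod = MonoidHom.id ReducedB3 := by
  refine QuotientGroup.monoidHom_ext _ (PresentedGroup.ext fun i => ?_)
  fin_cases i
  · change fromCoprod (toCoprod s1) = s1
    rw [toCoprod_s1, map_mul, map_inv, fromCoprod_genA, fromCoprod_genB]
    group
  · change fromCoprod (toCoprod s2) = s2
    rw [toCoprod_s2, map_mul, map_inv, map_pow, fromCoprod_genA, fromCoprod_genB, sq]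
    group

lemma to_comp_from : toCoprod.comp fromCoprod = MonoidHom.id C23 := by
  refine Monoid.Coprod.hom_ext (cyclic_hom_ext 2 ?_) (cyclic_hom_ext 3 ?_)
  · change toCoprod (fromCoprod genA) = genA
    rw [fromCoprod_genA, map_mul, map_mul, toCoprod_s1, toCoprod_s2]
    group
  · change toCoprod (fromCoprod genB) = genB
    rw [fromCoprod_genB, map_mul, toCoprod_s1, toCoprod_s2]
    group

/-- The reduced braid group `B₃/(σ₁σ₂)³` is isomorphic to the free product
`(ℤ/2) ∗ (ℤ/3)`. -/
theorem stmt2 :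
    Nonempty (ReducedB3 ≃* Monoid.Coprod (Multiplicative (ZMod 2)) (Multiplicative (ZMod 3))) := by
  exact ⟨MonoidHom.toMulEquiv toCoprod fromCoprod from_comp_to to_comp_from⟩
end
end

section
/- There exist homogeneous polynomials f₂, f₃ ∈ ℂ[x,y,z] of degrees 2 and 3 such that the sextic F = f₂³ + f₃² is irreducible and the fundamental group π₁(ℂP² ∖ V(F)) of the complement of the plane sextic C = V(F) is isomorphic to the free product (ℤ/2) * (ℤ/3). (Zariski's six-cuspidal sextic, the ramification locus of a generic projection of a nonsingular cubic surface.) -/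
/-!
The witnesses are `f₂ = x₁x₂ - x₀²` and `f₃ = x₁²x₀`. The conic and the cubic are chosen so that
on the affine chart `x₁ ≠ 0` the values of `f₂` and `f₃` (at `x₁ = 1`) are themselves affine
coordinates `(w, Y)`; there the sextic is the cuspidal cubic `w³ + Y² = 0`, and the whole affine
part of the complement can be parametrised explicitly.

*Irreducibility* (`irred_F`). Up to sign the sextic is monic in `x₀`, so it suffices to prove
irreducibility after setting `x₁ = 1`, where a change of coordinates turns it into `Z³ + X²`.

*Generators.* Write `X` for the complement of the sextic. Two open sets cover it:
`A`, where `|f₂|³ < |f₃|²`, and `B`, where `f₂ ≠ 0` and `1 + f₃²/f₂³` avoids the closed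
negative real axis. Rescaling a vector so that `f₃ = 1` (on `A`) or `f₂ = 1` (on `B`) is possible up
to a root of unity of order 3 or 2; recording also a logarithm of `x₁` gives contractible spaces
`EA` and `EB` that map onto `A` and onto the part of `B` with `x₁ ≠ 0`, each with an action of `ℤ`
by deck transformations. So every loop in one of these pieces is a power of a class `T`, resp. `S`
(`loops_A`, `loops_B`). The overlap is path connected, and adding a contractible neighbourhood `N`
of the points with `x₁ = 0` completes the cover, so the surjectivity half of van Kampen's theorem
(`gen_lemma`) shows that `T` and `S` generate `π₁(X)` (`HH_top`).

*Relations.* `T³ = S²` is the equality of two explicit loops (`relAB`). The class `S²` is a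
meridian of the line `x₁ = 0`; it bounds a disc of `X` crossing that line, so `S² = 1` (`relB`).
Therefore `ℤ/2 * ℤ/3` maps onto `π₁(X)` by `phi`.

*Injectivity.* A covering of `X` with fibre the discrete group `ℤ/2 * ℤ/3` is glued from charts:
over open subsets of `A` the charts are continuous cube roots of `1/f₃`, over open subsets of `B`
continuous square roots of `1/f₂`. Two roots of the same kind differ by a root of unity, which is
read in the corresponding factor of the free product; on `A ∩ B` both kinds have a canonical
global choice `lam0`, because `f₃²/f₂³` has a principal root there, and these two choices are
identified with each other. The monodromy of `T` and of `S` on the fibre `ℤ/2 * ℤ/3` is left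
multiplication by the two generators (`mono_A`, `mono_B`), so `phi g` sends the point labelled `1`
to the point labelled `g` (`mono_phi`), and `phi` is injective.
-/

open MvPolynomial Function

noncomputable section

/-- The complex projective plane `ℙ(ℂ³)`. -/
abbrev CP2 : Type := Projectivization ℂ (Fin 3 → ℂ)

/-- The quotient topology on `ℂP²` coming from `ℂ³ ∖ {0}`. -/
instance : TopologicalSpace CP2 :=
  inferInstanceAs (TopologicalSpace (Quotient (projectivizationSetoid ℂ (Fin 3 → ℂ))))

/-- The zero locus in `ℂP²` of a (homogeneous) polynomial `F ∈ ℂ[x,y,z]`. -/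
def zeroLocus (F : MvPolynomial (Fin 3) ℂ) : Set CP2 :=
  {p | eval p.rep F = 0}

/-- The complement `ℂP² ∖ V(F)` as a topological space. -/
abbrev CurveComplement (F : MvPolynomial (Fin 3) ℂ) : Type :=
  {x : CP2 // x ∉ zeroLocus F}

/-! ### The sextic and its irreducibility -/

/-- The conic `f₂`. -/
def zq : MvPolynomial (Fin 3) ℂ := X 1 * X 2 - X 0 ^ 2
/-- The cubic `f₃`, a double line and a simple line. -/
def zc : MvPolynomial (Fin 3) ℂ := X 1 ^ 2 * X 0

lemma zq_hom : zq.IsHomogeneous 2 :=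
  ((isHomogeneous_X ℂ (1 : Fin 3)).mul (isHomogeneous_X ℂ 2)).sub (isHomogeneous_X_pow ..)

lemma zc_hom : zc.IsHomogeneous 3 :=
  (isHomogeneous_X_pow ..).mul (isHomogeneous_X ..)

/-- The cuspidal cubic: a monic cubic in `Z` over `ℂ[X]` is irreducible unless it has a root, and the
degree in `X` of the cube of a root would be both `2` and a multiple of `3`. -/
lemma irred_cusp : Irreducible
    (Polynomial.X ^ 3 + Polynomial.C (Polynomial.X ^ 2) : Polynomial (Polynomial ℂ)) := by
  have hm : (Polynomial.X ^ 3 + Polynomial.C (Polynomial.X ^ 2) :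
      Polynomial (Polynomial ℂ)).Monic := Polynomial.monic_X_pow_add_C _ (by norm_num)
  have hd : (Polynomial.X ^ 3 + Polynomial.C (Polynomial.X ^ 2) :
      Polynomial (Polynomial ℂ)).natDegree = 3 := Polynomial.natDegree_X_pow_add_C
  rw [hm.irreducible_iff_roots_eq_zero_of_degree_le_three (by rw [hd]; norm_num) (by rw [hd])]
  refine Multiset.eq_zero_of_forall_notMem fun r hr => ?_
  have h := (Polynomial.mem_roots'.1 hr).2
  simp only [Polynomial.IsRoot.def, Polynomial.eval_add, Polynomial.eval_pow, Polynomial.eval_X,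
    Polynomial.eval_C] at h
  have h2 := congrArg Polynomial.natDegree (eq_neg_of_add_eq_zero_left h)
  rw [Polynomial.natDegree_neg, Polynomial.natDegree_pow, Polynomial.natDegree_X_pow] at h2
  omega

/-- The sextic at `x₁ = 1`, as a polynomial in `x₀` over `ℂ[x₂]`; exchanging the variables and
translating by `x₀²` turns it into the cuspidal cubic. -/
lemma irred_affine : Irreducible
    ((Polynomial.C Polynomial.X - Polynomial.X ^ 2) ^ 3 + Polynomial.X ^ 2 :
      Polynomial (Polynomial ℂ)) := by
  rw [← MulEquiv.irreducible_iff (Polynomial.Bivariate.swap (R := ℂ))]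
  rw [← MulEquiv.irreducible_iff (Polynomial.algEquivAevalXAddC (Polynomial.X ^ 2 : Polynomial ℂ))]
  convert irred_cusp using 1
  simp [Polynomial.Bivariate.swap_X, Polynomial.Bivariate.swap_Y, Polynomial.algEquivAevalXAddC_apply]

lemma irreducible_neg' {R : Type*} [CommRing R] {p : R} : Irreducible (-p) ↔ Irreducible p :=
  Associated.irreducible_iff (Associated.neg_left (Associated.refl p))

lemma irred_F : Irreducible (zq ^ 3 + zc ^ 2) := by
  -- the sextic is minus a monic polynomial in `x₀`, so a factorisation survives setting `x₁ = 1`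
  rw [← MulEquiv.irreducible_iff (finSuccEquiv ℂ 2), ← irreducible_neg']
  set g := -(finSuccEquiv ℂ 2 (zq ^ 3 + zc ^ 2)) with hg
  have h1 : finSuccEquiv ℂ 2 (X 1) = Polynomial.C (X 0) := finSuccEquiv_X_succ (j := 0)
  have h2 : finSuccEquiv ℂ 2 (X 2) = Polynomial.C (X 1) := finSuccEquiv_X_succ (j := 1)
  have hg' : g = Polynomial.X ^ 6 + (Polynomial.C (- (3 * X 0 * X 1)) * Polynomial.X ^ 4
      + Polynomial.C (3 * (X 0 * X 1) ^ 2 - X 0 ^ 4) * Polynomial.X ^ 2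
      + Polynomial.C (-(X 0 * X 1) ^ 3)) := by
    rw [hg]
    simp only [zq, zc, map_add, map_pow, map_sub, map_mul, finSuccEquiv_X_zero, h1, h2, map_neg]
    have h3 : (Polynomial.C (3 : MvPolynomial (Fin 2) ℂ)) = 3 := rfl
    rw [h3]
    ring
  have hmon : g.Monic := by
    rw [hg']
    apply Polynomial.monic_X_pow_add
    refine lt_of_le_of_lt (b := 4) ?_ (by norm_num)
    compute_degree
  refine hmon.irreducible_of_irreducible_map
    (MvPolynomial.aeval ![1, Polynomial.X] : MvPolynomial (Fin 2) ℂ →ₐ[ℂ] Polynomial ℂ).toRingHom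
    _ ?_
  rw [← irreducible_neg']
  convert irred_affine using 1
  rw [hg]
  simp [zq, zc, h1, h2, finSuccEquiv_X_zero]

/-! ### Loops, generation, and deck groups -/

section general
open Set Topology unitInterval
variable {X : Type*} [TopologicalSpace X]

/-- The class of a loop in the fundamental group. The product there is the opposite of
concatenation, see `loopCls_trans`. -/
def loopCls {p : X} (γ : Path p p) : FundamentalGroup X p := Path.Homotopic.Quotient.mk γ

lemma loopCls_surj {p : X} (g : FundamentalGroup X p) : ∃ γ : Path p p, loopCls γ = g :=
  Path.Homotopic.Quotient.mk_surjective g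

lemma loopCls_trans {p : X} (γ γ' : Path p p) : loopCls (γ.trans γ') = loopCls γ' * loopCls γ := rfl

lemma loopCls_symm {p : X} (γ : Path p p) : loopCls γ.symm = (loopCls γ)⁻¹ := rfl

lemma loopCls_eq {p : X} {γ γ' : Path p p} (h : γ.Homotopic γ') : loopCls γ = loopCls γ' :=
  Path.Homotopic.Quotient.eq.2 h

lemma Path.mem_trans {a b c : X} {γ : Path a b} {γ' : Path b c} {U : Set X}
    (h : ∀ t, γ t ∈ U) (h' : ∀ t, γ' t ∈ U) (t : I) : (γ.trans γ') t ∈ U := by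
  have : (γ.trans γ') t ∈ range (γ.trans γ') := mem_range_self t
  rw [Path.trans_range] at this
  rcases this with ⟨s, hs⟩ | ⟨s, hs⟩
  · exact hs ▸ h s
  · exact hs ▸ h' s

/-- The surjectivity half of van Kampen's theorem: if two open sets have path-connected overlap
containing the base point, then a loop in their union is a product of loops in one or the other. -/
lemma gen_lemma (c : Bool → Set X) (hc : ∀ i, IsOpen (c i)) {p : X}
    (hp : ∀ i, p ∈ c i) (hW : IsPathConnected (c false ∩ c true))
    (H : Subgroup (FundamentalGroup X p))
    (hH : ∀ i, ∀ γ : Path p p, (∀ t, γ t ∈ c i) → loopCls γ ∈ H)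
    (γ : Path p p) (hγ : ∀ t, ∃ i, γ t ∈ c i) : loopCls γ ∈ H := by
  have hW' : ∀ x, ∀ i j, i ≠ j → x ∈ c i → x ∈ c j →
      ∃ d : Path x p, ∀ t k, d t ∈ c k := by
    intro x i j hij hi hj
    have hx : x ∈ c false ∩ c true := by
      cases i <;> cases j <;> simp_all
    obtain ⟨d, hd⟩ := hW.joinedIn x hx p ⟨hp _, hp _⟩
    exact ⟨d, fun t k => by cases k; exacts [(hd t).1, (hd t).2]⟩
  obtain ⟨t, t0, tm, ⟨n, hn⟩, ht⟩ := exists_monotone_Icc_subset_open_cover_unitInterval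
    (fun i => (hc i).preimage γ.continuous)
    (fun s _ => mem_iUnion.2 (hγ s))
  -- `pre k` runs along `γ` up to time `t k`; it is closed up inside one of the two open sets
  let pre (k : ℕ) : Path p (γ (t k)) := (γ.subpath 0 (t k)).cast γ.source.symm rfl
  have key : ∀ k, ∃ i, ∃ d : Path (γ (t k)) p, (∀ s, d s ∈ c i) ∧
      loopCls ((pre k).trans d) ∈ H := by
    intro k
    induction k with
    | zero =>
      refine ⟨false, (pre 0).symm, fun s => ?_, ?_⟩
      · have : (pre 0).symm s = p := by
          simp only [pre, Path.symm_apply, Path.cast_coe]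
          have h2 : γ.subpath 0 (t 0) (σ s) ∈ range (γ.subpath 0 (t 0)) := mem_range_self _
          rw [Path.range_subpath, t0] at h2
          obtain ⟨u, hu, hu'⟩ := h2
          simp only [uIcc_self, mem_singleton_iff] at hu
          rw [t0, Function.comp_apply, ← hu', hu, γ.source]
        rw [this]; exact hp _
      · have : loopCls ((pre 0).trans (pre 0).symm) = 1 := by
          exact Path.Homotopic.Quotient.trans_symm (Path.Homotopic.Quotient.mk (pre 0))
        rw [this]; exact H.one_mem
    | succ k ih =>
      obtain ⟨i, d, hd, hdH⟩ := ih
      obtain ⟨j, hj⟩ := ht k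
      have hx : γ (t k) ∈ c i := by simpa using hd 0
      have hxj : γ (t k) ∈ c j := hj ⟨le_rfl, tm (Nat.le_succ k)⟩
      obtain ⟨d', hd', hdH'⟩ : ∃ d' : Path (γ (t k)) p, (∀ s, d' s ∈ c j) ∧
          loopCls ((pre k).trans d') ∈ H := by
        by_cases hij : i = j
        · subst hij; exact ⟨d, hd, hdH⟩
        -- when `γ` changes sides, the closing path is replaced by one in the overlap
        · obtain ⟨d', hd'⟩ := hW' _ i j hij hx hxj
          refine ⟨d', fun s => hd' s j, ?_⟩
          have h1 : loopCls (d.symm.trans d') ∈ H :=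
            hH i _ (Path.mem_trans (fun s => by simpa using hd _) (fun s => hd' s i))
          have h2 := H.mul_mem h1 hdH
          rw [← loopCls_trans] at h2
          convert h2 using 1
          change Path.Homotopic.Quotient.trans (Path.Homotopic.Quotient.mk (pre k))
              (Path.Homotopic.Quotient.mk d') = Path.Homotopic.Quotient.trans
              (Path.Homotopic.Quotient.trans (Path.Homotopic.Quotient.mk (pre k))
              (Path.Homotopic.Quotient.mk d)) (Path.Homotopic.Quotient.trans
              (Path.Homotopic.Quotient.symm (Path.Homotopic.Quotient.mk d))
              (Path.Homotopic.Quotient.mk d'))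
          rw [Path.Homotopic.Quotient.trans_assoc, ← Path.Homotopic.Quotient.trans_assoc
            (Path.Homotopic.Quotient.mk d), Path.Homotopic.Quotient.trans_symm,
            Path.Homotopic.Quotient.refl_trans]
      refine ⟨j, (γ.subpath (t k) (t (k+1))).symm.trans d', Path.mem_trans (fun s => ?_) hd', ?_⟩
      · have h2 : (γ.subpath (t k) (t (k+1))).symm s ∈ range (γ.subpath (t k) (t (k+1))) := by
          rw [← Path.symm_range]; exact mem_range_self _
        rw [Path.range_subpath_of_le _ _ _ (tm (Nat.le_succ k))] at h2
        obtain ⟨u, hu, hu'⟩ := h2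
        exact hu' ▸ hj hu
      · convert hdH' using 1
        have h3 : Path.Homotopic.Quotient.mk (pre (k+1)) = Path.Homotopic.Quotient.trans
            (Path.Homotopic.Quotient.mk (pre k))
            (Path.Homotopic.Quotient.mk (γ.subpath (t k) (t (k+1)))) := by
          have := (Path.Homotopic.pathCast ⟨Path.Homotopy.subpathTransSubpath γ 0 (t k) (t (k+1))⟩
            γ.source.symm rfl)
          exact (Path.Homotopic.Quotient.eq.2 this).symm
        change Path.Homotopic.Quotient.trans (Path.Homotopic.Quotient.mk (pre (k+1)))
            (Path.Homotopic.Quotient.trans (Path.Homotopic.Quotient.symm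
              (Path.Homotopic.Quotient.mk (γ.subpath (t k) (t (k+1)))))
              (Path.Homotopic.Quotient.mk d')) =
            Path.Homotopic.Quotient.trans (Path.Homotopic.Quotient.mk (pre k))
              (Path.Homotopic.Quotient.mk d')
        rw [h3, Path.Homotopic.Quotient.trans_assoc, ← Path.Homotopic.Quotient.trans_assoc
            (Path.Homotopic.Quotient.mk (γ.subpath (t k) (t (k+1)))),
            Path.Homotopic.Quotient.trans_symm, Path.Homotopic.Quotient.refl_trans]
  obtain ⟨i, d, hd, hdH⟩ := key n
  have e1 : p = γ (t n) := by rw [hn n le_rfl]; exact γ.target.symm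
  have h1 := hH i (d.cast e1 rfl) (fun s => hd s)
  have h2 : loopCls ((pre n).trans d) = loopCls (d.cast e1 rfl) * loopCls γ := by
    rw [← loopCls_trans]
    have : ((pre n).trans d) = γ.trans (d.cast e1 rfl) := by
      have h4 : ∀ s, pre n s = γ s := by
        intro s
        simp only [pre, Path.cast_coe]
        rw [hn n le_rfl, Path.subpath_zero_one]; rfl
      ext s
      rw [Path.trans_apply, Path.trans_apply]
      simp only [h4, Path.cast_coe]
    rw [this]
  rw [h2] at hdH
  exact (H.mul_mem_cancel_left h1).1 hdH

/-- A space `E` over `X` with maps `δ n`, for `n : ℤ`, over the identity of `X`. They form an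
action of `ℤ` by deck transformations; the action law is only needed, and only recorded, at the
point `x0` above the base point `p`. -/
structure Deck (E : Type*) [TopologicalSpace E] {X : Type*} [TopologicalSpace X] (p : X) where
  e : C(E, X)
  δ : ℤ → C(E, E)
  x0 : E
  e_δ : ∀ n x, e (δ n x) = e x
  δ_zero : δ 0 x0 = x0
  δ_add : ∀ m n, δ (m + n) x0 = δ m (δ n x0)
  e_x0 : e x0 = p

namespace Deck
variable {E : Type*} [TopologicalSpace E] {p : X} (A : Deck E p)

/-- The loop in `X` below a path from `x0` to its `n`-th translate. -/
def push (n : ℤ) (D : Path A.x0 (A.δ n A.x0)) : Path p p :=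
  (D.map A.e.continuous).cast A.e_x0.symm (by rw [A.e_δ, A.e_x0])

@[simp] lemma push_apply (n : ℤ) (D : Path A.x0 (A.δ n A.x0)) (t : I) : A.push n D t = A.e (D t) :=
  rfl

variable [SimplyConnectedSpace E]

/-- The class of the loop below any path from `x0` to its `n`-th translate; the choice of path
does not matter in a simply connected `E` (`cls_eq`). -/
def cls (n : ℤ) : FundamentalGroup X p :=
  loopCls (A.push n (PathConnectedSpace.somePath _ _))

lemma cls_eq (n : ℤ) (D : Path A.x0 (A.δ n A.x0)) : loopCls (A.push n D) = A.cls n :=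
  loopCls_eq (((SimplyConnectedSpace.paths_homotopic D _).map A.e).pathCast _ _)

lemma cls_add (m n : ℤ) : A.cls (m + n) = A.cls m * A.cls n := by
  rw [add_comm]
  let D1 : Path A.x0 (A.δ n A.x0) := PathConnectedSpace.somePath _ _
  let D2 : Path A.x0 (A.δ m A.x0) := PathConnectedSpace.somePath _ _
  rw [← A.cls_eq (n + m) ((D1.trans (D2.map (A.δ n).continuous)).cast rfl (A.δ_add n m)),
    ← A.cls_eq m D2, ← A.cls_eq n D1, ← loopCls_trans]
  congr 1
  ext t
  simp only [push_apply, Path.cast_coe, Path.trans_apply]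
  split_ifs
  · rfl
  · simp [A.e_δ]

lemma cls_zero : A.cls 0 = 1 := by
  have := A.cls_add 0 0
  rw [add_zero] at this
  exact mul_eq_left.1 this.symm

lemma cls_zpow (n : ℤ) : A.cls n = A.cls 1 ^ n := by
  let f : Multiplicative ℤ →* FundamentalGroup X p :=
    { toFun := fun n => A.cls n.toAdd
      map_one' := A.cls_zero
      map_mul' := fun a b => A.cls_add _ _ }
  have := map_zpow f (Multiplicative.ofAdd 1) n
  rw [← ofAdd_zsmul] at this
  simpa [f] using this

end Deck
end general

/-! ### The complement as a quotient of a cone -/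

namespace Zar
open Set Topology

/-- The quadratic form `f₂` as a function. -/
def fa (v : Fin 3 → ℂ) : ℂ := v 1 * v 2 - v 0 ^ 2
/-- The cubic form `f₃` as a function. -/
def fb (v : Fin 3 → ℂ) : ℂ := v 1 ^ 2 * v 0
/-- The sextic form as a function. -/
def fD (v : Fin 3 → ℂ) : ℂ := fa v ^ 3 + fb v ^ 2

lemma eval_F (v : Fin 3 → ℂ) : MvPolynomial.eval v (zq ^ 3 + zc ^ 2) = fD v := by
  simp [zq, zc, fD, fa, fb]

lemma fa_smul (c : ℂ) (v : Fin 3 → ℂ) : fa (c • v) = c ^ 2 * fa v := by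
  simp [fa]; ring
lemma fb_smul (c : ℂ) (v : Fin 3 → ℂ) : fb (c • v) = c ^ 3 * fb v := by
  simp [fb]; ring
lemma fD_smul (c : ℂ) (v : Fin 3 → ℂ) : fD (c • v) = c ^ 6 * fD v := by
  simp [fD, fa_smul, fb_smul]; ring

@[fun_prop] lemma fa_cont : Continuous fa := by unfold fa; fun_prop
@[fun_prop] lemma fb_cont : Continuous fb := by unfold fb; fun_prop
@[fun_prop] lemma fD_cont : Continuous fD := by unfold fD; fun_prop

lemma ne_zero_of_fD {v : Fin 3 → ℂ} (h : fD v ≠ 0) : v ≠ 0 := by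
  rintro rfl; simp [fD, fa, fb] at h

/-- The complement of the sextic. -/
abbrev XX : Type := CurveComplement (zq ^ 3 + zc ^ 2)
/-- The cone over the complement: the vectors on which the sextic does not vanish. -/
abbrev VV : Type := {v : Fin 3 → ℂ // fD v ≠ 0}

lemma rep_fD (p : XX) : fD p.1.rep ≠ 0 := by
  rw [← eval_F]; exact p.2

/-- The projection of the cone to the complement. -/
def pr (v : VV) : XX := ⟨Projectivization.mk ℂ v.1 (ne_zero_of_fD v.2), by
  obtain ⟨c, hc⟩ := Projectivization.exists_smul_eq_mk_rep ℂ v.1 (ne_zero_of_fD v.2)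
  change MvPolynomial.eval _ (zq ^ 3 + zc ^ 2) ≠ 0
  rw [eval_F]
  rw [← hc, Units.smul_def, fD_smul]
  exact mul_ne_zero (pow_ne_zero _ c.ne_zero) v.2⟩

lemma pr_rep (p : XX) : pr ⟨p.1.rep, rep_fD p⟩ = p := by
  apply Subtype.ext
  exact Projectivization.mk_rep _

lemma rep_pr (v : VV) : ∃ c : ℂ, c ≠ 0 ∧ (pr v).1.rep = c • v.1 := by
  obtain ⟨c, hc⟩ := Projectivization.exists_smul_eq_mk_rep ℂ v.1 (ne_zero_of_fD v.2)
  exact ⟨c, c.ne_zero, hc.symm⟩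

lemma pr_eq_iff (v w : VV) : pr v = pr w ↔ ∃ c : ℂ, c ≠ 0 ∧ v.1 = c • w.1 := by
  rw [pr, pr, Subtype.mk.injEq, Projectivization.mk_eq_mk_iff]
  constructor
  · rintro ⟨c, hc⟩; exact ⟨c, c.ne_zero, hc.symm⟩
  · rintro ⟨c, h, hc⟩; exact ⟨Units.mk0 c h, hc.symm⟩

/-- The projection from nonzero vectors to the projective plane. -/
def q0 (v : {v : Fin 3 → ℂ // v ≠ 0}) : CP2 := Projectivization.mk ℂ v.1 v.2

lemma q0_quot : IsQuotientMap q0 := isQuotientMap_quotient_mk'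

lemma q0_open : IsOpenMap q0 := by
  intro O hO
  rw [← q0_quot.isOpen_preimage]
  have : q0 ⁻¹' (q0 '' O) = ⋃ c : ℂˣ, (fun v : {v : Fin 3 → ℂ // v ≠ 0} =>
      (⟨(c : ℂ) • v.1, smul_ne_zero c.ne_zero v.2⟩ : {v : Fin 3 → ℂ // v ≠ 0})) ⁻¹' O := by
    ext v
    simp only [mem_preimage, mem_image, mem_iUnion]
    constructor
    · rintro ⟨w, hw, h⟩
      obtain ⟨c, hc⟩ := (Projectivization.mk_eq_mk_iff ..).1 h
      refine ⟨c, ?_⟩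
      convert hw
      exact hc
    · rintro ⟨c, hc⟩
      refine ⟨_, hc, ?_⟩
      exact (Projectivization.mk_eq_mk_iff ..).2 ⟨c, rfl⟩
  rw [this]
  refine isOpen_iUnion fun c => hO.preimage ?_
  fun_prop

lemma pr_cont : Continuous pr := by
  refine Continuous.subtype_mk ?_ _
  exact q0_quot.continuous.comp (f := fun v : VV => (⟨v.1, ne_zero_of_fD v.2⟩ : {v : Fin 3 → ℂ // v ≠ 0}))
    (by fun_prop)

lemma pr_open : IsOpenMap pr := by
  intro O hO
  obtain ⟨O1, hO1, rfl⟩ := isOpen_induced_iff.1 hO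
  have h1 : IsOpen (O1 ∩ fD ⁻¹' {0}ᶜ) := hO1.inter (isOpen_compl_singleton.preimage fD_cont)
  have h2 := q0_open _ (h1.preimage continuous_subtype_val)
  refine isOpen_induced_iff.2 ⟨_, h2, ?_⟩
  ext p
  simp only [mem_preimage, mem_image]
  constructor
  · rintro ⟨w, hw, h⟩
    exact ⟨⟨w.1, hw.2⟩, hw.1, Subtype.ext h⟩
  · rintro ⟨w, hw, rfl⟩
    exact ⟨⟨w.1, ne_zero_of_fD w.2⟩, ⟨hw, w.2⟩, rfl⟩

lemma pr_quot : IsOpenQuotientMap pr :=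
  ⟨fun p => ⟨_, pr_rep p⟩, pr_cont, pr_open⟩

/-- A map out of the complement given by a function on vectors is continuous at a point if the
function is, provided that near this point it is homogeneous of degree zero. -/
lemma contAt_descend {Z : Type*} [TopologicalSpace Z] {f : (Fin 3 → ℂ) → Z}
    (v : VV) (hv : ContinuousAt f v.1)
    (O : Set XX) (hO : O ∈ 𝓝 (pr v))
    (hf : ∀ w : VV, pr w ∈ O → ∀ c : ℂ, c ≠ 0 → f (c • w.1) = f w.1) :
    ContinuousAt (fun p : XX => f p.1.rep) (pr v) := by
  rw [← pr_quot.continuousAt_comp_iff]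
  have h1 : ContinuousAt (fun w : VV => f w.1) v := ContinuousAt.comp (f := Subtype.val) hv
    continuous_subtype_val.continuousAt
  refine h1.congr ?_
  filter_upwards [pr_cont.continuousAt hO] with w hw
  obtain ⟨c, hc, h⟩ := rep_pr w
  simp only [comp_apply]
  rw [h, hf w hw c hc]

end Zar

/-! ### Cones and the frame parametrisation -/

namespace Zar
open Set Topology unitInterval Complex

/-- The subset of the complement cut out by a set of vectors, meaningful for a cone: membership is
tested on the chosen representative, see `mem_down`. -/
def down (S : Set (Fin 3 → ℂ)) : Set XX := {p | p.1.rep ∈ S}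

/-- Invariance under multiplication by nonzero scalars. -/
def IsCone (S : Set (Fin 3 → ℂ)) : Prop := ∀ c : ℂ, c ≠ 0 → ∀ v, c • v ∈ S ↔ v ∈ S

lemma mem_down {S : Set (Fin 3 → ℂ)} (hS : IsCone S) (v : VV) : pr v ∈ down S ↔ v.1 ∈ S := by
  obtain ⟨c, hc, h⟩ := rep_pr v
  change (pr v).1.rep ∈ S ↔ _
  rw [h]; exact hS c hc _

lemma isOpen_down {S : Set (Fin 3 → ℂ)} (hS : IsCone S) (ho : IsOpen S) : IsOpen (down S) := by
  rw [← pr_quot.isQuotientMap.isOpen_preimage]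
  have : pr ⁻¹' down S = Subtype.val ⁻¹' S := by
    ext v; exact mem_down hS v
  rw [this]; exact ho.preimage continuous_subtype_val

/-- The cone over the open set `A`. -/
def cA : Set (Fin 3 → ℂ) := {v | ‖fa v‖ ^ 3 < ‖fb v‖ ^ 2}
/-- The cone over the open set `B`. -/
def cB : Set (Fin 3 → ℂ) := {v | fa v ≠ 0 ∧ 1 + fb v ^ 2 / fa v ^ 3 ∈ slitPlane}
/-- The cone over the affine chart `x₁ ≠ 0`. -/
def cU : Set (Fin 3 → ℂ) := {v | v 1 ≠ 0}
/-- The cone over the neighbourhood `N` of the points with `x₁ = 0`. -/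
def cN : Set (Fin 3 → ℂ) := {v | 2 * ‖v 1‖ < ‖v 0‖ ∧ 2 * ‖v 1 * v 2‖ < ‖v 0‖ ^ 2}

lemma cA_cone : IsCone cA := by
  intro c hc v
  have : 0 < ‖c‖ := norm_pos_iff.2 hc
  simp only [cA, mem_ofPred_eq, fa_smul, fb_smul, norm_mul, norm_pow, mul_pow, ← pow_mul]
  exact mul_lt_mul_iff_right₀ (by positivity)

lemma cB_cone : IsCone cB := by
  intro c hc v
  simp only [cB, mem_ofPred_eq, fa_smul, fb_smul]
  have : (c ^ 3 * fb v) ^ 2 / (c ^ 2 * fa v) ^ 3 = fb v ^ 2 / fa v ^ 3 := by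
    rw [mul_pow, mul_pow, ← pow_mul, ← pow_mul]
    exact mul_div_mul_left _ _ (pow_ne_zero _ hc)
  rw [this]; simp [hc]

lemma cU_cone : IsCone cU := by
  intro c hc v; simp [cU, hc]

lemma cN_cone : IsCone cN := by
  intro c hc v
  have : 0 < ‖c‖ := norm_pos_iff.2 hc
  simp only [cN, mem_ofPred_eq, Pi.smul_apply, smul_eq_mul, norm_mul]
  rw [show 2 * (‖c‖ * ‖v 1‖) = ‖c‖ * (2 * ‖v 1‖) by ring,
    show 2 * (‖c‖ * ‖v 1‖ * (‖c‖ * ‖v 2‖)) = ‖c‖ ^ 2 * (2 * (‖v 1‖ * ‖v 2‖)) by ring, mul_pow,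
    mul_lt_mul_iff_right₀ this, mul_lt_mul_iff_right₀ (by positivity)]

lemma cA_open : IsOpen cA := isOpen_lt (by fun_prop) (by fun_prop)
lemma cU_open : IsOpen cU := isOpen_ne_fun (by fun_prop) (by fun_prop)
lemma cN_open : IsOpen cN :=
  IsOpen.and (isOpen_lt (by fun_prop) (by fun_prop)) (isOpen_lt (by fun_prop) (by fun_prop))
lemma cB_open : IsOpen cB := by
  have h1 : ContinuousOn (fun v => 1 + fb v ^ 2 / fa v ^ 3) {v | fa v ≠ 0} := by
    intro v hv
    have : fa v ^ 3 ≠ 0 := pow_ne_zero _ hv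
    exact ContinuousAt.continuousWithinAt (by fun_prop (disch := assumption))
  exact h1.isOpen_inter_preimage (isOpen_ne_fun (by fun_prop) (by fun_prop)) isOpen_slitPlane

lemma cA_fb {v} (h : v ∈ cA) : fb v ≠ 0 := by
  intro h0
  have h : ‖fa v‖ ^ 3 < ‖fb v‖ ^ 2 := h
  rw [h0] at h
  have : 0 ≤ ‖fa v‖ ^ 3 := by positivity
  simp at h; linarith

lemma cA_sub_cU : cA ⊆ cU := by
  intro v hv h0
  exact cA_fb hv (by simp [fb, h0])

/-- Away from `A` the quotient `q = f₃²/f₂³` has `‖q‖ ≤ 1`, so `1 + q` can only leave the slit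
plane at `q = -1`, which is the sextic. -/
lemma cA_union_cB {v} (h : fD v ≠ 0) : v ∈ cA ∨ v ∈ cB := by
  by_contra! hn
  obtain ⟨h1, h2⟩ := hn
  have h1 : ¬ ‖fa v‖ ^ 3 < ‖fb v‖ ^ 2 := h1
  push Not at h1
  have ha : fa v ≠ 0 := by
    intro h0
    rw [h0] at h1
    have : fb v = 0 := by
      rw [norm_zero, zero_pow three_ne_zero] at h1
      have h3 : ‖fb v‖ ^ 2 = 0 := h1.antisymm (by positivity)
      simpa using h3
    simp [fD, h0, this] at h
  apply h2
  refine ⟨ha, ?_⟩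
  set q := fb v ^ 2 / fa v ^ 3 with hq
  have hq1 : ‖q‖ ≤ 1 := by
    rw [hq, norm_div, norm_pow, norm_pow]
    exact div_le_one_of_le₀ h1 (by positivity)
  have hq2 : 1 + q ≠ 0 := by
    intro h0
    apply h
    have : fD v = fa v ^ 3 * (1 + q) := by rw [hq, fD]; field_simp
    rw [this, h0, mul_zero]
  rw [mem_slitPlane_iff]
  by_contra! hc
  obtain ⟨hc1, hc2⟩ := hc
  have := abs_re_le_norm q
  have h3 := neg_abs_le q.re
  simp at hc1 hc2
  apply hq2
  apply Complex.ext
  · simp; linarith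
  · simp [hc2]

/-- On `A ∩ B` the quotient itself lies in the slit plane: a negative real value would be less
than `-1`, which `B` excludes. -/
lemma cAB_slit {v} (hA : v ∈ cA) (hB : v ∈ cB) : fb v ^ 2 / fa v ^ 3 ∈ slitPlane := by
  have hA : ‖fa v‖ ^ 3 < ‖fb v‖ ^ 2 := hA
  obtain ⟨ha, hB⟩ := hB
  set q := fb v ^ 2 / fa v ^ 3 with hq
  have hq1 : 1 < ‖q‖ := by
    rw [hq, norm_div, norm_pow, norm_pow, one_lt_div (by positivity)]
    exact hA
  rw [mem_slitPlane_iff] at hB ⊢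
  by_contra! hc
  obtain ⟨hc1, hc2⟩ := hc
  simp only [add_re, one_re, add_im, one_im, hc2] at hB
  have : ‖q‖ = -q.re := by
    rw [← abs_re_eq_norm.2 hc2, abs_of_nonpos hc1]
  rcases hB with hB | hB
  · linarith
  · simp at hB

/-- The vector with `x₁ = exp (-η)` on which the forms `f₂` and `f₃` take the values `a` and `b`. -/
def fr (η a b : ℂ) : Fin 3 → ℂ :=
  ![b * exp (2 * η), exp (-η), (a + b ^ 2 * exp (4 * η)) * exp η]

@[simp] lemma fr_one (η a b) : fr η a b 1 = exp (-η) := rfl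

@[simp] lemma fa_fr (η a b) : fa (fr η a b) = a := by
  simp only [fa, fr, Matrix.cons_val]
  rw [show exp (4 * η) = exp (2 * η) ^ 2 by rw [← exp_nat_mul]; ring_nf, exp_neg]
  have := exp_ne_zero η
  field_simp; ring

@[simp] lemma fb_fr (η a b) : fb (fr η a b) = b := by
  simp only [fb, fr, Matrix.cons_val]
  rw [show exp (2 * η) = exp η ^ 2 by rw [← exp_nat_mul]; ring_nf, exp_neg]
  have := exp_ne_zero η
  field_simp

lemma fD_fr (η a b) : fD (fr η a b) = a ^ 3 + b ^ 2 := by simp [fD]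

lemma eq_fr (v : Fin 3 → ℂ) (η : ℂ) (h : v 1 = exp (-η)) : v = fr η (fa v) (fb v) := by
  have h0 := exp_ne_zero η
  have h2 : exp (2 * η) = exp η ^ 2 := by rw [← exp_nat_mul]; ring_nf
  have h4 : exp (4 * η) = exp η ^ 4 := by rw [← exp_nat_mul]; ring_nf
  rw [exp_neg] at h
  funext i
  fin_cases i
  · simp only [fr, fb, h, h2]
    simp
    field_simp
  · simp [fr, h, exp_neg]
  · simp only [fr, fa, fb, h, h2, h4]
    simp
    field_simp
    ring

lemma fr_smul (v : Fin 3 → ℂ) (hv : v 1 ≠ 0) (η : ℂ) :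
    fr η (fa v / v 1 ^ 2 * exp (-2 * η)) (fb v / v 1 ^ 3 * exp (-3 * η)) =
      (exp (-η) / v 1) • v := by
  have h2 : exp (-2 * η) = exp (-η) ^ 2 := by rw [← exp_nat_mul]; ring_nf
  have h3 : exp (-3 * η) = exp (-η) ^ 3 := by rw [← exp_nat_mul]; ring_nf
  rw [eq_fr ((exp (-η) / v 1) • v) η (by simp [hv]), fa_smul, fb_smul, h2, h3]
  congr 1 <;> field_simp

/-- Rescaling in terms of the parameters; `f₂` and `f₃` have weights `2` and `3`. -/
lemma fr_add (η κ a b : ℂ) :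
    fr (η + κ) (a * exp (-2 * κ)) (b * exp (-3 * κ)) = exp (-κ) • fr η a b := by
  have h2 : exp (-2 * κ) = exp (-κ) ^ 2 := by rw [← exp_nat_mul]; ring_nf
  have h3 : exp (-3 * κ) = exp (-κ) ^ 3 := by rw [← exp_nat_mul]; ring_nf
  rw [eq_fr (exp (-κ) • fr η a b) (η + κ) (by simp [← exp_add]), fa_smul, fb_smul, h2, h3,
    fa_fr, fb_fr]
  congr 1 <;> ring

lemma fr_cont {T : Type*} [TopologicalSpace T] {f g h : T → ℂ} (hf : Continuous f)
    (hg : Continuous g) (hh : Continuous h) : Continuous fun t => fr (f t) (g t) (h t) := by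
  unfold fr
  fun_prop

/-- Continuous logarithms along paths in `ℂ` avoiding zero. -/
lemma exp_lift (γ : C(I, ℂ)) (h0 : ∀ t, γ t ≠ 0) (z : ℂ) (hz : exp z = γ 0) :
    ∃ Γ : C(I, ℂ), Γ 0 = z ∧ ∀ t, exp (Γ t) = γ t := by
  obtain ⟨Γ, h1, h2⟩ := isCoveringMap_exp.exists_path_lifts
    (⟨fun t => ⟨γ t, h0 t⟩, by fun_prop⟩ : C(I, {z : ℂ // z ≠ 0})) z (Subtype.ext hz.symm)
  exact ⟨Γ, h2, fun t => congrArg Subtype.val (congrFun h1 t)⟩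

/-- The affine coordinate on the chart `x₁ ≠ 0` given by the cubic. -/
def Yf (p : XX) : ℂ := fb p.1.rep / p.1.rep 1 ^ 3
/-- The affine coordinate on the chart `x₁ ≠ 0` given by the conic. -/
def wf (p : XX) : ℂ := fa p.1.rep / p.1.rep 1 ^ 2

lemma Yf_pr (v : VV) : Yf (pr v) = fb v.1 / v.1 1 ^ 3 := by
  obtain ⟨c, hc, h⟩ := rep_pr v
  rw [Yf, h, fb_smul]
  simp only [Pi.smul_apply, smul_eq_mul, mul_pow]
  exact mul_div_mul_left _ _ (pow_ne_zero _ hc)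

lemma wf_pr (v : VV) : wf (pr v) = fa v.1 / v.1 1 ^ 2 := by
  obtain ⟨c, hc, h⟩ := rep_pr v
  rw [wf, h, fa_smul]
  simp only [Pi.smul_apply, smul_eq_mul, mul_pow]
  exact mul_div_mul_left _ _ (pow_ne_zero _ hc)

lemma Yf_contOn : ContinuousOn Yf (down cU) := by
  intro p hp
  obtain ⟨v, rfl⟩ := pr_quot.surjective p
  have hv : v.1 1 ≠ 0 := (mem_down cU_cone v).1 hp
  have hv' := pow_ne_zero 3 hv
  have : ContinuousAt (fun v => fb v / v 1 ^ 3) v.1 := by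
    fun_prop (disch := assumption)
  refine (contAt_descend v this univ Filter.univ_mem ?_).continuousWithinAt
  intro w _ c hc
  rw [fb_smul]
  simp only [Pi.smul_apply, smul_eq_mul, mul_pow]
  exact mul_div_mul_left _ _ (pow_ne_zero _ hc)

lemma wf_contOn : ContinuousOn wf (down cU) := by
  intro p hp
  obtain ⟨v, rfl⟩ := pr_quot.surjective p
  have hv : v.1 1 ≠ 0 := (mem_down cU_cone v).1 hp
  have hv' := pow_ne_zero 2 hv
  have : ContinuousAt (fun v => fa v / v 1 ^ 2) v.1 := by
    fun_prop (disch := assumption)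
  refine (contAt_descend v this univ Filter.univ_mem ?_).continuousWithinAt
  intro w _ c hc
  rw [fa_smul]
  simp only [Pi.smul_apply, smul_eq_mul, mul_pow]
  exact mul_div_mul_left _ _ (pow_ne_zero _ hc)

/-- Every point of the chart `x₁ ≠ 0` is represented by a vector with `x₁ = exp (-η)`, for any
prescribed `η`. -/
lemma pr_fr (p : XX) (hp : p ∈ down cU) (η : ℂ) :
    ∃ h : fD (fr η (wf p * exp (-2 * η)) (Yf p * exp (-3 * η))) ≠ 0, p = pr ⟨_, h⟩ := by
  have key : fr η (wf p * exp (-2 * η)) (Yf p * exp (-3 * η)) =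
      (exp (-η) / p.1.rep 1) • p.1.rep := fr_smul _ hp η
  have hc : exp (-η) / p.1.rep 1 ≠ 0 := div_ne_zero (exp_ne_zero _) hp
  rw [key]
  refine ⟨?_, ?_⟩
  · rw [fD_smul]; exact mul_ne_zero (pow_ne_zero _ hc) (rep_fD p)
  · conv_lhs => rw [← pr_rep p]
    exact ((pr_eq_iff _ _).2 ⟨_, hc, rfl⟩).symm

end Zar

/-! ### Contractible charts and their loops -/

namespace Zar
open Set Topology unitInterval Complex

/-- The contractible space over `A`, with points `(η, a)` standing for `fr η a 1`. -/
def EA : Set (ℂ × ℂ) := {x | ‖x.2‖ < 1}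
/-- The contractible space over the affine part of `B`, with points `(η, b)` standing for
`fr η 1 b`. -/
def EB : Set (ℂ × ℂ) := {x | 1 + x.2 ^ 2 ∈ slitPlane}
/-- The contractible chart of `N`, with points `(x₁, x₂)` at `x₀ = 1`. -/
def EN : Set (ℂ × ℂ) := {x | 2 * ‖x.1‖ < 1 ∧ 2 * ‖x.1 * x.2‖ < 1}

lemma slit_star {q : ℂ} (hq : 1 + q ∈ slitPlane) {s : ℝ} (h0 : 0 ≤ s) (h1 : s ≤ 1) :
    1 + s * q ∈ slitPlane := by
  rw [mem_slitPlane_iff] at hq ⊢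
  simp only [add_re, one_re, add_im, one_im, zero_add, re_ofReal_mul, im_ofReal_mul] at hq ⊢
  rcases h0.eq_or_lt with rfl | h0
  · left; norm_num
  rcases hq with hq | hq
  · left; nlinarith
  · right; exact mul_ne_zero h0.ne' hq

lemma EA_convex : Convex ℝ EA := by
  have : EA = Prod.snd ⁻¹' Metric.ball (0 : ℂ) 1 := by ext x; simp [EA]
  rw [this]
  exact (convex_ball _ _).linear_preimage (LinearMap.snd ℝ ℂ ℂ)

instance : ContractibleSpace EA := EA_convex.contractibleSpace ⟨0, by simp [EA]⟩

instance : ContractibleSpace EB := by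
  refine StarConvex.contractibleSpace (x := 0) ?_ ⟨0, by simp [EB]⟩
  rw [starConvex_zero_iff]
  intro x hx s h0 h1
  have := slit_star (q := x.2 ^ 2) hx (s := s ^ 2) (by positivity) (by nlinarith)
  change 1 + (s • x.2) ^ 2 ∈ slitPlane
  rw [real_smul, mul_pow]
  exact_mod_cast this

instance : ContractibleSpace EN := by
  refine StarConvex.contractibleSpace (x := 0) ?_ ⟨0, by simp [EN]⟩
  rw [starConvex_zero_iff]
  intro x hx s h0 h1
  obtain ⟨h2, h3⟩ := hx
  change 2 * ‖s • x.1‖ < 1 ∧ 2 * ‖(s • x.1) * (s • x.2)‖ < 1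
  rw [smul_mul_smul_comm, norm_smul, norm_smul]
  simp only [Real.norm_eq_abs, abs_mul, abs_of_nonneg h0]
  have := norm_nonneg x.1
  have := norm_nonneg (x.1 * x.2)
  constructor
  · nlinarith
  · have : s * s ≤ 1 := by nlinarith
    nlinarith

lemma EA_fD {x : ℂ × ℂ} (hx : x ∈ EA) : fD (fr x.1 x.2 1) ≠ 0 := by
  rw [fD_fr]
  intro h
  have h1 : x.2 ^ 3 = -1 := by linear_combination h
  have h2 : ‖x.2‖ ^ 3 = 1 := by rw [← norm_pow, h1]; simp
  have h3 : ‖x.2‖ < 1 := hx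
  have := pow_lt_one₀ (norm_nonneg x.2) h3 three_ne_zero
  linarith

lemma EB_fD {x : ℂ × ℂ} (hx : x ∈ EB) : fD (fr x.1 1 x.2) ≠ 0 := by
  rw [fD_fr, one_pow]
  exact slitPlane_ne_zero hx

lemma EN_fD {x : ℂ × ℂ} (hx : x ∈ EN) : fD ![1, x.1, x.2] ≠ 0 := by
  obtain ⟨h1, h2⟩ := hx
  simp only [fD, fa, fb, Matrix.cons_val]
  intro h
  have h3 : (1 - x.1 * x.2) ^ 3 = x.1 ^ 4 := by linear_combination -h
  have h4 : ‖1 - x.1 * x.2‖ ^ 3 = ‖x.1‖ ^ 4 := by rw [← norm_pow, h3, norm_pow]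
  have h5 : 1 / 2 ≤ ‖1 - x.1 * x.2‖ := by
    have := norm_sub_norm_le 1 (x.1 * x.2)
    rw [norm_one] at this
    linarith
  have h6 : (1 / 2 : ℝ) ^ 3 ≤ ‖1 - x.1 * x.2‖ ^ 3 := pow_le_pow_left₀ (by norm_num) h5 3
  have h7 : ‖x.1‖ ^ 4 ≤ (1 / 2) ^ 4 := pow_le_pow_left₀ (norm_nonneg _) (by linarith) 4
  norm_num at h6 h7
  linarith

/-- The projection of `EA` onto `A`. -/
def eA : C(EA, XX) := ⟨fun x => pr ⟨fr x.1.1 x.1.2 1, EA_fD x.2⟩,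
  pr_cont.comp (Continuous.subtype_mk (fr_cont (by fun_prop) (by fun_prop) (by fun_prop)) _)⟩
/-- The projection of `EB` onto the affine part of `B`. -/
def eB : C(EB, XX) := ⟨fun x => pr ⟨fr x.1.1 1 x.1.2, EB_fD x.2⟩,
  pr_cont.comp (Continuous.subtype_mk (fr_cont (by fun_prop) (by fun_prop) (by fun_prop)) _)⟩
/-- The projection of `EN` onto `N`, which is a bijection. -/
def eN : C(EN, XX) := ⟨fun x => pr ⟨![1, x.1.1, x.1.2], EN_fD x.2⟩,
  pr_cont.comp (Continuous.subtype_mk (by fun_prop) _)⟩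

/-- The point of `EA` above the base point: `fr 0 1 8` rescaled by `1/2` so that `f₃ = 1`. -/
def xA : EA := ⟨(Complex.log 2, 1 / 4), by norm_num [EA]⟩
/-- The point of `EB` above the base point. -/
def xB : EB := ⟨(0, 8), by
  change (1 + 8 ^ 2 : ℂ) ∈ slitPlane
  rw [mem_slitPlane_iff]; left; norm_num⟩

/-- The base point. -/
def p0 : XX := eB xB

lemma exp_log_two (n : ℤ) : exp (n * Complex.log 2) = 2 ^ n := by
  rw [exp_int_mul, exp_log two_ne_zero]

lemma exp_log_m2 : exp (-2 * Complex.log 2) = 1 / 4 := by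
  have := exp_log_two (-2)
  push_cast at this
  rw [this]; norm_num

lemma eA_xA : eA xA = p0 := by
  refine (pr_eq_iff _ _).2 ⟨exp (-Complex.log 2), exp_ne_zero _, ?_⟩
  have := fr_add 0 (Complex.log 2) 1 8
  have h2 : exp (-2 * Complex.log 2) = 1 / 4 := exp_log_m2
  have h3 : exp (-3 * Complex.log 2) = 1 / 8 := by
    have := exp_log_two (-3)
    push_cast at this
    rw [this]; norm_num
  simp only [h2, h3, zero_add, one_mul] at this
  rw [show (8 : ℂ) * (1 / 8) = 1 by norm_num] at this
  exact this

/-- The deck transformations of `EA`: a vector with `f₃ = 1` is determined by its line up to a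
cube root of unity. -/
def δA (n : ℤ) : C(EA, EA) := ⟨fun x => ⟨(x.1.1 + 2 * Real.pi * Complex.I * n / 3,
    x.1.2 * exp (-2 * (2 * Real.pi * Complex.I * n / 3))), by
      have hx : ‖x.1.2‖ < 1 := x.2
      change ‖_ * _‖ < 1
      rw [norm_mul, norm_exp]
      have : (-2 * (2 * Real.pi * Complex.I * n / 3) : ℂ).re = 0 := by simp
      rw [this]; simpa using hx⟩, by fun_prop⟩

/-- The deck transformations of `EB`: a vector with `f₂ = 1` is determined by its line up to
sign. -/
def δB (n : ℤ) : C(EB, EB) := ⟨fun x => ⟨(x.1.1 + Real.pi * Complex.I * n,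
    x.1.2 * exp (-3 * (Real.pi * Complex.I * n))), by
      have hx : 1 + x.1.2 ^ 2 ∈ slitPlane := x.2
      change 1 + (_ * _) ^ 2 ∈ slitPlane
      have : exp (-3 * (Real.pi * Complex.I * n)) ^ 2 = 1 := by
        rw [← exp_nat_mul, exp_eq_one_iff]
        exact ⟨-3 * n, by push_cast; ring⟩
      rw [mul_pow, this, mul_one]; exact hx⟩, by fun_prop⟩

/-- The deck data over `A`; its class `cls 1` is the generator `T`. -/
def deckA : Deck EA p0 where
  e := eA
  δ := δA
  x0 := xA
  e_δ n x := by
    refine (pr_eq_iff _ _).2 ⟨exp (-(2 * Real.pi * Complex.I * n / 3)), exp_ne_zero _, ?_⟩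
    rw [← fr_add _ (2 * Real.pi * Complex.I * n / 3)]
    have : exp (-3 * (2 * Real.pi * Complex.I * n / 3)) = 1 := by
      rw [exp_eq_one_iff]
      exact ⟨-n, by push_cast; ring⟩
    rw [this, mul_one]; rfl
  δ_zero := by apply Subtype.ext; simp [δA]
  δ_add m n := by
    apply Subtype.ext
    simp only [δA, ContinuousMap.coe_mk, Prod.mk.injEq]
    constructor
    · push_cast; ring
    · rw [mul_assoc _ (exp _) (exp _), ← exp_add]; congr 2; push_cast; ring
  e_x0 := eA_xA

/-- The deck data over the affine part of `B`; its class `cls 1` is the generator `S`. -/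
def deckB : Deck EB p0 where
  e := eB
  δ := δB
  x0 := xB
  e_δ n x := by
    refine (pr_eq_iff _ _).2 ⟨exp (-(Real.pi * Complex.I * n)), exp_ne_zero _, ?_⟩
    rw [← fr_add _ (Real.pi * Complex.I * n)]
    have : exp (-2 * (Real.pi * Complex.I * n)) = 1 := by
      rw [exp_eq_one_iff]
      exact ⟨-n, by push_cast; ring⟩
    rw [this, mul_one]; rfl
  δ_zero := by apply Subtype.ext; simp [δB]
  δ_add m n := by
    apply Subtype.ext
    simp only [δB, ContinuousMap.coe_mk, Prod.mk.injEq]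
    constructor
    · push_cast; ring
    · rw [mul_assoc _ (exp _) (exp _), ← exp_add]; congr 2; push_cast; ring
  e_x0 := rfl

/-- The open set `A`. -/
def sA : Set XX := down cA
/-- The affine part of the complement. -/
def sU : Set XX := down cU
/-- The affine part of the open set `B`. -/
def sB : Set XX := down cB ∩ sU

lemma sA_sub : sA ⊆ sU := fun _ hp => cA_sub_cU hp

/-- A logarithm of the cube root of `Y` determines a point of `EA` above the given point. -/
lemma liftA {p : XX} (hp : p ∈ sA) (η : ℂ) (hη : exp (3 * η) = Yf p) :
    ∃ h : (η, wf p * exp (-2 * η)) ∈ EA, p = eA ⟨_, h⟩ := by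
  obtain ⟨h, h1⟩ := pr_fr p (sA_sub hp) η
  have h2 : Yf p * exp (-3 * η) = 1 := by
    rw [← hη, ← exp_add]; simp
  have h3 : fr η (wf p * exp (-2 * η)) (Yf p * exp (-3 * η)) ∈ cA := by
    have h4 := hp
    rw [h1, sA, mem_down cA_cone] at h4
    exact h4
  have h5 : ‖wf p * exp (-2 * η)‖ ^ 3 < 1 := by
    have h6 : ‖_‖ ^ 3 < ‖_‖ ^ 2 := h3
    rw [fa_fr, fb_fr, h2] at h6
    simpa using h6
  refine ⟨?_, ?_⟩
  · by_contra hc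
    have hc' : 1 ≤ ‖wf p * exp (-2 * η)‖ := not_lt.1 hc
    exact absurd h5 (not_lt.2 (one_le_pow₀ hc'))
  · refine h1.trans (congrArg pr (Subtype.ext ?_))
    change fr _ _ _ = fr _ _ _
    rw [h2]

/-- A logarithm of the square root of `w` determines a point of `EB` above the given point. -/
lemma liftB {p : XX} (hp : p ∈ sB) (η : ℂ) (hη : exp (2 * η) = wf p) :
    ∃ h : (η, Yf p * exp (-3 * η)) ∈ EB, p = eB ⟨_, h⟩ := by
  obtain ⟨h, h1⟩ := pr_fr p hp.2 η
  have h2 : wf p * exp (-2 * η) = 1 := by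
    rw [← hη, ← exp_add]; simp
  have h3 : fr η (wf p * exp (-2 * η)) (Yf p * exp (-3 * η)) ∈ cB := by
    have h4 := hp.1
    rw [h1, mem_down cB_cone] at h4
    exact h4
  have h5 := h3.2
  rw [fa_fr, fb_fr, h2, one_pow, div_one] at h5
  refine ⟨h5, ?_⟩
  refine h1.trans (congrArg pr (Subtype.ext ?_))
  change fr _ _ _ = fr _ _ _
  rw [h2]

lemma Yf_ne {p : XX} (hp : p ∈ sA) : Yf p ≠ 0 :=
  div_ne_zero (cA_fb hp) (pow_ne_zero _ (sA_sub hp))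

lemma wf_ne {p : XX} (hp : p ∈ sB) : wf p ≠ 0 :=
  div_ne_zero hp.1.1 (pow_ne_zero _ hp.2)

lemma Yf_p0 : Yf p0 = 8 := by
  rw [p0, eB, ContinuousMap.coe_mk, Yf_pr]
  simp [xB]
lemma wf_p0 : wf p0 = 1 := by
  rw [p0, eB, ContinuousMap.coe_mk, wf_pr]
  simp [xB]

/-- A loop in `A` lifts to `EA` along a continuous logarithm of `Y`, and the end points of the
lift differ by a deck transformation. -/
lemma loops_A (γ : Path p0 p0) (hγ : ∀ t, γ t ∈ sA) : ∃ n, loopCls γ = deckA.cls n := by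
  have hY : Continuous fun t => Yf (γ t) :=
    Yf_contOn.comp_continuous γ.continuous (fun t => sA_sub (hγ t))
  have hw : Continuous fun t => wf (γ t) :=
    wf_contOn.comp_continuous γ.continuous (fun t => sA_sub (hγ t))
  have e8 : exp (3 * Complex.log 2) = 8 := by
    have := exp_log_two 3
    norm_num at this
    exact this
  obtain ⟨Γ, h0, hΓ⟩ := exp_lift ⟨_, hY⟩ (fun t => Yf_ne (hγ t)) (3 * Complex.log 2)
    (by simp [Yf_p0, e8])
  have hΓ' : ∀ t, exp (3 * (Γ t / 3)) = Yf (γ t) := by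
    intro t; rw [mul_div_cancel₀ _ three_ne_zero]; exact hΓ t
  choose hm he using fun t => liftA (hγ t) (Γ t / 3) (hΓ' t)
  have h1 := hΓ 1
  simp only [ContinuousMap.coe_mk, γ.target, Yf_p0] at h1
  rw [← e8, exp_eq_exp_iff_exists_int] at h1
  obtain ⟨n, hn⟩ := h1
  have e2 := exp_log_m2
  let D : Path deckA.x0 (deckA.δ n deckA.x0) :=
    { toFun := fun t => ⟨_, hm t⟩
      continuous_toFun := by fun_prop
      source' := by
        apply Subtype.ext
        simp only [γ.source, wf_p0, h0]
        change _ = (Complex.log 2, (1 / 4 : ℂ))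
        rw [← e2]
        simp only [one_mul, Prod.mk.injEq]
        constructor
        · ring
        · congr 1; ring
      target' := by
        apply Subtype.ext
        simp only [γ.target, wf_p0, hn]
        change _ = (Complex.log 2 + _, (1 / 4 : ℂ) * _)
        rw [← e2, ← exp_add]
        simp only [one_mul, Prod.mk.injEq]
        constructor
        · ring
        · congr 1; ring }
  refine ⟨n, ?_⟩
  rw [← deckA.cls_eq n D]
  congr 1
  exact Path.ext (funext fun t => he t)

/-- The analogue of `loops_A` for the affine part of `B`, with a logarithm of `w`. -/
lemma loops_B (γ : Path p0 p0) (hγ : ∀ t, γ t ∈ sB) : ∃ n, loopCls γ = deckB.cls n := by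
  have hY : Continuous fun t => Yf (γ t) :=
    Yf_contOn.comp_continuous γ.continuous (fun t => (hγ t).2)
  have hw : Continuous fun t => wf (γ t) :=
    wf_contOn.comp_continuous γ.continuous (fun t => (hγ t).2)
  obtain ⟨Γ, h0, hΓ⟩ := exp_lift ⟨_, hw⟩ (fun t => wf_ne (hγ t)) 0 (by simp [wf_p0])
  have hΓ' : ∀ t, exp (2 * (Γ t / 2)) = wf (γ t) := by
    intro t; rw [mul_div_cancel₀ _ two_ne_zero]; exact hΓ t
  choose hm he using fun t => liftB (hγ t) (Γ t / 2) (hΓ' t)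
  have h1 := hΓ 1
  simp only [ContinuousMap.coe_mk, γ.target, wf_p0] at h1
  rw [exp_eq_one_iff] at h1
  obtain ⟨n, hn⟩ := h1
  let D : Path deckB.x0 (deckB.δ n deckB.x0) :=
    { toFun := fun t => ⟨_, hm t⟩
      continuous_toFun := by fun_prop
      source' := by
        apply Subtype.ext
        simp only [γ.source, Yf_p0, h0]
        change _ = ((0 : ℂ), (8 : ℂ))
        simp
      target' := by
        apply Subtype.ext
        simp only [γ.target, Yf_p0, hn]
        change _ = ((0 : ℂ) + _, (8 : ℂ) * _)
        simp only [Prod.mk.injEq]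
        constructor
        · ring
        · congr 2; ring }
  refine ⟨n, ?_⟩
  rw [← deckB.cls_eq n D]
  congr 1
  exact Path.ext (funext fun t => he t)

end Zar

/-! ### The relations -/

namespace Zar
open Set Topology unitInterval Complex

/-- `T³ = S²`: both classes are represented by the loop `fr (2πit) 1 8`, rescaled by `1/2` in
the case of `T³`. -/
lemma relAB : deckA.cls 3 = deckB.cls 2 := by
  let DA : Path deckA.x0 (deckA.δ 3 deckA.x0) :=
    { toFun := fun t => ⟨(Complex.log 2 + 2 * Real.pi * Complex.I * (t : ℝ), 1 / 4), xA.2⟩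
      continuous_toFun := by fun_prop
      source' := by
        apply Subtype.ext
        change _ = (Complex.log 2, (1 / 4 : ℂ))
        simp
      target' := by
        apply Subtype.ext
        change _ = (Complex.log 2 + _, (1 / 4 : ℂ) * exp _)
        simp only [Prod.mk.injEq]
        constructor
        · push_cast; simp
        · rw [exp_eq_one_iff.2 ⟨-2, by push_cast; ring⟩, mul_one] }
  let DB : Path deckB.x0 (deckB.δ 2 deckB.x0) :=
    { toFun := fun t => ⟨(2 * Real.pi * Complex.I * (t : ℝ), 8), xB.2⟩
      continuous_toFun := by fun_prop
      source' := by
        apply Subtype.ext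
        change _ = ((0 : ℂ), (8 : ℂ))
        simp
      target' := by
        apply Subtype.ext
        change _ = ((0 : ℂ) + _, (8 : ℂ) * exp _)
        simp only [Prod.mk.injEq]
        constructor
        · push_cast; simp; ring
        · rw [exp_eq_one_iff.2 ⟨-3, by push_cast; ring⟩, mul_one] }
  rw [← deckA.cls_eq 3 DA, ← deckB.cls_eq 2 DB]
  congr 1
  refine Path.ext (funext fun t => ?_)
  refine (pr_eq_iff _ _).2 ⟨exp (-Complex.log 2), exp_ne_zero _, ?_⟩
  have := fr_add (2 * Real.pi * Complex.I * (t : ℝ)) (Complex.log 2) 1 8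
  have h3 : exp (-3 * Complex.log 2) = 1 / 8 := by
    have := exp_log_two (-3)
    push_cast at this
    rw [this]; norm_num
  rw [exp_log_m2, h3, one_mul, show (8 : ℂ) * (1 / 8) = 1 by norm_num] at this
  refine Eq.trans ?_ this
  change fr (Complex.log 2 + 2 * Real.pi * Complex.I * (t : ℝ)) (1 / 4) 1 = _
  rw [add_comm]

lemma gE_fD (x : Metric.ball (0 : ℂ) 1) : fD ![Complex.I, x.1, 0] ≠ 0 := by
  have hx : ‖x.1‖ < 1 := mem_ball_zero_iff.1 x.2
  simp only [fD, fa, fb, Matrix.cons_val]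
  have h1 : ‖x.1 ^ 4‖ < 1 := by
    rw [norm_pow]; exact pow_lt_one₀ (norm_nonneg _) hx (by norm_num)
  intro h
  have h2 : x.1 ^ 4 = 1 := by
    rw [mul_pow, I_sq] at h
    linear_combination -h
  rw [h2] at h1
  simp at h1

/-- A disc in the complement crossing the line `x₁ = 0` transversally at its centre. -/
def gE : C(Metric.ball (0 : ℂ) 1, XX) := ⟨fun x => pr ⟨![Complex.I, x.1, 0], gE_fD x⟩,
  pr_cont.comp (Continuous.subtype_mk (by fun_prop) _)⟩

/-- A point of `EB` above a boundary-parallel circle of the disc `gE`. -/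
def yB : EB := ⟨(Complex.log 2, Complex.I / 4), by
  change 1 + (Complex.I / 4) ^ 2 ∈ slitPlane
  rw [div_pow, I_sq, mem_slitPlane_iff]; left; norm_num⟩

/-- `S² = 1`: the loop of `S²` is conjugate to a circle around the centre of the disc `gE`. -/
lemma relB : deckB.cls 2 = 1 := by
  have e2 := exp_log_m2
  have hη (t : ℝ) : exp (-2 * (Complex.log 2 + 2 * Real.pi * Complex.I * t)) ^ 2 =
      1 / 16 * exp (-8 * Real.pi * Complex.I * t) := by
    rw [mul_add, exp_add, e2, mul_pow, ← exp_nat_mul]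
    congr 1
    · norm_num
    · congr 1; push_cast; ring
  have hmem (t : ℝ) : 1 + (Complex.I * exp (-2 * (Complex.log 2 + 2 * Real.pi * Complex.I * t))) ^ 2
      ∈ slitPlane := by
    rw [mul_pow, hη, I_sq]
    apply ball_one_subset_slitPlane
    rw [mem_ball_iff_norm, add_sub_cancel_left, norm_mul, norm_mul, norm_exp]
    simp
    norm_num
  -- the path in `EB` that covers the circle `x₁ = exp (-η)` of radius `1/2` in the disc
  let ν : Path yB (deckB.δ 2 yB) :=
    { toFun := fun t => ⟨(Complex.log 2 + 2 * Real.pi * Complex.I * (t : ℝ), Complex.I *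
        exp (-2 * (Complex.log 2 + 2 * Real.pi * Complex.I * (t : ℝ)))), hmem t⟩
      continuous_toFun := by fun_prop
      source' := by
        apply Subtype.ext
        change _ = (Complex.log 2, (Complex.I / 4 : ℂ))
        simp only [Prod.mk.injEq]
        constructor
        · simp
        · simp only [Icc.coe_zero, ofReal_zero, mul_zero, add_zero, e2]; ring
      target' := by
        apply Subtype.ext
        change _ = (Complex.log 2 + _, (Complex.I / 4 : ℂ) * exp _)
        simp only [Prod.mk.injEq]
        constructor
        · push_cast; simp; ring
        · rw [mul_add, exp_add, e2, exp_eq_one_iff.2 ⟨-2, by push_cast; simp⟩,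
            exp_eq_one_iff.2 ⟨-3, by push_cast; ring⟩]; ring }
  let d : Path deckB.x0 yB := PathConnectedSpace.somePath _ _
  let d' : Path (deckB.δ 2 deckB.x0) (deckB.δ 2 yB) := d.map (deckB.δ 2).continuous
  rw [← deckB.cls_eq 2 (d.trans (ν.trans d'.symm))]
  let α : Path p0 (eB yB) := d.map deckB.e.continuous
  let β : Path (eB yB) (eB yB) := (ν.map deckB.e.continuous).cast rfl (deckB.e_δ 2 yB).symm
  have h1 : deckB.push 2 (d.trans (ν.trans d'.symm)) = α.trans (β.trans α.symm) := by
    refine Path.ext (funext fun t => ?_)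
    rw [Deck.push_apply, Path.trans_apply, Path.trans_apply]
    split_ifs
    · rfl
    · rw [Path.trans_apply, Path.trans_apply]
      split_ifs
      · rfl
      · exact deckB.e_δ 2 _
  have hb (t : ℝ) : exp (-(Complex.log 2 + 2 * Real.pi * Complex.I * t)) ∈ Metric.ball (0 : ℂ) 1 := by
    rw [neg_add, exp_add, exp_neg, exp_log two_ne_zero, mem_ball_zero_iff, norm_mul, norm_exp]
    simp
    norm_num
  have : ContractibleSpace (Metric.ball (0 : ℂ) 1) :=
    (convex_ball _ _).contractibleSpace ⟨0, by simp⟩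
  let c0 : Metric.ball (0 : ℂ) 1 := ⟨_, hb 0⟩
  let κ : Path c0 c0 :=
    { toFun := fun t => ⟨_, hb t⟩
      continuous_toFun := by fun_prop
      source' := rfl
      target' := by
        apply Subtype.ext
        change exp _ = exp _
        rw [exp_eq_exp_iff_exists_int]
        exact ⟨-1, by push_cast; simp; ring⟩ }
  have hg (t : I) : deckB.e (ν t) = gE (κ t) := by
    change pr ⟨fr _ _ _, _⟩ = pr ⟨_, _⟩
    congr 2
    change fr (Complex.log 2 + 2 * Real.pi * Complex.I * (t : ℝ)) 1 (Complex.I *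
        exp (-2 * (Complex.log 2 + 2 * Real.pi * Complex.I * (t : ℝ)))) =
      ![Complex.I, exp (-(Complex.log 2 + 2 * Real.pi * Complex.I * t)), 0]
    generalize Complex.log 2 + 2 * Real.pi * Complex.I * (t : ℝ) = η
    have h3 : exp (-2 * η) * exp (2 * η) = 1 := by rw [← exp_add]; simp
    have h4 : exp (4 * η) = exp (2 * η) ^ 2 := by rw [← exp_nat_mul]; congr 1; push_cast; ring
    funext i
    fin_cases i
    · change Complex.I * exp (-2 * η) * exp (2 * η) = Complex.I
      rw [mul_assoc, h3, mul_one]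
    · rfl
    · change (1 + (Complex.I * exp (-2 * η)) ^ 2 * exp (4 * η)) * exp η = 0
      rw [h4]
      linear_combination exp η * (exp (-2 * η) * exp (2 * η)) ^ 2 * I_sq -
        exp η * (exp (-2 * η) * exp (2 * η) + 1) * h3
  have hc : eB yB = gE c0 := by
    have := hg 0
    rwa [ν.source, κ.source] at this
  have h2 : β.Homotopic (Path.refl _) := by
    have h5 := (SimplyConnectedSpace.paths_homotopic κ (Path.refl c0)).map gE
    have h6 := h5.pathCast hc hc
    convert h6 using 1
    · exact Path.ext (funext fun t => hg t)
    · exact Path.ext (funext fun t => hc)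
  rw [h1]
  change Path.Homotopic.Quotient.trans (Path.Homotopic.Quotient.mk α)
    (Path.Homotopic.Quotient.trans (Path.Homotopic.Quotient.mk β)
      (Path.Homotopic.Quotient.symm (Path.Homotopic.Quotient.mk α))) =
      Path.Homotopic.Quotient.refl _
  rw [Path.Homotopic.Quotient.eq.2 h2, Path.Homotopic.Quotient.mk_refl,
    Path.Homotopic.Quotient.refl_trans, Path.Homotopic.Quotient.trans_symm]

end Zar

/-! ### Connectedness and generation -/

namespace Zar
open Set Topology unitInterval Complex

lemma sA_open : IsOpen sA := isOpen_down cA_cone cA_open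
lemma sU_open : IsOpen sU := isOpen_down cU_cone cU_open
lemma sB_open : IsOpen sB := (isOpen_down cB_cone cB_open).inter sU_open
/-- The open set `N`. -/
def sN : Set XX := down cN
lemma sN_open : IsOpen sN := isOpen_down cN_cone cN_open

/-- Logarithmic coordinates `(η, log a)` on `sA ∩ sB`. -/
def KW : Set (ℂ × ℂ) := {x | x.2.re < 0 ∧ |x.2.im| < Real.pi / 3}

lemma KW_convex : Convex ℝ KW := by
  have h1 : Convex ℝ {x : ℂ × ℂ | x.2.re < 0} :=
    (convex_Iio (0 : ℝ)).linear_preimage (reLm.comp (LinearMap.snd ℝ ℂ ℂ))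
  have h2 : Convex ℝ {x : ℂ × ℂ | x.2.im ∈ Ioo (-(Real.pi / 3)) (Real.pi / 3)} :=
    (convex_Ioo _ _).linear_preimage (imLm.comp (LinearMap.snd ℝ ℂ ℂ))
  have : KW = {x : ℂ × ℂ | x.2.re < 0} ∩
      {x : ℂ × ℂ | x.2.im ∈ Ioo (-(Real.pi / 3)) (Real.pi / 3)} := by
    ext x; simp [KW, abs_lt]
  rw [this]; exact h1.inter h2

lemma exp_mem_slit {z : ℂ} (h : |z.im| < Real.pi) : exp z ∈ slitPlane := by
  rw [abs_lt] at h
  rw [exp_mem_slitPlane, (toIocMod_eq_self Real.two_pi_pos).mpr ⟨h.1, by linarith⟩]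
  exact h.2.ne

lemma one_add_slit {q : ℂ} (h : q ∈ slitPlane) : 1 + q ∈ slitPlane := by
  rw [mem_slitPlane_iff] at h ⊢
  simp only [add_re, one_re, add_im, one_im, zero_add]
  rcases h with h | h
  · left; linarith
  · right; exact h

lemma KW_fr {x : ℂ × ℂ} (hx : x ∈ KW) :
    ∃ h, pr ⟨fr x.1 (exp x.2) 1, h⟩ ∈ sA ∩ sB := by
  obtain ⟨h1, h2⟩ := hx
  have hA : ‖exp x.2‖ < 1 := by rw [norm_exp]; simpa using h1
  have h : fD (fr x.1 (exp x.2) 1) ≠ 0 := EA_fD (x := (x.1, exp x.2)) hA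
  refine ⟨h, ?_, ?_, ?_⟩
  · rw [sA, mem_down cA_cone]
    change ‖_‖ ^ 3 < ‖_‖ ^ 2
    rw [fa_fr, fb_fr, norm_one, one_pow]
    exact pow_lt_one₀ (norm_nonneg _) hA three_ne_zero
  · rw [mem_down cB_cone]
    change _ ≠ 0 ∧ 1 + _ ^ 2 / _ ^ 3 ∈ slitPlane
    rw [fa_fr, fb_fr]
    refine ⟨exp_ne_zero _, one_add_slit ?_⟩
    rw [one_pow, ← exp_nat_mul, one_div, ← exp_neg]
    apply exp_mem_slit
    have : (-(((3 : ℕ) : ℂ) * x.2)).im = -3 * x.2.im := by simp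
    rw [this, abs_mul]
    norm_num
    linarith
  · rw [sU, mem_down cU_cone]
    exact exp_ne_zero _

/-- The parametrisation of `sA ∩ sB` by a convex set. -/
def eW (x : KW) : XX := pr ⟨fr x.1.1 (exp x.1.2) 1, (KW_fr x.2).1⟩

lemma eW_cont : Continuous eW :=
  pr_cont.comp (Continuous.subtype_mk (fr_cont (by fun_prop) (by fun_prop) (by fun_prop)) _)

/-- For surjectivity, a logarithm of `f₃²/f₂³` in the principal strip, divided by `-3`, is the
logarithm of `f₂` after rescaling to `f₃ = 1`. -/
lemma range_eW : range eW = sA ∩ sB := by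
  apply Subset.antisymm
  · rintro _ ⟨x, rfl⟩
    exact (KW_fr x.2).2
  rintro p ⟨hA, hB⟩
  have hY := Yf_ne hA
  have hw := wf_ne hB
  set q := Yf p ^ 2 / wf p ^ 3 with hq
  have hq1 : q = fb p.1.rep ^ 2 / fa p.1.rep ^ 3 := by
    have h1 : p.1.rep 1 ≠ 0 := hB.2
    have h2 : fa p.1.rep ≠ 0 := hB.1.1
    rw [hq, Yf, wf]
    field_simp
  have hqs : q ∈ slitPlane := by rw [hq1]; exact cAB_slit hA hB.1
  have hq0 : q ≠ 0 := slitPlane_ne_zero hqs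
  set α := -Complex.log q / 3 with hα
  have hα3 : exp α ^ 3 = q⁻¹ := by
    rw [← exp_nat_mul, hα, show ((3 : ℕ) : ℂ) * (-Complex.log q / 3) = -Complex.log q by
      push_cast; ring, exp_neg, exp_log hq0]
  set m := Yf p * exp α / wf p
  have hm : m ≠ 0 := div_ne_zero (mul_ne_zero hY (exp_ne_zero _)) hw
  have hm3 : m ^ 3 = Yf p := by
    simp only [m]
    rw [div_pow, mul_pow, hα3, hq]
    field_simp
  have e1 : exp (3 * Complex.log m) = Yf p := by
    rw [← hm3]
    have := exp_nat_mul (Complex.log m) 3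
    rw [exp_log hm] at this
    exact_mod_cast this
  obtain ⟨h, hp⟩ := liftA hA _ e1
  have e2 : wf p * exp (-2 * Complex.log m) = exp α := by
    have h2 : exp (-2 * Complex.log m) = (m ^ 2)⁻¹ := by
      rw [← exp_log hm, ← exp_nat_mul, ← exp_neg, exp_log hm]; congr 1; push_cast; ring
    have h3 : exp α ≠ 0 := exp_ne_zero _
    rw [h2, ← div_eq_mul_inv, div_eq_iff (pow_ne_zero _ hm)]
    have : exp α ^ 3 * Yf p ^ 2 = wf p ^ 3 := by rw [hα3, hq]; field_simp
    simp only [m]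
    field_simp
    linear_combination -this
  have hK : (Complex.log m, α) ∈ KW := by
    constructor
    · have h1 : ‖wf p * exp (-2 * Complex.log m)‖ < 1 := h
      rw [e2, norm_exp] at h1
      simpa using h1
    · have h3 : α.im = -(Complex.log q).im / 3 := by
        rw [hα]; simp
      change |α.im| < _
      rw [h3, abs_div, abs_neg, log_im]
      norm_num
      have := (abs_arg_le_pi q).lt_of_ne (fun h4 => ?_)
      · linarith
      · rcases abs_eq Real.pi_pos.le |>.1 h4 with h5 | h5
        · exact (mem_slitPlane_iff_arg.1 hqs).1 h5
        · have := neg_pi_lt_arg q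
          linarith
  refine ⟨⟨_, hK⟩, ?_⟩
  refine Eq.trans ?_ hp.symm
  change pr ⟨fr _ _ _, _⟩ = pr ⟨fr _ _ _, _⟩
  congr 2
  exact congrArg (fun a => fr (Complex.log m) a 1) e2.symm

lemma W_conn : IsPathConnected (sA ∩ sB) := by
  have : PathConnectedSpace KW := isPathConnected_iff_pathConnectedSpace.1
    (KW_convex.isPathConnected ⟨(0, -1), by simp [KW]; positivity⟩)
  rw [← range_eW]
  exact isPathConnected_range eW_cont

lemma range_eA : range eA = sA := by
  apply Subset.antisymm
  · rintro _ ⟨x, rfl⟩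
    change pr _ ∈ sA
    rw [sA, mem_down cA_cone]
    change ‖_‖ ^ 3 < ‖_‖ ^ 2
    rw [fa_fr, fb_fr, norm_one, one_pow]
    exact pow_lt_one₀ (norm_nonneg _) x.2 three_ne_zero
  · intro p hp
    obtain ⟨h, h1⟩ := liftA hp (Complex.log (Yf p) / 3) (by
      rw [mul_div_cancel₀ _ three_ne_zero, exp_log (Yf_ne hp)])
    exact ⟨_, h1.symm⟩

lemma range_eB : range eB = sB := by
  apply Subset.antisymm
  · rintro _ ⟨x, rfl⟩
    change pr _ ∈ sB
    refine ⟨?_, ?_⟩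
    · rw [mem_down cB_cone]
      change _ ≠ 0 ∧ 1 + _ ^ 2 / _ ^ 3 ∈ slitPlane
      rw [fa_fr, fb_fr, one_pow, div_one]
      exact ⟨one_ne_zero, x.2⟩
    · rw [sU, mem_down cU_cone]
      exact exp_ne_zero _
  · intro p hp
    obtain ⟨h, h1⟩ := liftB hp (Complex.log (wf p) / 2) (by
      rw [mul_div_cancel₀ _ two_ne_zero, exp_log (wf_ne hp)])
    exact ⟨_, h1.symm⟩

lemma p0_sA : p0 ∈ sA := by rw [← range_eA, ← eA_xA]; exact mem_range_self _
lemma p0_sB : p0 ∈ sB := by rw [← range_eB]; exact mem_range_self _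

lemma sU_eq : sU = sA ∪ sB := by
  ext p
  constructor
  · intro h
    rcases cA_union_cB (rep_fD p) with h1 | h1
    · exact Or.inl h1
    · exact Or.inr ⟨h1, h⟩
  · rintro (h | h)
    · exact sA_sub h
    · exact h.2

lemma sU_conn : IsPathConnected sU := by
  rw [sU_eq]
  refine IsPathConnected.union ?_ ?_ ⟨p0, p0_sA, p0_sB⟩
  · rw [← range_eA]; exact isPathConnected_range eA.continuous
  · rw [← range_eB]; exact isPathConnected_range eB.continuous

/-- The coordinate `x₁/x₀` on `N`. -/
def Xn (p : XX) : ℂ := p.1.rep 1 / p.1.rep 0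
/-- The coordinate `x₂/x₀` on `N`. -/
def Zn (p : XX) : ℂ := p.1.rep 2 / p.1.rep 0

lemma sN_ne {p : XX} (hp : p ∈ sN) : p.1.rep 0 ≠ 0 := by
  intro h
  have := hp.1
  rw [h, norm_zero] at this
  have := norm_nonneg (p.1.rep 1)
  linarith

lemma N_contOn (i : Fin 3) : ContinuousOn (fun p : XX => p.1.rep i / p.1.rep 0) sN := by
  intro p hp
  obtain ⟨v, hv⟩ := pr_quot.surjective p
  have hv0 : v.1 0 ≠ 0 := by
    have h1 : v.1 ∈ cN := (mem_down cN_cone v).1 (by rw [hv]; exact hp)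
    intro h
    have := h1.1
    rw [h, norm_zero] at this
    have := norm_nonneg (v.1 1)
    linarith
  subst hv
  have : ContinuousAt (fun v : Fin 3 → ℂ => v i / v 0) v.1 := by
    fun_prop (disch := assumption)
  refine (contAt_descend v this univ Filter.univ_mem ?_).continuousWithinAt
  intro w _ c hc
  simp only [Pi.smul_apply, smul_eq_mul]
  exact mul_div_mul_left _ _ hc

lemma liftN {p : XX} (hp : p ∈ sN) : ∃ h : (Xn p, Zn p) ∈ EN, p = eN ⟨_, h⟩ := by
  have h0 := sN_ne hp
  have hn : 0 < ‖p.1.rep 0‖ := norm_pos_iff.2 h0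
  obtain ⟨h1, h2⟩ := hp
  refine ⟨⟨?_, ?_⟩, ?_⟩
  · change 2 * ‖p.1.rep 1 / p.1.rep 0‖ < 1
    rw [norm_div, ← mul_div_assoc, div_lt_one hn]
    exact h1
  · change 2 * ‖p.1.rep 1 / p.1.rep 0 * (p.1.rep 2 / p.1.rep 0)‖ < 1
    rw [div_mul_div_comm, norm_div, ← mul_div_assoc, norm_mul (p.1.rep 0), ← pow_two,
      div_lt_one (by positivity)]
    exact h2
  · conv_lhs => rw [← pr_rep p]
    refine (pr_eq_iff _ _).2 ⟨p.1.rep 0, h0, ?_⟩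
    funext i
    fin_cases i
    · change p.1.rep 0 = p.1.rep 0 * 1
      rw [mul_one]
    · change p.1.rep 1 = p.1.rep 0 * (p.1.rep 1 / p.1.rep 0)
      rw [mul_div_cancel₀ _ h0]
    · change p.1.rep 2 = p.1.rep 0 * (p.1.rep 2 / p.1.rep 0)
      rw [mul_div_cancel₀ _ h0]

lemma eN_mem (x : EN) : eN x ∈ sN := by
  change pr _ ∈ sN
  rw [sN, mem_down cN_cone]
  change 2 * ‖x.1.1‖ < ‖(1 : ℂ)‖ ∧ 2 * ‖x.1.1 * x.1.2‖ < ‖(1 : ℂ)‖ ^ 2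
  rw [norm_one, one_pow]
  exact x.2

lemma sN_conn : IsPathConnected sN := by
  have : range eN = sN := by
    apply Subset.antisymm
    · rintro _ ⟨x, rfl⟩
      exact eN_mem x
    · intro p hp
      obtain ⟨h, h1⟩ := liftN hp
      exact ⟨_, h1.symm⟩
  rw [← this]
  exact isPathConnected_range eN.continuous

/-- Logarithmic coordinates `(log x₁, x₁x₂)`, at `x₀ = 1`, on `sU ∩ sN`. -/
def KN : Set (ℂ × ℂ) := {x | x.1.re < -Real.log 2 ∧ ‖x.2‖ < 1 / 2}

lemma KN_convex : Convex ℝ KN := by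
  have h1 : Convex ℝ {x : ℂ × ℂ | x.1.re < -Real.log 2} :=
    (convex_Iio (-Real.log 2)).linear_preimage (reLm.comp (LinearMap.fst ℝ ℂ ℂ))
  have h2 : Convex ℝ (Prod.snd ⁻¹' Metric.ball (0 : ℂ) (1 / 2) : Set (ℂ × ℂ)) :=
    (convex_ball _ _).linear_preimage (LinearMap.snd ℝ ℂ ℂ)
  have : KN = {x : ℂ × ℂ | x.1.re < -Real.log 2} ∩ Prod.snd ⁻¹' Metric.ball (0 : ℂ) (1 / 2) := by
    ext x; simp [KN]
  rw [this]; exact h1.inter h2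

lemma KN_EN (x : KN) : (exp x.1.1, x.1.2 * exp (-x.1.1)) ∈ EN := by
  obtain ⟨h1, h2⟩ := x.2
  constructor
  · change 2 * ‖exp x.1.1‖ < 1
    rw [norm_exp]
    have : Real.exp x.1.1.re < Real.exp (-Real.log 2) := Real.exp_lt_exp.2 h1
    rw [Real.exp_neg, Real.exp_log two_pos] at this
    linarith
  · change 2 * ‖exp x.1.1 * (x.1.2 * exp (-x.1.1))‖ < 1
    rw [mul_left_comm, ← exp_add, add_neg_cancel, exp_zero, mul_one]
    linarith

lemma UN_conn : IsPathConnected (sU ∩ sN) := by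
  have : PathConnectedSpace KN := isPathConnected_iff_pathConnectedSpace.1
    (KN_convex.isPathConnected ⟨(-(Real.log 2 + 1 : ℝ), 0), by
      refine ⟨?_, by norm_num⟩
      rw [neg_re, ofReal_re]; linarith⟩)
  have h : range (fun x : KN => eN ⟨_, KN_EN x⟩) = sU ∩ sN := by
    apply Subset.antisymm
    · rintro _ ⟨x, rfl⟩
      refine ⟨?_, eN_mem _⟩
      change pr _ ∈ sU
      rw [sU, mem_down cU_cone]
      exact exp_ne_zero x.1.1
    · rintro p ⟨hU, hN⟩
      obtain ⟨h, h1⟩ := liftN hN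
      have hX : Xn p ≠ 0 := div_ne_zero hU (sN_ne hN)
      refine ⟨⟨(Complex.log (Xn p), Xn p * Zn p), ?_, ?_⟩, ?_⟩
      · have h2 : 2 * ‖Xn p‖ < 1 := h.1
        change (Complex.log _).re < _
        rw [log_re, ← Real.log_inv]
        exact Real.log_lt_log (norm_pos_iff.2 hX) (by linarith)
      · have h2 : 2 * ‖Xn p * Zn p‖ < 1 := h.2
        change ‖Xn p * Zn p‖ < 1 / 2
        linarith
      · refine Eq.trans ?_ h1.symm
        refine congrArg eN (Subtype.ext (Prod.ext (exp_log hX) ?_))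
        change Xn p * Zn p * exp (-Complex.log (Xn p)) = Zn p
        rw [exp_neg, exp_log hX]
        field_simp
  rw [← h]
  exact isPathConnected_range (by fun_prop)

lemma cover_UN (p : XX) : p ∈ sU ∨ p ∈ sN := by
  by_cases h : p.1.rep 1 = 0
  · right
    have h1 : p.1.rep 0 ≠ 0 := by
      intro h0
      apply rep_fD p
      simp [fD, fa, fb, h, h0]
    change 2 * ‖p.1.rep 1‖ < ‖p.1.rep 0‖ ∧ 2 * ‖p.1.rep 1 * p.1.rep 2‖ < ‖p.1.rep 0‖ ^ 2
    have := norm_pos_iff.2 h1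
    rw [h, zero_mul, norm_zero, mul_zero]
    exact ⟨this, by positivity⟩
  · left; exact h

instance : PathConnectedSpace XX := by
  rw [pathConnectedSpace_iff_univ]
  have : (univ : Set XX) = sU ∪ sN := by
    ext p; simp [cover_UN p]
  rw [this]
  obtain ⟨p, hp⟩ := UN_conn.nonempty
  exact sU_conn.union sN_conn ⟨p, hp⟩

/-- The subgroup generated by the deck classes `T` and `S`. -/
def HH : Subgroup (FundamentalGroup XX p0) := Subgroup.closure {deckA.cls 1, deckB.cls 1}

lemma loops_U (γ : Path p0 p0) (hγ : ∀ t, γ t ∈ sU) : loopCls γ ∈ HH := by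
  refine gen_lemma (fun i => cond i sB sA) ?_ ?_ W_conn HH ?_ γ ?_
  · rintro (_ | _)
    exacts [sA_open, sB_open]
  · rintro (_ | _)
    exacts [p0_sA, p0_sB]
  · rintro (_ | _) γ hγ
    · obtain ⟨n, hn⟩ := loops_A γ hγ
      rw [hn, Deck.cls_zpow]
      exact HH.zpow_mem (Subgroup.subset_closure (by simp)) n
    · obtain ⟨n, hn⟩ := loops_B γ hγ
      rw [hn, Deck.cls_zpow]
      exact HH.zpow_mem (Subgroup.subset_closure (by simp)) n
  · intro t
    have := hγ t
    rw [sU_eq] at this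
    rcases this with h | h
    exacts [⟨false, h⟩, ⟨true, h⟩]

lemma loops_N {p : XX} (γ : Path p p) (hγ : ∀ t, γ t ∈ sN) : loopCls γ = 1 := by
  choose hm he using fun t => liftN (hγ t)
  have hX : Continuous fun t => Xn (γ t) := (N_contOn 1).comp_continuous γ.continuous hγ
  have hZ : Continuous fun t => Zn (γ t) := (N_contOn 2).comp_continuous γ.continuous hγ
  let x0 : EN := ⟨_, hm 0⟩
  let Γ : Path x0 x0 :=
    { toFun := fun t => ⟨_, hm t⟩
      continuous_toFun := by fun_prop
      source' := rfl
      target' := by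
        apply Subtype.ext
        simp only [x0, γ.source, γ.target] }
  have hp : p = eN x0 := by rw [← γ.source]; exact he 0
  have h6 := ((SimplyConnectedSpace.paths_homotopic Γ (Path.refl x0)).map eN).pathCast hp hp
  have h7 : γ.Homotopic (Path.refl _) := by
    convert h6 using 1
    · exact Path.ext (funext fun t => he t)
    · exact Path.ext (funext fun t => hp)
  exact loopCls_eq h7

/-- `T` and `S` generate: loops in `N` are trivial, so loops in `sU` generate. The base point is
moved into `sU ∩ sN` to apply `gen_lemma`. -/
lemma HH_top (g : FundamentalGroup XX p0) : g ∈ HH := by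
  obtain ⟨p1, hU, hN⟩ := UN_conn.nonempty
  obtain ⟨c, hc⟩ := sU_conn.joinedIn p0 (sA_sub p0_sA) p1 hU
  let ψ := FundamentalGroup.fundamentalGroupMulEquivOfPath c.symm
  have hψ (γ : Path p1 p1) : ψ (loopCls γ) = loopCls (c.trans (γ.trans c.symm)) := by
    change Path.Homotopic.Quotient.trans (Path.Homotopic.Quotient.symm
      (Path.Homotopic.Quotient.mk c.symm)) (Path.Homotopic.Quotient.trans
      (Path.Homotopic.Quotient.mk γ) (Path.Homotopic.Quotient.mk c.symm)) = _
    rw [← Path.Homotopic.Quotient.mk_symm, Path.symm_symm]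
    rfl
  obtain ⟨g', rfl⟩ := ψ.surjective g
  obtain ⟨γ, rfl⟩ := loopCls_surj g'
  have key := gen_lemma (fun i => cond i sN sU) ?_ ?_ UN_conn (HH.comap ψ.toMonoidHom) ?_ γ ?_
  · exact key
  · rintro (_ | _)
    exacts [sU_open, sN_open]
  · rintro (_ | _)
    exacts [hU, hN]
  · rintro (_ | _) γ hγ
    · rw [Subgroup.mem_comap]
      change ψ _ ∈ _
      rw [hψ]
      exact loops_U _ (Path.mem_trans hc (Path.mem_trans hγ fun t => hc _))
    · rw [loops_N γ hγ]; exact one_mem _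
  · intro t
    rcases cover_UN (γ t) with h | h
    exacts [⟨false, h⟩, ⟨true, h⟩]

end Zar

/-! ### Local root frames -/

namespace Zar
open Set Topology unitInterval Complex

/-- The free product `ℤ/2 * ℤ/3`. -/
abbrev GG : Type := Monoid.Coprod (Multiplicative (ZMod 2)) (Multiplicative (ZMod 3))

instance : TopologicalSpace GG := ⊥
instance : DiscreteTopology GG := ⟨rfl⟩

/-- The following data are indexed by `Bool`: `false` refers to the set `A` and the form `f₃`,
`true` to the set `B` and the form `f₂`. Here `tn` is the degree of the form. -/
def tn : Bool → ℕ
  | false => 3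
  | true => 2
/-- The generator of the factor of order `tn b`. -/
def tg : Bool → GG
  | false => Monoid.Coprod.inr (Multiplicative.ofAdd 1)
  | true => Monoid.Coprod.inl (Multiplicative.ofAdd 1)
/-- The form of type `b`. -/
def tf : Bool → (Fin 3 → ℂ) → ℂ
  | false => fb
  | true => fa
/-- The cone of type `b`. -/
def tc : Bool → Set (Fin 3 → ℂ)
  | false => cA
  | true => cB
/-- The primitive root of unity `exp (-2πi/n)`. The sign of the exponent is that of the deck
transformations, see `vA_δ`. -/
def tz (b : Bool) : ℂ := (exp (2 * Real.pi * Complex.I / tn b))⁻¹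

lemma tn_ne (b) : tn b ≠ 0 := by cases b <;> decide
lemma tn_ne' (b) : (tn b : ℂ) ≠ 0 := Nat.cast_ne_zero.2 (tn_ne b)

lemma tz_prim (b) : IsPrimitiveRoot (tz b) (tn b) :=
  (Complex.isPrimitiveRoot_exp (tn b) (tn_ne b)).inv

lemma tg_pow (b) : tg b ^ tn b = 1 := by
  cases b
  · change (Monoid.Coprod.inr (Multiplicative.ofAdd 1) : GG) ^ 3 = 1
    rw [← map_pow, ← map_one Monoid.Coprod.inr]
    congr 1
  · change (Monoid.Coprod.inl (Multiplicative.ofAdd 1) : GG) ^ 2 = 1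
    rw [← map_pow, ← map_one Monoid.Coprod.inl]
    congr 1

lemma tf_smul (b) (c : ℂ) (v) : tf b (c • v) = c ^ tn b * tf b v := by
  cases b
  exacts [fb_smul c v, fa_smul c v]
@[fun_prop] lemma tf_cont (b) : Continuous (tf b) := by
  cases b
  exacts [fb_cont, fa_cont]
lemma tc_cone (b) : IsCone (tc b) := by
  cases b
  exacts [cA_cone, cB_cone]
lemma tc_open (b) : IsOpen (tc b) := by
  cases b
  exacts [cA_open, cB_open]
lemma tc_tf {b v} (h : v ∈ tc b) : tf b v ≠ 0 := by
  cases b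
  exacts [cA_fb h, h.1]

open Classical in
/-- The homomorphism from the `n`-th roots of unity to `ℤ/2 * ℤ/3` sending `tz b` to `tg b`; the
value `1` elsewhere is not used. -/
def kap (b : Bool) (z : ℂ) : GG := if h : ∃ k : ℤ, z = tz b ^ k then tg b ^ h.choose else 1

lemma kap_zpow (b) (k : ℤ) : kap b (tz b ^ k) = tg b ^ k := by
  have h : ∃ m : ℤ, tz b ^ k = tz b ^ m := ⟨k, rfl⟩
  rw [kap, dif_pos h]
  have h1 := h.choose_spec
  set m := h.choose
  have hz : tz b ≠ 0 := (tz_prim b).ne_zero (tn_ne b)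
  have h2 : tz b ^ (m - k) = 1 := by
    rw [zpow_sub₀ hz, ← h1, div_self (zpow_ne_zero _ hz)]
  obtain ⟨d, hd⟩ := ((tz_prim b).zpow_eq_one_iff_dvd _).1 h2
  have : m = tn b * d + k := by omega
  rw [this, zpow_add, zpow_mul, zpow_natCast, tg_pow, one_zpow, one_mul]

lemma root_zpow {b} {z : ℂ} (h : z ^ tn b = 1) : ∃ k : ℤ, z = tz b ^ k := by
  have : NeZero (tn b) := ⟨tn_ne b⟩
  obtain ⟨i, -, hi⟩ := (tz_prim b).eq_pow_of_pow_eq_one h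
  exact ⟨i, by rw [zpow_natCast, hi]⟩

lemma kap_mul {b} {z w : ℂ} (hz : z ^ tn b = 1) (hw : w ^ tn b = 1) :
    kap b (z * w) = kap b z * kap b w := by
  obtain ⟨k, rfl⟩ := root_zpow hz
  obtain ⟨m, rfl⟩ := root_zpow hw
  have h0 : tz b ≠ 0 := (tz_prim b).ne_zero (tn_ne b)
  rw [← zpow_add₀ h0, kap_zpow, kap_zpow, kap_zpow, zpow_add]

lemma kap_one (b) : kap b 1 = 1 := by
  simpa using kap_zpow b 0

lemma kap_tz (b) : kap b (tz b) = tg b := by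
  simpa using kap_zpow b 1

lemma kap_cont (b) : ContinuousOn (kap b) {z | z ^ tn b = 1} := by
  have hf : {z : ℂ | z ^ tn b = 1}.Finite := by
    have : {z : ℂ | z ^ tn b = 1} ⊆ (Polynomial.nthRoots (tn b) (1 : ℂ)).toFinset := by
      intro z hz
      simpa [Polynomial.mem_nthRoots (Nat.pos_of_ne_zero (tn_ne b))] using hz
    exact (Finset.finite_toSet _).subset this
  have := hf.isDiscrete
  rw [continuousOn_iff_continuous_domRestrict]
  have : DiscreteTopology {z : ℂ | z ^ tn b = 1} := this.to_subtype
  exact continuous_of_discreteTopology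

/-- `l` is a frame of type `b` over `O`: a continuous `n`-th root of the inverse of the form of
type `b`, homogeneous of degree `-1`, on the cone over the open set `O`. -/
structure IsFr (b : Bool) (O : Set XX) (l : (Fin 3 → ℂ) → ℂ) : Prop where
  op : IsOpen O
  sub : O ⊆ down (tc b)
  cont : ∀ v : VV, pr v ∈ O → ContinuousAt l v.1
  smul : ∀ v : VV, pr v ∈ O → ∀ c : ℂ, c ≠ 0 → l (c • v.1) = c⁻¹ * l v.1
  pow : ∀ v : VV, pr v ∈ O → l v.1 ^ tn b * tf b v.1 = 1

lemma IsFr.mono {b O O' l} (h : IsFr b O l) (hO : IsOpen O') (hs : O' ⊆ O) : IsFr b O' l :=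
  ⟨hO, hs.trans h.sub, fun v hv => h.cont v (hs hv), fun v hv => h.smul v (hs hv),
    fun v hv => h.pow v (hs hv)⟩

lemma IsFr.ne {b O l} (h : IsFr b O l) (v : VV) (hv : pr v ∈ O) : l v.1 ≠ 0 := by
  intro h0
  have := h.pow v hv
  simp [h0, tn_ne] at this

lemma IsFr.root {b O l l'} (h : IsFr b O l) (h' : IsFr b O l') (v : VV) (hv : pr v ∈ O) :
    (l v.1 / l' v.1) ^ tn b = 1 := by
  have h1 := h.pow v hv
  have h2 := h'.pow v hv
  have h3 : tf b v.1 ≠ 0 := right_ne_zero_of_mul_eq_one h1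
  rw [div_pow, div_eq_one_iff_eq (pow_ne_zero _ (h'.ne v hv))]
  exact mul_right_cancel₀ h3 (h1.trans h2.symm)

/-- The element of `ℤ/2 * ℤ/3` by which two frames of the same type differ at a point. -/
def kk (b : Bool) (l l' : (Fin 3 → ℂ) → ℂ) (p : XX) : GG := kap b (l p.1.rep / l' p.1.rep)

lemma ratio_smul {b O l l'} (h : IsFr b O l) (h' : IsFr b O l') (v : VV) (hv : pr v ∈ O) (c : ℂ)
    (hc : c ≠ 0) : l (c • v.1) / l' (c • v.1) = l v.1 / l' v.1 := by
  rw [h.smul v hv c hc, h'.smul v hv c hc, mul_div_mul_left _ _ (inv_ne_zero hc)]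

lemma kk_pr {b O l l'} (h : IsFr b O l) (h' : IsFr b O l') (v : VV) (hv : pr v ∈ O) :
    kk b l l' (pr v) = kap b (l v.1 / l' v.1) := by
  obtain ⟨c, hc, h1⟩ := rep_pr v
  rw [kk, h1, ratio_smul h h' v hv c hc]

lemma kk_cont {b O l l'} (h : IsFr b O l) (h' : IsFr b O l') : ContinuousOn (kk b l l') O := by
  refine (kap_cont b).comp (f := fun p : XX => l p.1.rep / l' p.1.rep) ?_ ?_
  · intro p hp
    obtain ⟨v, rfl⟩ : ∃ v, pr v = p := ⟨_, pr_rep p⟩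
    refine (contAt_descend (f := fun v => l v / l' v) v
      ((h.cont v hp).div (h'.cont v hp) (h'.ne v hp)) O (h.op.mem_nhds hp)
      fun w hw c hc => ratio_smul h h' w hw c hc).continuousWithinAt
  · intro p hp
    exact h.root h' ⟨p.1.rep, rep_fD p⟩ (by rwa [pr_rep])

lemma kk_self {b O l} (h : IsFr b O l) {p} (hp : p ∈ O) : kk b l l p = 1 := by
  obtain ⟨v, rfl⟩ : ∃ v, pr v = p := ⟨_, pr_rep p⟩
  rw [kk_pr h h v hp, div_self (h.ne v hp), kap_one]

lemma kk_mul {b O l l' l''} (h : IsFr b O l) (h' : IsFr b O l') (h'' : IsFr b O l'') {p}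
    (hp : p ∈ O) : kk b l' l'' p * kk b l l' p = kk b l l'' p := by
  obtain ⟨v, rfl⟩ : ∃ v, pr v = p := ⟨_, pr_rep p⟩
  rw [kk_pr h h' v hp, kk_pr h h'' v hp, kk_pr h' h'' v hp,
    ← kap_mul (h'.root h'' v hp) (h.root h' v hp), mul_comm,
    div_mul_div_cancel₀ (h'.ne v hp)]

lemma tf_slit_open (b) (g : (Fin 3 → ℂ) → ℂ) (hg : Continuous g) :
    IsOpen {v | tf b v ≠ 0 ∧ g v / tf b v ∈ slitPlane} := by
  rw [isOpen_iff_mem_nhds]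
  rintro v ⟨h1, h2⟩
  have hc : ContinuousAt (fun v => g v / tf b v) v :=
    hg.continuousAt.div (tf_cont b).continuousAt h1
  filter_upwards [(tf_cont b).continuousAt.eventually_ne h1,
    hc.eventually (isOpen_slitPlane.mem_nhds h2)] with w h3 h4
  exact ⟨h3, h4⟩

lemma cpow_root (b) (z : ℂ) : (z ^ (1 / tn b : ℂ)) ^ tn b = z := by
  rw [one_div]; exact cpow_nat_inv_pow z (tn_ne b)

/-- Near a given vector a multiple `α xᵢ` of some coordinate is close to an `n`-th root of the
form, and the principal `n`-th root of their ratio corrects the error. -/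
lemma fr_exists (b) (p : XX) (hp : p ∈ down (tc b)) : ∃ O l, IsFr b O l ∧ p ∈ O := by
  obtain ⟨v0, rfl⟩ : ∃ v, pr v = p := ⟨_, pr_rep p⟩
  rw [mem_down (tc_cone b)] at hp
  have hf := tc_tf hp
  obtain ⟨i, hi⟩ : ∃ i, v0.1 i ≠ 0 := by
    by_contra! h
    exact ne_zero_of_fD v0.2 (funext h)
  obtain ⟨α, hα⟩ := IsAlgClosed.exists_pow_nat_eq (tf b v0.1 / v0.1 i ^ tn b)
    (Nat.pos_of_ne_zero (tn_ne b))
  have hα0 : α ≠ 0 := by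
    rintro rfl
    rw [zero_pow (tn_ne b)] at hα
    exact div_ne_zero hf (pow_ne_zero _ hi) hα.symm
  let S : Set (Fin 3 → ℂ) := tc b ∩ ({v | v i ≠ 0} ∩
    {v | tf b v ≠ 0 ∧ (α * v i) ^ tn b / tf b v ∈ slitPlane})
  have hrat : ∀ c : ℂ, c ≠ 0 → ∀ v : Fin 3 → ℂ,
      (α * (c • v) i) ^ tn b / tf b (c • v) = (α * v i) ^ tn b / tf b v := by
    intro c hc v
    rw [tf_smul, Pi.smul_apply, smul_eq_mul, mul_left_comm, mul_pow c,
      mul_div_mul_left _ _ (pow_ne_zero _ hc)]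
  have hS : IsCone S := by
    intro c hc v
    simp only [S, mem_inter_iff, mem_ofPred_eq, tc_cone b c hc v, hrat c hc v]
    simp [tf_smul, hc]
  have hSo : IsOpen S := (tc_open b).inter
    ((isOpen_ne_fun (by fun_prop) (by fun_prop)).inter (tf_slit_open b _ (by fun_prop)))
  refine ⟨down S, fun v => ((α * v i) ^ tn b / tf b v) ^ (1 / tn b : ℂ) / (α * v i),
    ⟨isOpen_down hS hSo, fun q hq => hq.1, ?_, ?_, ?_⟩, ?_⟩
  · intro v hv
    rw [mem_down hS] at hv
    obtain ⟨-, h1, h2, h3⟩ := hv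
    have hl : Continuous fun v : Fin 3 → ℂ => α * v i := by fun_prop
    exact ContinuousAt.div (ContinuousAt.cpow (ContinuousAt.div (hl.pow _).continuousAt
      (tf_cont b).continuousAt h2) continuousAt_const h3) hl.continuousAt (mul_ne_zero hα0 h1)
  · intro v hv c hc
    rw [hrat c hc, Pi.smul_apply, smul_eq_mul, mul_left_comm α, div_mul_eq_div_div_swap,
      div_eq_inv_mul _ c]
  · intro v hv
    rw [mem_down hS] at hv
    obtain ⟨-, h1, h2, h3⟩ := hv
    have h4 : α * v.1 i ≠ 0 := mul_ne_zero hα0 h1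
    rw [div_pow, cpow_root]
    field_simp
  · rw [mem_down hS]
    refine ⟨hp, hi, hf, ?_⟩
    rw [mul_pow, hα, div_mul_cancel₀ _ (pow_ne_zero _ hi), div_self hf]
    exact one_mem_slitPlane

/-- The overlap `A ∩ B`. -/
def WW : Set XX := down cA ∩ down cB

/-- The canonical frame of type `b` over the overlap. -/
def lam0 (b : Bool) (v : Fin 3 → ℂ) : ℂ := fa v * (fb v ^ 2 / fa v ^ 3) ^ (1 / tn b : ℂ) / fb v

lemma lam0_fr (b) : IsFr b WW (lam0 b) := by
  refine ⟨(isOpen_down cA_cone cA_open).inter (isOpen_down cB_cone cB_open), ?_, ?_, ?_, ?_⟩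
  · cases b
    exacts [inter_subset_left, inter_subset_right]
  · rintro v ⟨hA, hB⟩
    rw [mem_down cA_cone] at hA
    rw [mem_down cB_cone] at hB
    have := cAB_slit hA hB
    refine ContinuousAt.div (ContinuousAt.mul (by fun_prop) (ContinuousAt.cpow
      (ContinuousAt.div (by fun_prop) (by fun_prop) (pow_ne_zero _ hB.1)) continuousAt_const this))
      (by fun_prop) (cA_fb hA)
  · intro v _ c hc
    have : fb (c • v.1) ^ 2 / fa (c • v.1) ^ 3 = fb v.1 ^ 2 / fa v.1 ^ 3 := by
      rw [fa_smul, fb_smul, mul_pow, mul_pow, ← pow_mul, ← pow_mul]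
      exact mul_div_mul_left _ _ (pow_ne_zero _ hc)
    rw [lam0, lam0, this, fa_smul, fb_smul]
    field_simp
  · rintro v ⟨hA, hB⟩
    rw [mem_down cA_cone] at hA
    rw [mem_down cB_cone] at hB
    have h1 := cA_fb hA
    have h2 := hB.1
    rw [lam0, div_pow, mul_pow, cpow_root]
    cases b
    · simp only [tf, tn]; field_simp
    · simp only [tf, tn]; field_simp

end Zar

/-! ### The covering with group ℤ/2 * ℤ/3 -/

namespace Zar
open Set Topology unitInterval Complex

/-- A frame together with its type and its domain; these index the charts of the covering. -/
structure Frame where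
  typ : Bool
  O : Set XX
  lam : (Fin 3 → ℂ) → ℂ
  isFr : IsFr typ O lam

instance : Nonempty Frame := ⟨⟨true, _, _, lam0_fr true⟩⟩

open Classical in
/-- The transition function from chart `i` to chart `j`. Frames of different types only meet over
`WW`, where each is compared with the canonical frame of its type. -/
def coc (i j : Frame) (p : XX) : GG :=
  if i.typ = j.typ then kk i.typ i.lam j.lam p
  else (kk j.typ j.lam (lam0 j.typ) p)⁻¹ * kk i.typ i.lam (lam0 i.typ) p

lemma mem_WW {i j : Frame} (h : i.typ ≠ j.typ) {p : XX} (hi : p ∈ i.O) (hj : p ∈ j.O) :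
    p ∈ WW := by
  have h1 := i.isFr.sub hi
  have h2 := j.isFr.sub hj
  revert h h1 h2
  cases i.typ <;> cases j.typ <;> simp +contextual [tc, WW]

lemma IsFr.inter_left {b O O' l} (h : IsFr b O l) (h' : IsOpen O') : IsFr b (O ∩ O') l :=
  h.mono (h.op.inter h') inter_subset_left
lemma IsFr.inter_right {b O O' l} (h : IsFr b O' l) (h' : IsOpen O) : IsFr b (O ∩ O') l :=
  h.mono (h'.inter h.op) inter_subset_right

/-- Over `WW` every transition, also between frames of the same type, factors through the
canonical frames; this gives the cocycle condition. -/
lemma coc_WW (i j : Frame) {p : XX} (hi : p ∈ i.O) (hj : p ∈ j.O) (hW : p ∈ WW) :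
    coc i j p = (kk j.typ j.lam (lam0 j.typ) p)⁻¹ * kk i.typ i.lam (lam0 i.typ) p := by
  rw [coc]
  split_ifs with h
  · have hj' := j.isFr
    rw [← h] at hj' ⊢
    have oI := i.isFr.op
    have oJ := hj'.op
    have oW := (lam0_fr true).op
    rw [eq_inv_mul_iff_mul_eq]
    exact kk_mul (O := i.O ∩ (j.O ∩ WW)) (i.isFr.inter_left (oJ.inter oW))
      ((hj'.inter_left oW).inter_right oI) (((lam0_fr i.typ).inter_right oJ).inter_right oI)
      ⟨hi, hj, hW⟩
  · rfl

lemma coc_same {i j : Frame} (h : i.typ = j.typ) (p : XX) :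
    coc i j p = kk i.typ i.lam j.lam p := if_pos h

lemma coc_comp (i j k : Frame) {p : XX} (hi : p ∈ i.O) (hj : p ∈ j.O) (hk : p ∈ k.O) :
    coc j k p * coc i j p = coc i k p := by
  by_cases hW : p ∈ WW
  · rw [coc_WW i j hi hj hW, coc_WW j k hj hk hW, coc_WW i k hi hk hW]
    group
  · have h1 : i.typ = j.typ := by_contra fun h => hW (mem_WW h hi hj)
    have h2 : i.typ = k.typ := by_contra fun h => hW (mem_WW h hi hk)
    have hj' := j.isFr
    have hk' := k.isFr
    rw [coc_same h1, coc_same h2, coc_same (h1.symm.trans h2)]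
    rw [← h1] at hj' ⊢
    rw [← h2] at hk'
    have oI := i.isFr.op
    exact kk_mul (O := i.O ∩ (j.O ∩ k.O)) (i.isFr.inter_left (hj'.op.inter hk'.op))
      ((hj'.inter_left hk'.op).inter_right oI) ((hk'.inter_right hj'.op).inter_right oI)
      ⟨hi, hj, hk⟩

lemma coc_self (i : Frame) {p : XX} (hi : p ∈ i.O) : coc i i p = 1 := by
  rw [coc_same rfl, kk_self i.isFr hi]

lemma coc_cont (i j : Frame) : ContinuousOn (coc i j) (i.O ∩ j.O) := by
  have oI := i.isFr.op
  have oJ := j.isFr.op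
  by_cases h : i.typ = j.typ
  · have hj' := j.isFr
    rw [← h] at hj'
    have : coc i j = kk i.typ i.lam j.lam := funext fun p => coc_same h p
    rw [this]
    exact kk_cont (i.isFr.inter_left oJ) (hj'.inter_right oI)
  · have hs : i.O ∩ j.O ⊆ WW := fun p hp => mem_WW h hp.1 hp.2
    have : coc i j = fun p => (kk j.typ j.lam (lam0 j.typ) p)⁻¹ *
      kk i.typ i.lam (lam0 i.typ) p := funext fun p => if_neg h
    rw [this]
    exact ((kk_cont (j.isFr.inter_right oI) ((lam0_fr _).mono (oI.inter oJ) hs)).inv).mul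
      (kk_cont (i.isFr.inter_left oJ) ((lam0_fr _).mono (oI.inter oJ) hs))

lemma down_tc (p : XX) : ∃ b, p ∈ down (tc b) := by
  rcases cA_union_cB (rep_fD p) with h | h
  exacts [⟨false, h⟩, ⟨true, h⟩]

lemma Frame.exists_mem (b) {p : XX} (hp : p ∈ down (tc b)) : ∃ i : Frame, i.typ = b ∧ p ∈ i.O := by
  obtain ⟨O, l, h, hp⟩ := fr_exists b p hp
  exact ⟨⟨b, O, l, h⟩, rfl, hp⟩

/-- The covering with fibre `ℤ/2 * ℤ/3`. The transitions are left multiplications. -/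
def atlas : FiberBundleCore Frame XX GG where
  baseSet := Frame.O
  isOpen_baseSet i := i.isFr.op
  indexAt p := Classical.epsilon fun i : Frame => p ∈ i.O
  mem_baseSet_at p := by
    obtain ⟨b, hb⟩ := down_tc p
    obtain ⟨i, -, hi⟩ := Frame.exists_mem b hb
    exact Classical.epsilon_spec (p := fun i : Frame => p ∈ i.O) ⟨i, hi⟩
  coordChange i j p y := coc i j p * y
  coordChange_self i p hp y := by rw [coc_self i hp, one_mul]
  continuousOn_coordChange i j :=
    ((coc_cont i j).comp continuousOn_fst fun x hx => hx.1).mul continuousOn_snd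
  coordChange_comp i j k p hp y := by
    rw [← mul_assoc, coc_comp i j k hp.1.1 hp.1.2 hp.2]

lemma atlas_cov : IsCoveringMap (Bundle.TotalSpace.proj : atlas.TotalSpace → XX) :=
  FiberBundle.isCoveringMap (F := GG) (E := atlas.Fiber)

/-- The point of the covering with coordinate `y` in the chart `i`. -/
def pt (i : Frame) (p : XX) (y : GG) : atlas.TotalSpace :=
  ⟨p, (coc i (atlas.indexAt p) p * y : GG)⟩

lemma pt_eq {i j : Frame} {p : XX} (hi : p ∈ i.O) (hj : p ∈ j.O) (y : GG) :
    pt i p y = pt j p (coc i j p * y) := by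
  rw [pt, pt, ← mul_assoc, coc_comp i j _ hi hj (atlas.mem_baseSet_at p)]

lemma pt_inj {i : Frame} {p : XX} {y y' : GG} (h : pt i p y = pt i p y') : y = y' := by
  have : (coc i (atlas.indexAt p) p * y : GG) = coc i (atlas.indexAt p) p * y' := by
    exact eq_of_heq (Bundle.TotalSpace.mk.inj h).2
  exact mul_left_cancel this

lemma pt_cont (i : Frame) : ContinuousOn (fun x : XX × GG => pt i x.1 x.2) (i.O ×ˢ univ) := by
  have h := (atlas.localTriv i).toOpenPartialHomeomorph.continuousOn_symm
  rw [(atlas.localTriv i).target_eq] at h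
  exact h

/-- The point over `pr v` determined by a vector `v` with `tf i.typ v = 1` and a group element `g`:
the vector serves as a frame with value `1` at `v`, and `g` is the coordinate in that frame. -/
def lft (i : Frame) (v : VV) (g : GG) : atlas.TotalSpace :=
  pt i (pr v) (kap i.typ (i.lam v.1)⁻¹ * g)

lemma inv_root (i : Frame) {v : VV} (hv : pr v ∈ i.O) (h1 : tf i.typ v.1 = 1) :
    (i.lam v.1)⁻¹ ^ tn i.typ = 1 := by
  have := i.isFr.pow v hv
  rw [h1, mul_one] at this
  rw [inv_pow, this, inv_one]

lemma kap_kk {b O l l'} (h : IsFr b O l) (h' : IsFr b O l') (v : VV) (hv : pr v ∈ O)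
    (h1 : tf b v.1 = 1) : kk b l l' (pr v) * kap b (l v.1)⁻¹ = kap b (l' v.1)⁻¹ := by
  rw [kk_pr h h' v hv, ← kap_mul (h.root h' v hv) (inv_root ⟨b, O, l, h⟩ hv h1)]
  congr 1
  have := h.ne v hv
  field_simp

lemma lft_indep {i j : Frame} (h : i.typ = j.typ) {v : VV} (hi : pr v ∈ i.O) (hj : pr v ∈ j.O)
    (h1 : tf i.typ v.1 = 1) (g : GG) : lft i v g = lft j v g := by
  have hj' := j.isFr
  rw [← h] at hj'
  rw [lft, lft, pt_eq hi hj, coc_same h, ← mul_assoc, ← h]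
  rw [kap_kk (O := i.O ∩ j.O) (i.isFr.inter_left hj'.op) (hj'.inter_right i.isFr.op) v ⟨hi, hj⟩ h1]

/-- Multiplying the vector by the root of unity `tz` multiplies the group element by `tg`. -/
lemma lft_smul (i : Frame) {v w : VV} (hi : pr v ∈ i.O) (h1 : tf i.typ v.1 = 1)
    (hw : w.1 = tz i.typ • v.1) (g : GG) : lft i w g = lft i v (tg i.typ * g) := by
  have hz : tz i.typ ≠ 0 := (tz_prim _).ne_zero (tn_ne _)
  have hp : pr w = pr v := (pr_eq_iff _ _).2 ⟨_, hz, hw⟩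
  have hr := inv_root i hi h1
  rw [lft, lft, hp, hw, i.isFr.smul v hi _ hz, mul_inv, inv_inv, ← mul_assoc, mul_comm (tz _),
    kap_mul hr (tz_prim _).pow_eq_one, kap_tz]

/-- A chosen chart of type `b` around a point. -/
def frAt (b : Bool) (p : XX) : Frame := Classical.epsilon fun i : Frame => i.typ = b ∧ p ∈ i.O

lemma frAt_spec {b} {p : XX} (hp : p ∈ down (tc b)) : (frAt b p).typ = b ∧ p ∈ (frAt b p).O :=
  Classical.epsilon_spec (p := fun i : Frame => i.typ = b ∧ p ∈ i.O) (Frame.exists_mem b hp)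

/-- The point `lft` for a chosen chart of type `b`; any other chart gives the same point when
`tf b v = 1`, see `Lft_eq`. -/
def Lft (b : Bool) (v : VV) (g : GG) : atlas.TotalSpace := lft (frAt b (pr v)) v g

lemma Lft_eq {i : Frame} {v : VV} (hv : pr v ∈ i.O) (h1 : tf i.typ v.1 = 1) (g : GG) :
    Lft i.typ v g = lft i v g := by
  have hs := frAt_spec (i.isFr.sub hv)
  exact lft_indep hs.1 hs.2 hv (by rw [hs.1]; exact h1) g

lemma Lft_cont {T : Type*} [TopologicalSpace T] (b : Bool) (v : T → VV) (hv : Continuous v)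
    (h1 : ∀ t, tf b (v t).1 = 1) (h2 : ∀ t, (v t).1 ∈ tc b) (g : GG) :
    Continuous fun t => Lft b (v t) g := by
  rw [continuous_iff_continuousAt]
  intro t0
  obtain ⟨i, rfl, hi⟩ := Frame.exists_mem b ((mem_down (tc_cone b) (v t0)).2 (h2 t0))
  have hO : ∀ᶠ t in 𝓝 t0, pr (v t) ∈ i.O :=
    (pr_cont.comp hv).continuousAt.eventually (i.isFr.op.mem_nhds hi)
  have : ContinuousAt (fun t => lft i (v t) g) t0 := by
    have hl : ContinuousAt (fun t => (i.lam (v t).1)⁻¹) t0 :=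
      (ContinuousAt.comp (f := fun t => (v t).1) (i.isFr.cont _ hi)
        (by fun_prop)).inv₀ (i.isFr.ne _ hi)
    have hk : ContinuousAt (fun t => kap i.typ (i.lam (v t).1)⁻¹) t0 := by
      refine ((kap_cont i.typ) _ (inv_root i hi (h1 t0))).tendsto.comp ?_
      refine tendsto_nhdsWithin_iff.2 ⟨hl, ?_⟩
      filter_upwards [hO] with t ht
      exact inv_root i ht (h1 t)
    have hpt : ContinuousAt (fun x : XX × GG => pt i x.1 x.2)
        (pr (v t0), kap i.typ (i.lam (v t0).1)⁻¹ * g) :=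
      (pt_cont i).continuousAt ((i.isFr.op.prod isOpen_univ).mem_nhds ⟨hi, mem_univ _⟩)
    exact ContinuousAt.comp (f := fun t => (pr (v t), kap i.typ (i.lam (v t).1)⁻¹ * g)) hpt
      ((pr_cont.comp hv).continuousAt.prodMk (hk.mul continuousAt_const))
  refine this.congr ?_
  filter_upwards [hO] with t ht
  exact (Lft_eq ht (h1 t) g).symm

lemma Lft_smul {b} {v w : VV} (hv : v.1 ∈ tc b) (h1 : tf b v.1 = 1)
    (hw : w.1 = tz b • v.1) (g : GG) : Lft b w g = Lft b v (tg b * g) := by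
  obtain ⟨i, rfl, hi⟩ := Frame.exists_mem b ((mem_down (tc_cone b) v).2 hv)
  have hz : tz i.typ ≠ 0 := (tz_prim _).ne_zero (tn_ne _)
  have hp : pr w = pr v := (pr_eq_iff _ _).2 ⟨_, hz, hw⟩
  rw [Lft_eq hi h1, ← lft_smul i hi h1 hw]
  refine Lft_eq (hp ▸ hi) ?_ g
  rw [hw, tf_smul, (tz_prim _).pow_eq_one, one_mul, h1]

lemma Lft_base {b} {v : VV} (hW : pr v ∈ WW) (hb : tf b v.1 = 1)
    (hl : lam0 b v.1 = 1) (g : GG) :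
    Lft b v g = pt ⟨b, WW, lam0 b, lam0_fr b⟩ (pr v) g := by
  have := Lft_eq (i := ⟨b, WW, lam0 b, lam0_fr b⟩) hW hb g
  rw [this, lft]
  simp only
  rw [hl, inv_one, kap_one, one_mul]

end Zar

/-! ### Monodromy and the isomorphism -/

namespace Zar
open Set Topology unitInterval Complex

lemma EA_cA (x : EA) : fr x.1.1 x.1.2 1 ∈ cA := by
  have hx : ‖x.1.2‖ < 1 := x.2
  simpa [cA] using pow_lt_one₀ (norm_nonneg _) hx three_ne_zero

lemma EB_cB (x : EB) : fr x.1.1 1 x.1.2 ∈ cB := by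
  have hx : 1 + x.1.2 ^ 2 ∈ slitPlane := x.2
  simpa [cB] using hx

/-- The vector with `f₃ = 1` that a point of `EA` stands for. -/
def vA (x : EA) : VV := ⟨fr x.1.1 x.1.2 1, EA_fD x.2⟩
/-- The vector with `f₂ = 1` that a point of `EB` stands for. -/
def vB (x : EB) : VV := ⟨fr x.1.1 1 x.1.2, EB_fD x.2⟩

lemma vA_fb (x : EA) : tf false (vA x).1 = 1 := fb_fr x.1.1 x.1.2 1
lemma vB_fa (x : EB) : tf true (vB x).1 = 1 := fa_fr x.1.1 1 x.1.2

lemma vA_cont : Continuous vA :=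
  Continuous.subtype_mk (fr_cont (by fun_prop) (by fun_prop) (by fun_prop)) _
lemma vB_cont : Continuous vB :=
  Continuous.subtype_mk (fr_cont (by fun_prop) (by fun_prop) (by fun_prop)) _

lemma p0_WW : p0 ∈ WW := ⟨p0_sA, p0_sB.1⟩

lemma lam0_A : lam0 false (vA xA).1 = 1 := by
  have h : (64 : ℂ) ^ (1 / 3 : ℂ) = 4 := by
    have := pow_cpow_nat_inv (x := 4) (n := 3) (by norm_num) (by simp [ofNat_arg]; positivity)
      (by simp [ofNat_arg]; positivity)
    rw [← this]; norm_num
  simp only [lam0, vA, fa_fr, fb_fr, tn, xA]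
  norm_num [h]

lemma lam0_B : lam0 true (vB xB).1 = 1 := by
  have h : (64 : ℂ) ^ (1 / 2 : ℂ) = 8 := by
    have := pow_cpow_nat_inv (x := 8) (n := 2) (by norm_num) (by simp [ofNat_arg]; positivity)
      (by simp [ofNat_arg]; positivity)
    rw [← this]; norm_num
  simp only [lam0, vB, fa_fr, fb_fr, tn, xB]
  norm_num [h]

/-- The points of the fibre over the base point, labelled by the elements of `ℤ/2 * ℤ/3`. -/
def PP (g : GG) : (Bundle.TotalSpace.proj : atlas.TotalSpace → XX) ⁻¹' {p0} :=
  ⟨pt ⟨true, WW, lam0 true, lam0_fr true⟩ p0 g, rfl⟩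

lemma PP_inj : Injective PP := fun _ _ h => pt_inj (congrArg Subtype.val h)

lemma PP_B (g : GG) : Lft true (vB xB) g = (PP g).1 :=
  Lft_base (b := true) (v := vB xB) p0_WW (vB_fa _) lam0_B g

lemma PP_A (g : GG) : Lft false (vA xA) g = (PP g).1 := by
  have h0 : pr (vA xA) = p0 := eA_xA
  rw [Lft_base (b := false) (v := vA xA) (h0 ▸ p0_WW) (vA_fb _) lam0_A g, h0]
  rw [pt_eq (j := ⟨true, WW, lam0 true, lam0_fr true⟩) p0_WW p0_WW, coc_WW _ _ p0_WW p0_WW p0_WW]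
  simp only
  rw [kk_self (lam0_fr _) p0_WW, kk_self (lam0_fr _) p0_WW]
  simp [PP]

lemma vA_δ : (vA (δA 1 xA)).1 = tz false • (vA xA).1 := by
  have h := fr_add xA.1.1 (2 * Real.pi * Complex.I / 3) xA.1.2 1
  have h3 : exp (-3 * (2 * Real.pi * Complex.I / 3)) = 1 := by
    rw [exp_eq_one_iff]; exact ⟨-1, by push_cast; ring⟩
  rw [h3, one_mul, exp_neg] at h
  simpa [vA, δA, tz, tn] using h

lemma vB_δ : (vB (δB 1 xB)).1 = tz true • (vB xB).1 := by
  have h := fr_add xB.1.1 (Real.pi * Complex.I) 1 xB.1.2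
  have h3 : exp (-2 * (Real.pi * Complex.I)) = 1 := by
    rw [exp_eq_one_iff]; exact ⟨-1, by push_cast; ring⟩
  have h4 : (2 * Real.pi * Complex.I / 2 : ℂ) = Real.pi * Complex.I := by ring
  rw [h3, one_mul, exp_neg] at h
  simpa [vB, δB, tz, tn, h4] using h

/-- Monodromy of a deck loop, computed from a lift of the contractible chart. -/
lemma mono_deck {E : Type} [TopologicalSpace E] [ContractibleSpace E] (A : Deck E p0)
    (F : E → atlas.TotalSpace) (hF : Continuous F) (hpr : ∀ x, (F x).proj = A.e x)
    {a b : (Bundle.TotalSpace.proj : atlas.TotalSpace → XX) ⁻¹' {p0}}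
    (ha : F A.x0 = a.1) (hb : F (A.δ 1 A.x0) = b.1) :
    atlas_cov.monodromy (A.cls 1 : FundamentalGroup XX p0) a = b := by
  let D : Path A.x0 (A.δ 1 A.x0) := PathConnectedSpace.somePath _ _
  rw [← A.cls_eq 1 D]
  refine atlas_cov.monodromy_eq_of_map_eq
    (Path.Homotopic.Quotient.mk ((D.map hF).cast ha.symm hb.symm)) ?_
  refine congrArg Path.Homotopic.Quotient.mk ?_
  exact Path.ext (funext fun t => hpr _)

/-- The monodromy of `T`. -/
lemma mono_A (g : GG) : atlas_cov.monodromy (deckA.cls 1) (PP g) = PP (tg false * g) := by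
  refine mono_deck deckA (fun x => Lft false (vA x) g)
    (Lft_cont false vA vA_cont vA_fb EA_cA g) (fun x => rfl) (PP_A g) ?_
  rw [← PP_A]
  exact Lft_smul (b := false) (v := vA xA) (EA_cA xA) (vA_fb _) vA_δ g

/-- The monodromy of `S`. -/
lemma mono_B (g : GG) : atlas_cov.monodromy (deckB.cls 1) (PP g) = PP (tg true * g) := by
  refine mono_deck deckB (fun x => Lft true (vB x) g)
    (Lft_cont true vB vB_cont vB_fa EB_cB g) (fun x => rfl) (PP_B g) ?_
  rw [← PP_B]
  exact Lft_smul (b := true) (v := vB xB) (EB_cB xB) (vB_fa _) vB_δ g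

/-- The homomorphism out of `ℤ/n` given by an element `h` with `h ^ n = 1`. -/
def cyc {H : Type*} [Group H] (n : ℕ) (h : H) (hn : h ^ n = 1) : Multiplicative (ZMod n) →* H :=
  AddMonoidHom.toMultiplicativeLeft (ZMod.lift n ⟨zmultiplesHom (Additive H) (Additive.ofMul h), by
    simpa [← ofMul_pow] using hn⟩)

lemma cyc_one {H : Type*} [Group H] (n : ℕ) (h : H) (hn : h ^ n = 1) :
    cyc n h hn (Multiplicative.ofAdd 1) = h := by
  have := ZMod.lift_coe n (⟨zmultiplesHom (Additive H) (Additive.ofMul h), by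
    simpa [← ofMul_pow] using hn⟩ : {f : ℤ →+ Additive H // f n = 0}) 1
  simp only [Int.cast_one, zmultiplesHom_apply, one_smul] at this
  exact this

lemma S_pow : deckB.cls 1 ^ 2 = 1 := by
  rw [← relB, deckB.cls_zpow 2]; rfl
lemma T_pow : deckA.cls 1 ^ 3 = 1 := by
  rw [← relB, ← relAB, deckA.cls_zpow 3]; rfl

/-- The homomorphism from `ℤ/2 * ℤ/3` that sends the generators to `S` and `T`. -/
def phi : GG →* FundamentalGroup XX p0 :=
  Monoid.Coprod.lift (cyc 2 (deckB.cls 1) S_pow) (cyc 3 (deckA.cls 1) T_pow)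

lemma phi_tgB : phi (tg true) = deckB.cls 1 := by
  rw [phi, tg, Monoid.Coprod.lift_apply_inl, cyc_one]
lemma phi_tgA : phi (tg false) = deckA.cls 1 := by
  rw [phi, tg, Monoid.Coprod.lift_apply_inr, cyc_one]

lemma phi_surj : Surjective phi := by
  intro g
  have h : HH ≤ phi.range := by
    rw [HH, Subgroup.closure_le]
    rintro x (rfl | rfl)
    exacts [⟨_, phi_tgA⟩, ⟨_, phi_tgB⟩]
  exact h (HH_top g)

lemma zmod_pow (n : ℕ) [NeZero n] (x : Multiplicative (ZMod n)) :
    ∃ k : ℕ, x = Multiplicative.ofAdd 1 ^ k := by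
  refine ⟨(Multiplicative.toAdd x).val, ?_⟩
  rw [← ofAdd_nsmul]; simp

lemma gen_pow (b : Bool) (k : ℕ) (x : GG) :
    atlas_cov.monodromyPerm p0 (phi (tg b ^ k)) (PP x) = PP (tg b ^ k * x) := by
  induction k generalizing x with
  | zero => rw [pow_zero, map_one, map_one, one_mul]; rfl
  | succ k ih =>
    rw [pow_succ (tg b), map_mul, map_mul, Equiv.Perm.mul_apply]
    have : atlas_cov.monodromyPerm p0 (phi (tg b)) (PP x) = PP (tg b * x) := by
      cases b
      · rw [phi_tgA]; exact mono_A x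
      · rw [phi_tgB]; exact mono_B x
    rw [this, ih, mul_assoc]

/-- The monodromy of `phi g` is left multiplication by `g` on the labels of the fibre. -/
lemma mono_phi (g x : GG) : atlas_cov.monodromyPerm p0 (phi g) (PP x) = PP (g * x) := by
  induction g using Monoid.Coprod.induction_on generalizing x with
  | inl m =>
    obtain ⟨k, rfl⟩ := zmod_pow 2 m
    rw [map_pow]; exact gen_pow true k x
  | inr m =>
    obtain ⟨k, rfl⟩ := zmod_pow 3 m
    rw [map_pow]; exact gen_pow false k x
  | mul g h ihg ihh =>
    rw [map_mul, map_mul, Equiv.Perm.mul_apply, ihh, ihg, mul_assoc]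

lemma phi_inj : Injective phi := by
  intro g h hgh
  have h1 := mono_phi g 1
  rw [hgh, mono_phi h 1, mul_one, mul_one] at h1
  exact (PP_inj h1).symm

end Zar

/-- There is an irreducible sextic of torus type (Zariski's six-cuspidal sextic) whose
fundamental group is the free product `(ℤ/2) ∗ (ℤ/3)`. -/
theorem stmt4 :
    ∃ f2 f3 : MvPolynomial (Fin 3) ℂ,
      f2.IsHomogeneous 2 ∧ f3.IsHomogeneous 3 ∧ Irreducible (f2 ^ 3 + f3 ^ 2) ∧
      ∀ p : CurveComplement (f2 ^ 3 + f3 ^ 2),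
        Nonempty (FundamentalGroup (CurveComplement (f2 ^ 3 + f3 ^ 2)) p ≃*
          Monoid.Coprod (Multiplicative (ZMod 2)) (Multiplicative (ZMod 3))) := by
  refine ⟨zq, zc, zq_hom, zc_hom, irred_F, fun p => ⟨?_⟩⟩
  exact (FundamentalGroup.fundamentalGroupMulEquivOfPathConnected p Zar.p0).trans
    (MulEquiv.ofBijective Zar.phi ⟨Zar.phi_inj, Zar.phi_surj⟩).symm
end
end

section
/- If C = V(F) ⊂ ℂP² is an irreducible plane sextic of torus type (F = f₂³ + f₃² for some homogeneous f₂, f₃ of degrees 2 and 3), then the fundamental group π₁(ℂP² ∖ C) is infinite. -/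
/-!
Write `F = f₂³ + f₃²` and `X = ℂP² ∖ V(F)`. The Milnor fibre `M = {F = 1} ⊂ ℂ³` is a six-fold
covering of `X` (`isCoveringMap_milnorProj`), and `(f₂, f₃)` maps it to the affine elliptic curve
`E = {u³ + v² = 1}`. The Fermat cubic `E' = {p³ + q³ = 2}` is a three-fold covering of `E` via
`(p, q) ↦ (pq, (q³ - p³) / 2)` (`isCoveringMap_isogeny`), and `p + q` is a nowhere vanishing function
on `E'`, since it divides `p³ + q³`.

By irreducibility and the Nullstellensatz there is a point of `V(F)` at which `f₂ ≠ 0`. A line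
through it that is not contained in the curve meets it there with some multiplicity `k > 0`, and in
terms of a sixth root `σ` of the coordinate on the line one finds (`exists_local_model`) continuous
`A, P, Q, L` near `σ = 0` with `F(A) = σ^(6k)`, `PQ = f₂(A)`, `P³ = σ^(3k) - f₃(A)`,
`Q³ = σ^(3k) + f₃(A)` and `P + Q = exp L`. On a small circle in the `σ`-plane, `σ⁻ᵏ A(σ)` is then a
loop in `M` whose image in `E` lifts to the loop `σ⁻ᵏ (P, Q)` in `E'`, on which
`p + q = σ⁻ᵏ exp (L σ)` has winding number `-k ≠ 0`.

Consequently the loops in `X` obtained by running `n` times around that circle are pairwise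
non-homotopic: a homotopy lifts to `M`, maps to `E`, lifts to `E'`, maps to `ℂ ∖ {0}` by `p + q`, and
lifts along `exp`, where the endpoints differ (`log_endpoint_eq`). As `X` is path connected
(`joined_toComplement`), the choice of base point is irrelevant.
-/

open MvPolynomial Function

noncomputable section

/-- A sextic `F` is of torus type if `F = f₂³ + f₃²` with `f₂, f₃` homogeneous of
degrees `2` and `3`. -/
def IsTorusType (F : MvPolynomial (Fin 3) ℂ) : Prop :=
  ∃ f2 f3 : MvPolynomial (Fin 3) ℂ,
    f2.IsHomogeneous 2 ∧ f3.IsHomogeneous 3 ∧ F = f2 ^ 3 + f3 ^ 2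

/-! ### Homogeneous polynomials and points of the complement -/

theorem eval_smul_of_isHomogeneous {F : MvPolynomial (Fin 3) ℂ} {n : ℕ} (hF : F.IsHomogeneous n)
    (a : ℂ) (y : Fin 3 → ℂ) : eval (a • y) F = a ^ n * eval y F := by
  rw [eval_eq, eval_eq, Finset.mul_sum]
  refine Finset.sum_congr rfl fun d hd ↦ ?_
  have hd' : ∑ i ∈ d.support, d i = n := by
    have := hF (mem_support_iff.mp hd)
    simpa [Finsupp.weight_apply, Finsupp.sum] using this
  simp only [Pi.smul_apply, smul_eq_mul, mul_pow, Finset.prod_mul_distrib,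
    Finset.prod_pow_eq_pow_sum, hd']
  ring

theorem continuous_eval_point (F : MvPolynomial (Fin 3) ℂ) :
    Continuous fun y : Fin 3 → ℂ ↦ eval y F :=
  MvPolynomial.continuous_eval F

theorem ne_zero_of_eval_ne_zero {F : MvPolynomial (Fin 3) ℂ} (hF : F.IsHomogeneous 6)
    {y : Fin 3 → ℂ} (hy : eval y F ≠ 0) : y ≠ 0 := by
  rintro rfl
  apply hy
  simpa using eval_smul_of_isHomogeneous hF 0 0

theorem mk_notMem_zeroLocus {F : MvPolynomial (Fin 3) ℂ} (hF : F.IsHomogeneous 6)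
    {y : Fin 3 → ℂ} (hy0 : y ≠ 0) (hy : eval y F ≠ 0) :
    (Projectivization.mk ℂ y hy0 : CP2) ∉ _root_.zeroLocus F := by
  obtain ⟨a, ha⟩ := Projectivization.exists_smul_eq_mk_rep ℂ y hy0
  change ¬ eval _ F = 0
  rw [← ha, Units.smul_def, eval_smul_of_isHomogeneous hF]
  exact mul_ne_zero (pow_ne_zero _ a.ne_zero) hy

/-- The point `[y]` of `ℂP² ∖ V(F)` defined by a vector `y` with `F(y) ≠ 0`. -/
def toComplement {F : MvPolynomial (Fin 3) ℂ} (hF : F.IsHomogeneous 6)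
    (y : {y : Fin 3 → ℂ // eval y F ≠ 0}) : CurveComplement F :=
  ⟨Projectivization.mk ℂ y.1 (ne_zero_of_eval_ne_zero hF y.2),
    mk_notMem_zeroLocus hF _ y.2⟩

theorem continuous_projectivization_mk :
    Continuous fun v : {v : Fin 3 → ℂ // v ≠ 0} ↦ (Projectivization.mk ℂ v.1 v.2 : CP2) :=
  continuous_quotient_mk' (s := projectivizationSetoid ℂ (Fin 3 → ℂ))

theorem continuous_toComplement {F : MvPolynomial (Fin 3) ℂ} (hF : F.IsHomogeneous 6) :
    Continuous (toComplement hF) :=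
  (continuous_projectivization_mk.comp
    (continuous_subtype_val.subtype_mk fun y ↦ ne_zero_of_eval_ne_zero hF y.2)).subtype_mk _

theorem toComplement_surjective {F : MvPolynomial (Fin 3) ℂ} (hF : F.IsHomogeneous 6) :
    Surjective (toComplement hF) :=
  fun x ↦ ⟨⟨x.1.rep, x.2⟩, Subtype.ext (Projectivization.mk_rep x.1)⟩

theorem toComplement_eq_iff {F : MvPolynomial (Fin 3) ℂ} (hF : F.IsHomogeneous 6)
    (y z : {y : Fin 3 → ℂ // eval y F ≠ 0}) :
    toComplement hF y = toComplement hF z ↔ ∃ a : ℂ, a • z.1 = y.1 := by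
  rw [toComplement, toComplement, Subtype.mk.injEq, Projectivization.mk_eq_mk_iff']

/-- A nonvanishing function is locally the exponential of a continuous function, with any prescribed
logarithm at the base point. -/
theorem exists_local_log {T : Type*} [TopologicalSpace T] {φ : T → ℂ} (t₀ : T) {U : Set T}
    (hU : IsOpen U) (ht : t₀ ∈ U) (hφ : ContinuousOn φ U) (ℓ : ℂ)
    (hℓ : Complex.exp ℓ = φ t₀) :
    ∃ V ⊆ U, IsOpen V ∧ t₀ ∈ V ∧ ∃ L : T → ℂ, ContinuousOn L V ∧ L t₀ = ℓ ∧
      ∀ t ∈ V, Complex.exp (L t) = φ t := by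
  have h0 : φ t₀ ≠ 0 := hℓ ▸ Complex.exp_ne_zero ℓ
  have hc : ContinuousOn (fun t ↦ φ t / φ t₀) U := hφ.div_const _
  refine ⟨U ∩ (fun t ↦ φ t / φ t₀) ⁻¹' Complex.slitPlane, Set.inter_subset_left,
    hc.isOpen_inter_preimage hU Complex.isOpen_slitPlane, ⟨ht, by simp [h0]⟩,
    fun t ↦ ℓ + Complex.log (φ t / φ t₀), ?_, by simp [h0], ?_⟩
  · exact continuousOn_const.add ((hc.mono Set.inter_subset_left).clog fun t h ↦ h.2)
  · rintro t ⟨-, h⟩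
    rw [Complex.exp_add, Complex.exp_log (Complex.slitPlane_ne_zero h), hℓ]
    field_simp

/-- A nonvanishing function has a continuous local `n`-th root with any prescribed value at the
base point. -/
theorem exists_local_root {T : Type*} [TopologicalSpace T] {φ : T → ℂ} (t₀ : T) {U : Set T}
    (hU : IsOpen U) (ht : t₀ ∈ U) (hφ : ContinuousOn φ U) {n : ℕ} (hn : n ≠ 0) {z : ℂ}
    (hz : z ^ n = φ t₀) (hz0 : z ≠ 0) :
    ∃ V ⊆ U, IsOpen V ∧ t₀ ∈ V ∧ ∃ ψ : T → ℂ, ContinuousOn ψ V ∧ ψ t₀ = z ∧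
      ∀ t ∈ V, ψ t ^ n = φ t ∧ ψ t ≠ 0 := by
  obtain ⟨V, hVU, hV, htV, L, hL, hL0, hLe⟩ := exists_local_log t₀ hU ht hφ (n * Complex.log z)
    (by rw [Complex.exp_nat_mul, Complex.exp_log hz0, hz])
  have hn' : (n : ℂ) ≠ 0 := by exact_mod_cast hn
  refine ⟨V, hVU, hV, htV, fun t ↦ Complex.exp (L t / n), (hL.div_const _).cexp, ?_, ?_⟩
  · simp only [hL0]
    rw [mul_div_cancel_left₀ _ hn', Complex.exp_log hz0]
  · intro t h
    refine ⟨?_, Complex.exp_ne_zero _⟩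
    rw [← Complex.exp_nat_mul, mul_div_cancel₀ _ hn', hLe t h]

/-! ### The six-fold covering by the Milnor fibre -/

/-- The Milnor fibre `{F = 1} ⊂ ℂ³`. -/
abbrev MilnorFiber (F : MvPolynomial (Fin 3) ℂ) : Type := {y : Fin 3 → ℂ // eval y F = 1}

/-- The projection of the Milnor fibre to `ℂP² ∖ V(F)`. -/
def milnorProj {F : MvPolynomial (Fin 3) ℂ} (hF : F.IsHomogeneous 6) (y : MilnorFiber F) :
    CurveComplement F :=
  toComplement hF ⟨y.1, by rw [y.2]; exact one_ne_zero⟩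

theorem continuous_milnorProj {F : MvPolynomial (Fin 3) ℂ} (hF : F.IsHomogeneous 6) :
    Continuous (milnorProj hF) :=
  (continuous_toComplement hF).comp (continuous_subtype_val.subtype_mk _)

theorem milnorProj_surjective {F : MvPolynomial (Fin 3) ℂ} (hF : F.IsHomogeneous 6) :
    Surjective (milnorProj hF) := by
  intro x
  obtain ⟨y, rfl⟩ := toComplement_surjective hF x
  obtain ⟨a, ha⟩ := IsAlgClosed.exists_pow_nat_eq (eval y.1 F)⁻¹ (n := 6) (by norm_num)
  refine ⟨⟨a • y.1, ?_⟩, ?_⟩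
  · rw [eval_smul_of_isHomogeneous hF, ha, inv_mul_cancel₀ y.2]
  · exact (toComplement_eq_iff hF _ _).mpr ⟨a, rfl⟩

theorem milnorProj_isQuotientMap {F : MvPolynomial (Fin 3) ℂ} (hF : F.IsHomogeneous 6) :
    Topology.IsQuotientMap (milnorProj hF) := by
  rw [Topology.isQuotientMap_iff, Topology.isCoinducing_iff]
  refine ⟨fun S ↦ ⟨fun hS ↦ ?_, fun h ↦ h.preimage (continuous_milnorProj hF)⟩,
    milnorProj_surjective hF⟩
  -- It suffices that the cone over `S` is open in `ℂ³ ∖ {0}`.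
  suffices h : IsOpen (Subtype.val '' S : Set CP2) by
    rw [← Set.preimage_image_eq S Subtype.val_injective]
    exact h.preimage continuous_subtype_val
  have hq : Topology.IsQuotientMap
      fun v : {v : Fin 3 → ℂ // v ≠ 0} ↦ (Projectivization.mk ℂ v.1 v.2 : CP2) :=
    isQuotientMap_quotient_mk' (s := projectivizationSetoid ℂ (Fin 3 → ℂ))
  rw [← hq.isOpen_preimage, isOpen_iff_mem_nhds]
  rintro v ⟨x, hx, hxv⟩
  have hv : eval v.1 F ≠ 0 := by
    obtain ⟨y, rfl⟩ := toComplement_surjective hF x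
    obtain ⟨a, ha⟩ := (Projectivization.mk_eq_mk_iff' ℂ _ _ _ _).mp hxv
    intro h
    apply y.2
    rw [← ha, eval_smul_of_isHomogeneous hF, h, mul_zero]
  have hxv' : x = toComplement hF ⟨v.1, hv⟩ := Subtype.ext hxv
  obtain ⟨z, hz⟩ := IsAlgClosed.exists_pow_nat_eq (eval v.1 F)⁻¹ (n := 6) (by norm_num)
  have hz0 : z ≠ 0 := by
    rintro rfl
    exact inv_ne_zero hv (by rw [← hz]; norm_num)
  have hcont : Continuous fun w : {v : Fin 3 → ℂ // v ≠ 0} ↦ eval w.1 F :=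
    (continuous_eval_point F).comp continuous_subtype_val
  -- Near `v`, a continuous sixth root of `1 / F` normalises vectors into the Milnor fibre.
  obtain ⟨V, hVU, hV, hvV, ψ, hψ, hψv, hψF⟩ := exists_local_root
    (φ := fun w : {v : Fin 3 → ℂ // v ≠ 0} ↦ (eval w.1 F)⁻¹) v
    (U := {w | eval w.1 F ≠ 0}) (isOpen_ne_fun hcont continuous_const) hv
    (hcont.continuousOn.inv₀ fun w hw ↦ hw) (n := 6) (by norm_num) hz hz0
  let σ : V → MilnorFiber F := fun w ↦ ⟨ψ w.1 • w.1.1, by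
    rw [eval_smul_of_isHomogeneous hF, (hψF w.1 w.2).1, inv_mul_cancel₀ (hVU w.2)]⟩
  have hσ : Continuous σ :=
    ((continuousOn_iff_continuous_domRestrict.mp hψ).smul
      (continuous_subtype_val.comp continuous_subtype_val)).subtype_mk _
  have hproj : ∀ w : V, milnorProj hF (σ w) = toComplement hF ⟨w.1.1, hVU w.2⟩ := fun w ↦
    (toComplement_eq_iff hF _ _).mpr ⟨ψ w.1, rfl⟩
  have hopen : IsOpen (Subtype.val '' (σ ⁻¹' (milnorProj hF ⁻¹' S))) :=
    hV.isOpenMap_subtype_val _ (hS.preimage hσ)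
  refine Filter.mem_of_superset (hopen.mem_nhds ⟨⟨v, hvV⟩, ?_, rfl⟩) ?_
  · change milnorProj hF (σ ⟨v, hvV⟩) ∈ S
    rw [hproj, ← hxv']
    exact hx
  · rintro _ ⟨w, hw, rfl⟩
    refine ⟨_, hw, ?_⟩
    rw [hproj]
    rfl

instance (F : MvPolynomial (Fin 3) ℂ) : LocallyCompactSpace (MilnorFiber F) :=
  (isClosed_eq (continuous_eval_point F) continuous_const).isClosedEmbedding_subtypeVal
    |>.locallyCompactSpace

/-- Sixth roots of unity act on the Milnor fibre by scaling. -/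
@[reducible] def milnorAction {F : MvPolynomial (Fin 3) ℂ} (hF : F.IsHomogeneous 6) :
    MulAction (rootsOfUnity 6 ℂ) (MilnorFiber F) where
  smul ζ y := ⟨((ζ : ℂˣ) : ℂ) • y.1, by
    have h : ((ζ : ℂˣ) : ℂ) ^ 6 = 1 := (mem_rootsOfUnity' 6 ζ.1).mp ζ.2
    rw [eval_smul_of_isHomogeneous hF, h, y.2, one_mul]⟩
  one_smul y := Subtype.ext (one_smul ℂ y.1)
  mul_smul ζ ξ y := Subtype.ext (mul_smul ((ζ : ℂˣ) : ℂ) ((ξ : ℂˣ) : ℂ) y.1)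

theorem isCoveringMap_milnorProj {F : MvPolynomial (Fin 3) ℂ} (hF : F.IsHomogeneous 6) :
    IsCoveringMap (milnorProj hF) := by
  let := milnorAction hF
  have hsmul (ζ : rootsOfUnity 6 ℂ) (y : MilnorFiber F) :
      (ζ • y).1 = ((ζ : ℂˣ) : ℂ) • y.1 := rfl
  have : ContinuousConstSMul (rootsOfUnity 6 ℂ) (MilnorFiber F) :=
    ⟨fun ζ ↦ (continuous_subtype_val.const_smul ((ζ : ℂˣ) : ℂ)).subtype_mk _⟩
  have : IsCancelSMul (rootsOfUnity 6 ℂ) (MilnorFiber F) := by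
    rw [isCancelSMul_iff_eq_one_of_smul_eq]
    intro ζ y h
    have hy : y.1 ≠ 0 := ne_zero_of_eval_ne_zero hF (by rw [y.2]; exact one_ne_zero)
    have h' : ((ζ : ℂˣ) : ℂ) • y.1 = (1 : ℂ) • y.1 := by
      rw [← hsmul, h, one_smul]
    exact Subtype.ext (Units.ext (smul_left_injective ℂ hy h'))
  refine ((milnorProj_isQuotientMap hF).isQuotientCoveringMap_of_properlyDiscontinuousSMul
    (G := rootsOfUnity 6 ℂ) ?_).isCoveringMap
  intro y z
  rw [milnorProj, milnorProj, toComplement_eq_iff]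
  constructor
  · rintro ⟨a, ha⟩
    have ha6 : a ^ 6 = 1 := by
      have := eval_smul_of_isHomogeneous hF a z.1
      rw [z.2, mul_one] at this
      rw [← this, ha, y.2]
    exact ⟨rootsOfUnity.mkOfPowEq a ha6, Subtype.ext ha⟩
  · rintro ⟨ζ, hζ⟩
    exact ⟨((ζ : ℂˣ) : ℂ), congrArg Subtype.val hζ⟩

/-! ### A three-fold covering of the affine curve `u³ + v² = 1` -/

/-- The affine elliptic curve `u³ + v² = 1`. -/
abbrev TorusCurve : Type := {w : ℂ × ℂ // w.1 ^ 3 + w.2 ^ 2 = 1}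

/-- The affine Fermat cubic `p³ + q³ = 2`. -/
abbrev FermatCurve : Type := {w : ℂ × ℂ // w.1 ^ 3 + w.2 ^ 3 = 2}

/-- The isogeny `(p, q) ↦ (pq, (q³ - p³) / 2)`, characterised by `p³ = 1 - v`, `q³ = 1 + v`,
`pq = u`. -/
def isogeny (w : FermatCurve) : TorusCurve :=
  ⟨(w.1.1 * w.1.2, (w.1.2 ^ 3 - w.1.1 ^ 3) / 2), by
    have h := w.2
    have : w.1.1 ^ 3 = 2 - w.1.2 ^ 3 := by linear_combination h
    simp only [mul_pow, this]
    ring⟩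

theorem continuous_isogeny : Continuous isogeny := by
  unfold isogeny
  fun_prop

theorem isogeny_cube_fst (w : FermatCurve) : w.1.1 ^ 3 = 1 - (isogeny w).1.2 := by
  have h := w.2
  simp only [isogeny]
  linear_combination h / 2

theorem isogeny_cube_snd (w : FermatCurve) : w.1.2 ^ 3 = 1 + (isogeny w).1.2 := by
  have h := w.2
  simp only [isogeny]
  linear_combination h / 2

theorem isogeny_surjective : Surjective isogeny := by
  rintro ⟨⟨u, v⟩, h⟩
  simp only at h
  by_cases hv : 1 - v = 0
  · have hv1 : v = 1 := by linear_combination -hv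
    subst hv1
    have hu : u = 0 := by
      have : u ^ 3 = 0 := by linear_combination h
      simpa using this
    subst hu
    obtain ⟨q, hq⟩ := IsAlgClosed.exists_pow_nat_eq (2 : ℂ) (n := 3) (by norm_num)
    refine ⟨⟨(0, q), by simp [hq]⟩, Subtype.ext (Prod.ext ?_ ?_)⟩ <;> simp [isogeny, hq]
  · obtain ⟨p, hp⟩ := IsAlgClosed.exists_pow_nat_eq (1 - v) (n := 3) (by norm_num)
    have hp0 : p ≠ 0 := by
      rintro rfl
      apply hv
      rw [← hp]
      simp
    have hq : (u / p) ^ 3 = 1 + v := by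
      rw [div_pow, hp]
      field_simp
      linear_combination h
    refine ⟨⟨(p, u / p), by simp only [hp, hq]; ring⟩, Subtype.ext (Prod.ext ?_ ?_)⟩
    · simp only [isogeny]
      field_simp
    · simp only [isogeny, hp, hq]
      ring

/-- The isogeny is proper because `p` and `q` are cube roots of `1 - v` and `1 + v`. -/
theorem isogeny_isQuotientMap : Topology.IsQuotientMap isogeny := by
  have hcube : IsProperMap fun z : ℂ ↦ z ^ 3 := by
    have := Polynomial.isProperMap_eval (Polynomial.X ^ 3 : Polynomial ℂ) (by simp)
    simpa using this
  have hclosed : IsClosed {w : ℂ × ℂ | w.1 ^ 3 + w.2 ^ 3 = 2} :=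
    isClosed_eq (by fun_prop) continuous_const
  have hcomp : IsProperMap
      ((fun w : TorusCurve ↦ (1 - w.1.2, 1 + w.1.2)) ∘ isogeny) := by
    have h := (hcube.prodMap hcube).comp hclosed.isClosedEmbedding_subtypeVal.isProperMap
    refine cast (congrArg IsProperMap (funext fun w : FermatCurve ↦ ?_)) h
    exact Prod.ext (isogeny_cube_fst w) (isogeny_cube_snd w)
  have hproper : IsProperMap isogeny :=
    isProperMap_of_comp_of_t2 continuous_isogeny (by fun_prop) hcomp
  exact hproper.isClosedMap.isQuotientMap continuous_isogeny isogeny_surjective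

instance : LocallyCompactSpace FermatCurve :=
  (isClosed_eq (f := fun w : ℂ × ℂ ↦ w.1 ^ 3 + w.2 ^ 3) (by fun_prop)
    continuous_const).isClosedEmbedding_subtypeVal.locallyCompactSpace

/-- Cube roots of unity act on the Fermat cubic by `ζ • (p, q) = (ζ p, ζ⁻¹ q)`. -/
instance : MulAction (rootsOfUnity 3 ℂ) FermatCurve where
  smul ζ w := ⟨(((ζ : ℂˣ) : ℂ) * w.1.1, ((ζ : ℂˣ) : ℂ)⁻¹ * w.1.2), by
    have h : ((ζ : ℂˣ) : ℂ) ^ 3 = 1 := (mem_rootsOfUnity' 3 ζ.1).mp ζ.2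
    simpa [mul_pow, h] using w.2⟩
  one_smul w := Subtype.ext (Prod.ext (by simp [HSMul.hSMul]) (by simp [HSMul.hSMul]))
  mul_smul ζ ξ w := Subtype.ext (Prod.ext
    (by simp [HSMul.hSMul, mul_assoc])
    (by simp [HSMul.hSMul]; ring))

theorem isCoveringMap_isogeny : IsCoveringMap isogeny := by
  have hsmul (ζ : rootsOfUnity 3 ℂ) (w : FermatCurve) :
      (ζ • w).1 = (((ζ : ℂˣ) : ℂ) * w.1.1, ((ζ : ℂˣ) : ℂ)⁻¹ * w.1.2) := rfl
  have : ContinuousConstSMul (rootsOfUnity 3 ℂ) FermatCurve :=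
    ⟨fun ζ ↦ Continuous.subtype_mk (f := fun w : FermatCurve ↦
      (((ζ : ℂˣ) : ℂ) * w.1.1, ((ζ : ℂˣ) : ℂ)⁻¹ * w.1.2)) (by fun_prop) _⟩
  have : IsCancelSMul (rootsOfUnity 3 ℂ) FermatCurve := by
    rw [isCancelSMul_iff_eq_one_of_smul_eq]
    intro ζ w h
    have h1 := congrArg (fun w : FermatCurve ↦ w.1) h
    simp only [hsmul] at h1
    obtain ⟨h2, h3⟩ := Prod.ext_iff.mp h1
    simp only at h2 h3
    refine Subtype.ext (Units.ext ?_)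
    change ((ζ : ℂˣ) : ℂ) = 1
    have hζ : ((ζ : ℂˣ) : ℂ) ≠ 0 := Units.ne_zero _
    by_cases hp : w.1.1 = 0
    · have hq : w.1.2 ≠ 0 := by
        intro hq
        simpa [hp, hq] using w.2
      exact inv_eq_one.mp (mul_right_cancel₀ hq (h3.trans (one_mul _).symm))
    · exact mul_right_cancel₀ hp (h2.trans (one_mul _).symm)
  refine (isogeny_isQuotientMap.isQuotientCoveringMap_of_properlyDiscontinuousSMul
    (G := rootsOfUnity 3 ℂ) ?_).isCoveringMap
  intro w z
  constructor
  · intro h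
    have hp : w.1.1 ^ 3 = z.1.1 ^ 3 := by rw [isogeny_cube_fst, isogeny_cube_fst, h]
    have hq : w.1.2 ^ 3 = z.1.2 ^ 3 := by rw [isogeny_cube_snd, isogeny_cube_snd, h]
    have hpq : w.1.1 * w.1.2 = z.1.1 * z.1.2 := congrArg (fun w : TorusCurve ↦ w.1.1) h
    by_cases hz : z.1.1 = 0
    · have hw : w.1.1 = 0 := by simpa [hz] using hp
      have hw2 : w.1.2 ≠ 0 := by
        intro hq
        simpa [hw, hq] using w.2
      have h1 : (z.1.2 / w.1.2) ^ 3 = 1 := by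
        rw [div_pow, ← hq, div_self (pow_ne_zero _ hw2)]
      have hz2 : z.1.2 ≠ 0 := by
        intro hq
        simpa [hz, hq] using z.2
      refine ⟨rootsOfUnity.mkOfPowEq _ h1, Subtype.ext (Prod.ext ?_ ?_)⟩
      · simp [hsmul, hz, hw]
      · simp only [hsmul, rootsOfUnity.val_mkOfPowEq_coe]
        field_simp
    · have h1 : (w.1.1 / z.1.1) ^ 3 = 1 := by
        rw [div_pow, hp, div_self (pow_ne_zero _ hz)]
      have hw : w.1.1 ≠ 0 := by
        intro hw
        simp [hw] at h1
      refine ⟨rootsOfUnity.mkOfPowEq _ h1, Subtype.ext (Prod.ext ?_ ?_)⟩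
      · simp only [hsmul, rootsOfUnity.val_mkOfPowEq_coe]
        field_simp
      · simp only [hsmul, rootsOfUnity.val_mkOfPowEq_coe]
        field_simp
        linear_combination -hpq
  · rintro ⟨ζ, rfl⟩
    have h : ((ζ : ℂˣ) : ℂ) ^ 3 = 1 := (mem_rootsOfUnity' 3 ζ.1).mp ζ.2
    have hζ : ((ζ : ℂˣ) : ℂ) ≠ 0 := Units.ne_zero _
    refine Subtype.ext (Prod.ext ?_ ?_)
    · simp only [isogeny, hsmul]
      field_simp
    · simp only [isogeny, hsmul, mul_pow, inv_pow, h]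
      simp

/-- The function `p + q` has no zeros on the Fermat cubic. -/
def fermatUnit (w : FermatCurve) : {z : ℂ // z ≠ 0} :=
  ⟨w.1.1 + w.1.2, by
    intro h
    have h2 := w.2
    have : w.1.1 ^ 3 + w.1.2 ^ 3 = 0 := by
      linear_combination (w.1.1 ^ 2 - w.1.1 * w.1.2 + w.1.2 ^ 2) * h
    rw [h2] at this
    norm_num at this⟩

theorem continuous_fermatUnit : Continuous fermatUnit := by
  unfold fermatUnit
  fun_prop

/-! ### The local model of the curve at a general point -/

/-- By irreducibility and the Nullstellensatz, `f₂` does not vanish identically on `V(F)`. -/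
theorem exists_point_on_curve {F f2 f3 : MvPolynomial (Fin 3) ℂ} (hhom : F.IsHomogeneous 6)
    (hirr : Irreducible F) (h2 : f2.IsHomogeneous 2) (hF : F = f2 ^ 3 + f3 ^ 2) :
    ∃ c : Fin 3 → ℂ, eval c F = 0 ∧ eval c f2 ≠ 0 := by
  by_contra! hcon
  have hmem : f2 ∈ (Ideal.span {F}).radical := by
    rw [← MvPolynomial.vanishingIdeal_zeroLocus_eq_radical (K := ℂ),
      MvPolynomial.mem_vanishingIdeal_iff]
    intro c hc
    exact hcon c (hc F (Ideal.mem_span_singleton_self F))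
  obtain ⟨n, hn⟩ := hmem
  have hdvd : F ∣ f2 := hirr.prime.dvd_of_dvd_pow (Ideal.mem_span_singleton.mp hn)
  have h20 : f2 = 0 := by
    by_contra h20
    obtain ⟨g, hg⟩ := hdvd
    have hg0 : g ≠ 0 := by
      rintro rfl
      exact h20 (by simpa using hg)
    have hd := congrArg totalDegree hg
    rw [totalDegree_mul_of_isDomain hirr.ne_zero hg0, h2.totalDegree h20,
      hhom.totalDegree hirr.ne_zero] at hd
    omega
  apply hirr.not_isSquare
  exact ⟨f3, by rw [hF, h20]; ring⟩

/-- The restriction of `F` to the parametrised line `t ↦ c + t w`. -/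
def lineRestriction (F : MvPolynomial (Fin 3) ℂ) (c w : Fin 3 → ℂ) : Polynomial ℂ :=
  aeval (fun i ↦ Polynomial.C (c i) + Polynomial.X * Polynomial.C (w i)) F

theorem eval_lineRestriction (F : MvPolynomial (Fin 3) ℂ) (c w : Fin 3 → ℂ) (t : ℂ) :
    (lineRestriction F c w).eval t = eval (c + t • w) F := by
  rw [lineRestriction, ← Polynomial.coe_evalRingHom, MvPolynomial.aeval_def,
    MvPolynomial.hom_eval₂, MvPolynomial.eval, MvPolynomial.coe_eval₂Hom]
  congr 1
  · ext
    simp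
  · funext i
    simp only [Polynomial.coe_evalRingHom, Polynomial.eval_add,
      Polynomial.eval_C, Polynomial.eval_mul, Polynomial.eval_X, Pi.add_apply, Pi.smul_apply,
      smul_eq_mul]

/-- A disc in a line through a point of `V(F)` with `f₂ ≠ 0`, parametrised by a sixth root `σ` of the
coordinate: vectors `A(σ)` with `F(A(σ)) = σ^(6k)`, and continuous solutions `P, Q` of
`PQ = f₂(A)`, `P³ = σ^(3k) - f₃(A)`, `Q³ = σ^(3k) + f₃(A)` for which `P + Q` has a continuous
logarithm. -/
theorem exists_local_model {F f2 f3 : MvPolynomial (Fin 3) ℂ} (hhom : F.IsHomogeneous 6)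
    (hirr : Irreducible F) (h2 : f2.IsHomogeneous 2)
    (hF : F = f2 ^ 3 + f3 ^ 2) (b : Fin 3 → ℂ) (hb : eval b F ≠ 0) :
    ∃ (k : ℕ) (V : Set ℂ) (A : ℂ → Fin 3 → ℂ) (P Q L : ℂ → ℂ), k ≠ 0 ∧ IsOpen V ∧ 0 ∈ V ∧
      ContinuousOn A V ∧ ContinuousOn P V ∧ ContinuousOn Q V ∧ ContinuousOn L V ∧
      ∀ σ ∈ V, eval (A σ) F = σ ^ (6 * k) ∧ P σ * Q σ = eval (A σ) f2 ∧
        P σ ^ 3 = σ ^ (3 * k) - eval (A σ) f3 ∧ Q σ ^ 3 = σ ^ (3 * k) + eval (A σ) f3 ∧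
        Complex.exp (L σ) = P σ + Q σ := by
  obtain ⟨c, hc, hc2⟩ := exists_point_on_curve hhom hirr h2 hF
  set w := b - c with hw
  have hφ0 : (lineRestriction F c w).eval 0 = 0 := by simp [eval_lineRestriction, hc]
  have hφ1 : (lineRestriction F c w).eval 1 ≠ 0 := by simpa [eval_lineRestriction, hw] using hb
  have hφ : lineRestriction F c w ≠ 0 := by
    rintro h
    simp [h] at hφ1
  obtain ⟨h, hh, hndvd⟩ :=
    (lineRestriction F c w).exists_eq_pow_rootMultiplicity_mul_and_not_dvd hφ 0
  set k := (lineRestriction F c w).rootMultiplicity 0 with hk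
  have hk0 : k ≠ 0 := ((Polynomial.rootMultiplicity_pos hφ).mpr hφ0).ne'
  have hh0 : h.eval 0 ≠ 0 := by rwa [Polynomial.dvd_iff_isRoot] at hndvd
  have hFline (t : ℂ) : eval (c + t • w) F = t ^ k * h.eval t := by
    rw [← eval_lineRestriction, hh]
    simp
  -- The normalising factor `g` is a sixth root of `1 / h(σ⁶)`.
  obtain ⟨a, ha⟩ := IsAlgClosed.exists_pow_nat_eq (h.eval 0)⁻¹ (n := 6) (by norm_num)
  have ha0 : a ≠ 0 := by
    rintro rfl
    exact inv_ne_zero hh0 (by rw [← ha]; norm_num)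
  have hhc : Continuous fun σ : ℂ ↦ h.eval (σ ^ 6) := by fun_prop
  obtain ⟨V₁, hV₁U, hV₁, h0V₁, g, hg, hg0, hgh⟩ := exists_local_root
    (φ := fun σ : ℂ ↦ (h.eval (σ ^ 6))⁻¹) 0 (U := {σ | h.eval (σ ^ 6) ≠ 0})
    (isOpen_ne_fun hhc continuous_const) (by simpa using hh0)
    (hhc.continuousOn.inv₀ fun σ hσ ↦ hσ) (n := 6) (by norm_num) (z := a) (by simpa using ha) ha0
  set A : ℂ → Fin 3 → ℂ := fun σ ↦ g σ • (c + σ ^ 6 • w) with hA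
  have hAc : ContinuousOn A V₁ := hg.smul (by fun_prop)
  have hAF : ∀ σ ∈ V₁, eval (A σ) F = σ ^ (6 * k) := by
    intro σ hσ
    have hne : h.eval (σ ^ 6) ≠ 0 := hV₁U hσ
    rw [hA, eval_smul_of_isHomogeneous hhom, (hgh σ hσ).1, hFline, pow_mul]
    field_simp
  have hF' (y : Fin 3 → ℂ) : eval y F = eval y f2 ^ 3 + eval y f3 ^ 2 := by simp [hF]
  have hA0 : A 0 = a • c := by simp [hA, hg0]
  have hA2 : eval (A 0) f2 ≠ 0 := by
    rw [hA0, eval_smul_of_isHomogeneous h2]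
    exact mul_ne_zero (pow_ne_zero _ ha0) hc2
  have hA3 : eval (A 0) f3 ≠ 0 := by
    intro h0
    have h1 := hF' (A 0)
    rw [hAF 0 h0V₁, h0, zero_pow (by omega)] at h1
    exact hA2 (pow_eq_zero_iff (n := 3) (by norm_num) |>.mp (by linear_combination -h1))
  -- Of the three cube roots of `-f₃(A(0))`, one with `P + Q ≠ 0` is needed.
  obtain ⟨z, hz, hz2⟩ : ∃ z : ℂ, z ^ 3 = -eval (A 0) f3 ∧ z ^ 2 + eval (A 0) f2 ≠ 0 := by
    obtain ⟨z, hz⟩ := IsAlgClosed.exists_pow_nat_eq (-eval (A 0) f3) (n := 3) (by norm_num)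
    by_cases hz2 : z ^ 2 + eval (A 0) f2 = 0
    · have hω := Complex.isPrimitiveRoot_exp 3 (by norm_num)
      set ω := Complex.exp (2 * Real.pi * Complex.I / (3 : ℕ))
      refine ⟨ω * z, by rw [mul_pow, hω.pow_eq_one, one_mul, hz], fun h1 ↦ ?_⟩
      have hz0 : z ≠ 0 := by
        rintro rfl
        exact hA2 (by simpa using hz2)
      have h3 : (ω ^ 2 - 1) * z ^ 2 = 0 := by linear_combination h1 - hz2
      rcases mul_eq_zero.mp h3 with h4 | h4
      · exact hω.pow_ne_one_of_pos_of_lt (by norm_num) (by norm_num) (sub_eq_zero.mp h4)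
      · exact hz0 (by simpa using h4)
    · exact ⟨z, hz, hz2⟩
  have hz0 : z ≠ 0 := by
    rintro rfl
    exact hA3 (by simpa using hz)
  obtain ⟨V₂, hV₂₁, hV₂, h0V₂, P, hP, hP0, hPA⟩ := exists_local_root
    (φ := fun σ : ℂ ↦ σ ^ (3 * k) - eval (A σ) f3) 0 hV₁ h0V₁
    ((continuousOn_id.pow _).sub ((continuous_eval_point f3).comp_continuousOn hAc))
    (n := 3) (by norm_num) (z := z) (by simp [hz, hk0]) hz0
  set Q : ℂ → ℂ := fun σ ↦ eval (A σ) f2 / P σ with hQ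
  have hQc : ContinuousOn Q V₂ :=
    ((continuous_eval_point f2).comp_continuousOn (hAc.mono hV₂₁)).div hP fun σ hσ ↦ (hPA σ hσ).2
  have hsum : P 0 + Q 0 ≠ 0 := by
    intro h0
    apply hz2
    simp only [hQ, hP0] at h0
    field_simp at h0
    simpa using h0
  obtain ⟨V, hV₃₂, hV, h0V, L, hL, -, hLe⟩ := exists_local_log (φ := fun σ ↦ P σ + Q σ) 0 hV₂ h0V₂
    (hP.add hQc) (Complex.log (P 0 + Q 0)) (Complex.exp_log hsum)
  refine ⟨k, V, A, P, Q, L, hk0, hV, h0V, hAc.mono (hV₃₂.trans hV₂₁), hP.mono hV₃₂,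
    hQc.mono hV₃₂, hL, fun σ hσ ↦ ?_⟩
  have hPσ := hPA σ (hV₃₂ hσ)
  have hFσ := hAF σ (hV₂₁ (hV₃₂ hσ))
  refine ⟨hFσ, mul_div_cancel₀ _ hPσ.2, hPσ.1, ?_, hLe σ hσ⟩
  have hne : σ ^ (3 * k) - eval (A σ) f3 ≠ 0 := hPσ.1 ▸ pow_ne_zero _ hPσ.2
  rw [hF', show 6 * k = 3 * k * 2 by ring, pow_mul] at hFσ
  simp only [hQ]
  rw [div_pow, hPσ.1, div_eq_iff hne]
  linear_combination hFσ

/-! ### Path connectedness of the complement -/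

/-- Two points off the curve are joined within the line through them, which meets the curve in
finitely many points. -/
theorem joined_toComplement {F : MvPolynomial (Fin 3) ℂ} (hF : F.IsHomogeneous 6)
    (v w : {y : Fin 3 → ℂ // eval y F ≠ 0}) : Joined (toComplement hF v) (toComplement hF w) := by
  set φ := lineRestriction F v.1 (w.1 - v.1) with hφ
  have hφ0 : φ.eval 0 ≠ 0 := by simpa [hφ, eval_lineRestriction] using v.2
  have hφ1 : φ.eval 1 ≠ 0 := by simpa [hφ, eval_lineRestriction] using w.2
  have hne : φ ≠ 0 := by
    rintro h
    simp [h] at hφ1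
  have hfin : {s : ℂ | φ.IsRoot s}.Finite := Polynomial.finite_setOfPred_isRoot hne
  have hconn : IsPathConnected {s : ℂ | φ.IsRoot s}ᶜ :=
    hfin.countable.isPathConnected_compl_of_one_lt_rank (by
      rw [Complex.rank_real_complex]
      exact_mod_cast one_lt_two)
  obtain ⟨γ, hγ⟩ := hconn.joinedIn 0 hφ0 1 hφ1
  have hγF (t : unitInterval) : eval (v.1 + γ t • (w.1 - v.1)) F ≠ 0 := by
    rw [← eval_lineRestriction]
    exact hγ t
  refine ⟨⟨⟨fun t ↦ toComplement hF ⟨v.1 + γ t • (w.1 - v.1), hγF t⟩,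
    (continuous_toComplement hF).comp (Continuous.subtype_mk (by fun_prop) _)⟩, ?_, ?_⟩⟩
  · simp
  · simp

/-! ### Lifting homotopies to the logarithm of `p + q` -/

/-- The map `(f₂, f₃)` from the Milnor fibre to the affine curve `u³ + v² = 1`. -/
def torusCurveMap {F f2 f3 : MvPolynomial (Fin 3) ℂ} (hF : F = f2 ^ 3 + f3 ^ 2) (y : MilnorFiber F) :
    TorusCurve :=
  ⟨(eval y.1 f2, eval y.1 f3), by
    have h := (congrArg (MvPolynomial.eval y.1) hF).symm.trans y.2
    simpa using h⟩

theorem continuous_torusCurveMap {F f2 f3 : MvPolynomial (Fin 3) ℂ} (hF : F = f2 ^ 3 + f3 ^ 2) :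
    Continuous (torusCurveMap hF) :=
  Continuous.subtype_mk (((continuous_eval_point f2).comp continuous_subtype_val).prodMk
    ((continuous_eval_point f3).comp continuous_subtype_val)) _

/-- Consider triples of a path `γ` in the Milnor fibre, a lift `η` of its image in `u³ + v² = 1` to
the Fermat cubic, and a logarithm `ℓ` of `p + q` along `η`. If two such triples start at the same point and the
paths `γ` are homotopic after projection to the complement of the curve, then the logarithms
end at the same value. -/
theorem log_endpoint_eq {F f2 f3 : MvPolynomial (Fin 3) ℂ} (hhom : F.IsHomogeneous 6)
    (hF : F = f2 ^ 3 + f3 ^ 2) {γ₀ γ₁ : C(unitInterval, MilnorFiber F)}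
    {η₀ η₁ : C(unitInterval, FermatCurve)} {ℓ₀ ℓ₁ : C(unitInterval, ℂ)}
    (hη₀ : ∀ t, isogeny (η₀ t) = torusCurveMap hF (γ₀ t))
    (hη₁ : ∀ t, isogeny (η₁ t) = torusCurveMap hF (γ₁ t))
    (hℓ₀ : ∀ t, Complex.exp (ℓ₀ t) = (fermatUnit (η₀ t)).1)
    (hℓ₁ : ∀ t, Complex.exp (ℓ₁ t) = (fermatUnit (η₁ t)).1)
    (hγ : γ₀ 0 = γ₁ 0) (hη : η₀ 0 = η₁ 0) (hℓ : ℓ₀ 0 = ℓ₁ 0)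
    (h : (ContinuousMap.comp ⟨milnorProj hhom, continuous_milnorProj hhom⟩ γ₀).HomotopicRel
      (.comp ⟨milnorProj hhom, continuous_milnorProj hhom⟩ γ₁) {0, 1}) :
    ℓ₀ 1 = ℓ₁ 1 := by
  have h1 : γ₀.HomotopicRel γ₁ {0, 1} :=
    ((isCoveringMap_milnorProj hhom).homotopicRel_iff_comp ⟨0, .inl rfl, hγ⟩).mpr h
  have h2 := h1.comp_continuousMap ⟨torusCurveMap hF, continuous_torusCurveMap hF⟩
  have e₀ : ContinuousMap.comp ⟨torusCurveMap hF, continuous_torusCurveMap hF⟩ γ₀ =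
      .comp ⟨isogeny, continuous_isogeny⟩ η₀ := ContinuousMap.ext fun t ↦ (hη₀ t).symm
  have e₁ : ContinuousMap.comp ⟨torusCurveMap hF, continuous_torusCurveMap hF⟩ γ₁ =
      .comp ⟨isogeny, continuous_isogeny⟩ η₁ := ContinuousMap.ext fun t ↦ (hη₁ t).symm
  rw [e₀, e₁] at h2
  have h3 : η₀.HomotopicRel η₁ {0, 1} :=
    (isCoveringMap_isogeny.homotopicRel_iff_comp ⟨0, .inl rfl, hη⟩).mpr h2
  have h4 := h3.comp_continuousMap ⟨fermatUnit, continuous_fermatUnit⟩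
  have e₂ : ContinuousMap.comp ⟨fermatUnit, continuous_fermatUnit⟩ η₀ =
      .comp ⟨_, Complex.isCoveringMap_exp.continuous⟩ ℓ₀ :=
    ContinuousMap.ext fun t ↦ Subtype.ext (hℓ₀ t).symm
  have e₃ : ContinuousMap.comp ⟨fermatUnit, continuous_fermatUnit⟩ η₁ =
      .comp ⟨_, Complex.isCoveringMap_exp.continuous⟩ ℓ₁ :=
    ContinuousMap.ext fun t ↦ Subtype.ext (hℓ₁ t).symm
  rw [e₂, e₃] at h4
  obtain ⟨H⟩ : ℓ₀.HomotopicRel ℓ₁ {0, 1} :=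
    (Complex.isCoveringMap_exp.homotopicRel_iff_comp ⟨0, .inl rfl, hℓ⟩).mpr h4
  exact (H.eq_fst 1 (x := 1) (by simp)).symm.trans (H.eq_snd 1 (x := 1) (by simp))

/-! ### Infinitely many loops around the curve -/

theorem infinite_fundamentalGroup_of_loops {X : Type*} [TopologicalSpace X] {x : X}
    (δ : ℕ → Path x x) (hδ : ∀ n m, (δ n).Homotopic (δ m) → n = m) :
    Infinite (FundamentalGroup X x) :=
  Infinite.of_injective (fun n ↦ FundamentalGroup.fromPath (Path.Homotopic.Quotient.mk (δ n)))
    fun n m h ↦ hδ n m (Path.Homotopic.Quotient.exact h)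

/-- The loops winding `n` times around a small circle in the parameter `σ` of the local model are
pairwise non-homotopic, because the logarithm of `p + q` changes by `-2πikn` along them. -/
theorem exists_infinite_fundamentalGroup {F f2 f3 : MvPolynomial (Fin 3) ℂ}
    (hhom : F.IsHomogeneous 6) (hirr : Irreducible F) (h2 : f2.IsHomogeneous 2)
    (h3 : f3.IsHomogeneous 3) (hF : F = f2 ^ 3 + f3 ^ 2) (b : Fin 3 → ℂ) (hb : eval b F ≠ 0) :
    ∃ x : CurveComplement F, Infinite (FundamentalGroup (CurveComplement F) x) := by
  obtain ⟨k, V, A, P, Q, L, hk, hV, h0V, hA, hP, hQ, hL, hmodel⟩ :=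
    exists_local_model hhom hirr h2 hF b hb
  obtain ⟨ρ, hρ, hρV⟩ := Metric.isOpen_iff.mp hV 0 h0V
  -- The circle of radius `ρ / 2` is traversed `n` times by `σ = exp (z n t)`.
  let z (n : ℕ) (t : unitInterval) : ℂ := Real.log (ρ / 2) + n * (2 * Real.pi * Complex.I) * (t : ℝ)
  have hz (n : ℕ) : Continuous (z n) := by fun_prop
  have hz0 (n : ℕ) : z n 0 = Real.log (ρ / 2) := by simp [z]
  have hz1 (n : ℕ) : z n 1 = Real.log (ρ / 2) + n * (2 * Real.pi * Complex.I) := by simp [z]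
  have hzV (n : ℕ) (t : unitInterval) : Complex.exp (z n t) ∈ V := by
    apply hρV
    have hre : (z n t).re = Real.log (ρ / 2) := by simp [z]
    rw [mem_ball_zero_iff, Complex.norm_exp, hre, Real.exp_log (by positivity)]
    linarith
  have hexp1 (n : ℕ) : Complex.exp (z n 1) = Complex.exp (z n 0) := by
    rw [hz1, hz0, Complex.exp_add, Complex.exp_nat_mul_two_pi_mul_I, mul_one]
  have hcomp {Y : Type} [TopologicalSpace Y] {B : ℂ → Y} (hB : ContinuousOn B V) (n : ℕ) :
      Continuous fun t ↦ B (Complex.exp (z n t)) :=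
    hB.comp_continuous (Complex.continuous_exp.comp (hz n)) (hzV n)
  have hs (n : ℕ) : Continuous fun t ↦ (Complex.exp (z n t) ^ k)⁻¹ :=
    ((Complex.continuous_exp.comp (hz n)).pow k).inv₀ fun t ↦ pow_ne_zero _ (Complex.exp_ne_zero _)
  have hne (n : ℕ) (t : unitInterval) : Complex.exp (z n t) ≠ 0 := Complex.exp_ne_zero _
  have hγF (n : ℕ) (t : unitInterval) :
      eval ((Complex.exp (z n t) ^ k)⁻¹ • A (Complex.exp (z n t))) F = 1 := by
    rw [eval_smul_of_isHomogeneous hhom, (hmodel _ (hzV n t)).1, inv_pow, ← pow_mul, mul_comm k 6]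
    exact inv_mul_cancel₀ (pow_ne_zero _ (hne n t))
  let γ (n : ℕ) : C(unitInterval, MilnorFiber F) :=
    ⟨fun t ↦ ⟨(Complex.exp (z n t) ^ k)⁻¹ • A (Complex.exp (z n t)), hγF n t⟩,
      ((hs n).smul (hcomp hA n)).subtype_mk _⟩
  have hηE (n : ℕ) (t : unitInterval) :
      ((Complex.exp (z n t) ^ k)⁻¹ * P (Complex.exp (z n t))) ^ 3 +
        ((Complex.exp (z n t) ^ k)⁻¹ * Q (Complex.exp (z n t))) ^ 3 = 2 := by
    obtain ⟨-, -, hP3, hQ3, -⟩ := hmodel _ (hzV n t)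
    have := pow_ne_zero k (hne n t)
    rw [mul_pow, mul_pow, hP3, hQ3, mul_comm 3 k, pow_mul]
    field_simp
    ring
  let η (n : ℕ) : C(unitInterval, FermatCurve) :=
    ⟨fun t ↦ ⟨((Complex.exp (z n t) ^ k)⁻¹ * P (Complex.exp (z n t)),
      (Complex.exp (z n t) ^ k)⁻¹ * Q (Complex.exp (z n t))), hηE n t⟩,
      (((hs n).mul (hcomp hP n)).prodMk ((hs n).mul (hcomp hQ n))).subtype_mk _⟩
  let ℓ (n : ℕ) : C(unitInterval, ℂ) :=
    ⟨fun t ↦ -(k * z n t) + L (Complex.exp (z n t)),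
      ((continuous_const.mul (hz n)).neg).add (hcomp hL n)⟩
  have hη (n : ℕ) (t : unitInterval) : isogeny (η n t) = torusCurveMap hF (γ n t) := by
    obtain ⟨-, hPQ, hP3, hQ3, -⟩ := hmodel _ (hzV n t)
    have := pow_ne_zero k (hne n t)
    refine Subtype.ext (Prod.ext ?_ ?_)
    · change (Complex.exp (z n t) ^ k)⁻¹ * P (Complex.exp (z n t)) *
        ((Complex.exp (z n t) ^ k)⁻¹ * Q (Complex.exp (z n t))) =
          eval ((Complex.exp (z n t) ^ k)⁻¹ • A (Complex.exp (z n t))) f2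
      rw [eval_smul_of_isHomogeneous h2, ← hPQ]
      ring
    · change (((Complex.exp (z n t) ^ k)⁻¹ * Q (Complex.exp (z n t))) ^ 3 -
        ((Complex.exp (z n t) ^ k)⁻¹ * P (Complex.exp (z n t))) ^ 3) / 2 =
          eval ((Complex.exp (z n t) ^ k)⁻¹ • A (Complex.exp (z n t))) f3
      rw [eval_smul_of_isHomogeneous h3, mul_pow, mul_pow, hP3, hQ3]
      ring
  have hℓ (n : ℕ) (t : unitInterval) : Complex.exp (ℓ n t) = (fermatUnit (η n t)).1 := by
    obtain ⟨-, -, -, -, hPQ⟩ := hmodel _ (hzV n t)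
    change Complex.exp (-(k * z n t) + L (Complex.exp (z n t))) =
      (Complex.exp (z n t) ^ k)⁻¹ * P (Complex.exp (z n t)) +
        (Complex.exp (z n t) ^ k)⁻¹ * Q (Complex.exp (z n t))
    rw [Complex.exp_add, hPQ, Complex.exp_neg, Complex.exp_nat_mul]
    ring
  have hγ0 (n : ℕ) : γ n 0 = γ 0 0 := Subtype.ext (by simp only [γ, ContinuousMap.coe_mk, hz0])
  have hγ1 (n : ℕ) : γ n 1 = γ n 0 := Subtype.ext (by simp only [γ, ContinuousMap.coe_mk, hexp1])
  have hη0 (n : ℕ) : η n 0 = η 0 0 := Subtype.ext (by simp only [η, ContinuousMap.coe_mk, hz0])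
  have hℓ0 (n : ℕ) : ℓ n 0 = ℓ 0 0 := by simp only [ℓ, ContinuousMap.coe_mk, hz0]
  let δ (n : ℕ) : Path (milnorProj hhom (γ 0 0)) (milnorProj hhom (γ 0 0)) :=
    { toContinuousMap := .comp ⟨milnorProj hhom, continuous_milnorProj hhom⟩ (γ n)
      source' := congrArg (milnorProj hhom) (hγ0 n)
      target' := congrArg (milnorProj hhom) ((hγ1 n).trans (hγ0 n)) }
  refine ⟨milnorProj hhom (γ 0 0), infinite_fundamentalGroup_of_loops δ fun n m hnm ↦ ?_⟩
  have hend : ℓ n 1 = ℓ m 1 := log_endpoint_eq hhom hF (hη n) (hη m) (hℓ n) (hℓ m)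
    ((hγ0 n).trans (hγ0 m).symm) ((hη0 n).trans (hη0 m).symm) ((hℓ0 n).trans (hℓ0 m).symm) hnm
  simp only [ℓ, ContinuousMap.coe_mk, hexp1, hz0] at hend
  rw [hz1, hz1] at hend
  have hkC : (k : ℂ) ≠ 0 := Nat.cast_ne_zero.mpr hk
  have hprod : (k : ℂ) * (2 * Real.pi * Complex.I) * ((n : ℂ) - m) = 0 := by
    linear_combination -hend
  have hnm0 := (mul_eq_zero.mp hprod).resolve_left (mul_ne_zero hkC Complex.two_pi_I_ne_zero)
  exact_mod_cast sub_eq_zero.mp hnm0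

/-- The fundamental group of an irreducible plane sextic of torus type is infinite. -/
theorem stmt5 (F : MvPolynomial (Fin 3) ℂ) (hhom : F.IsHomogeneous 6)
    (hirr : Irreducible F) (htorus : IsTorusType F) (p : CurveComplement F) :
    Infinite (FundamentalGroup (CurveComplement F) p) := by
  obtain ⟨f2, f3, h2, h3, hF⟩ := htorus
  obtain ⟨x, hx⟩ := exists_infinite_fundamentalGroup hhom hirr h2 h3 hF p.1.rep p.2
  obtain ⟨v, rfl⟩ := toComplement_surjective hhom x
  obtain ⟨w, rfl⟩ := toComplement_surjective hhom p
  obtain ⟨γ⟩ := joined_toComplement hhom v w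
  exact (FundamentalGroup.fundamentalGroupMulEquivOfPath γ).toEquiv.infinite_iff.mp hx
end
end
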